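/- arXiv:1605.00818 — 6 statements merged into one kernel-verified Lean document; each statement's English description precedes it below -/
import Mathlib

section
/- The Cayley graph Cay(Z_17 × Z_35, {1, −1} × (Z_35 \ {0})) can be decomposed into 28 C_17-factors and 6 C_35-factors. -/
open SimpleGraph

/-- `F` is a `C_k`-factor of `H`: a spanning subgraph of `H` that is 2-regular
and each of whose connected components has exactly `k` vertices. -/
def IsCycleFactor {V : Type*} (H F : SimpleGraph V) (k : ℕ) : Prop :=
  F ≤ H ∧ (∀ v, (F.neighborSet v).ncard = 2) ∧
    ∀ v : V, {w | F.Reachable v w}.ncard = k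

/-- The family of graphs `F` partitions the edge set of `H`. -/
def IsDecomp {V ι : Type*} (H : SimpleGraph V) (F : ι → SimpleGraph V) : Prop :=
  (Pairwise fun i j => Disjoint (F i).edgeSet (F j).edgeSet) ∧
  ∀ e, e ∈ H.edgeSet ↔ ∃ i, e ∈ (F i).edgeSet

/-- `HW H m n α β`: the edge set of `H` can be partitioned into
`α` `C_m`-factors and `β` `C_n`-factors. -/
def HW {V : Type*} (H : SimpleGraph V) (m n α β : ℕ) : Prop :=
  ∃ F : Fin α ⊕ Fin β → SimpleGraph V,
    (∀ i, IsCycleFactor H (F (Sum.inl i)) m) ∧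
    (∀ j, IsCycleFactor H (F (Sum.inr j)) n) ∧
    IsDecomp H F

/-- `(α, β) ∈ HWP(v; m, n)` for odd `v`: `K_v` has a 2-factorization into
`α` `C_m`-factors and `β` `C_n`-factors. -/
def HWPodd (v m n α β : ℕ) : Prop := HW (⊤ : SimpleGraph (Fin v)) m n α β

/-- `F ≤ H` is a vertex-disjoint union of `c` cycles of length `k`:
2-regular on its support, every component has `k` vertices, and the support
has `k * c` vertices. -/
def IsCycleClass {V : Type*} (H F : SimpleGraph V) (k c : ℕ) : Prop :=
  F ≤ H ∧ (∀ v ∈ F.support, (F.neighborSet v).ncard = 2) ∧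
  (∀ v ∈ F.support, {w | F.Reachable v w}.ncard = k) ∧
  F.support.ncard = k * c

/-- An almost resolvable `k`-cycle system of order `v`: a partition of the
edges of `K_v` into `(v-1)/2` almost parallel classes (each a vertex-disjoint
union of `(v-1)/k` `k`-cycles) together with one half-parallel class
(a vertex-disjoint union of `(v-1)/(2k)` `k`-cycles). -/
def IsARCS (k v : ℕ) : Prop :=
  ∃ F : Fin ((v - 1) / 2) ⊕ Unit → SimpleGraph (Fin v),
    (∀ i, IsCycleClass ⊤ (F (Sum.inl i)) k ((v - 1) / k)) ∧
    (∀ j, IsCycleClass ⊤ (F (Sum.inr j)) k ((v - 1) / (2 * k))) ∧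
    IsDecomp (⊤ : SimpleGraph (Fin v)) F

/-- The lexicographic product `C_m[n]` of the cycle `C_m` with the empty graph
on `n` vertices, on vertex set `ZMod m × ZMod n`. -/
def lexCycle (m n : ℕ) : SimpleGraph (ZMod m × ZMod n) :=
  SimpleGraph.fromRel (fun a b => a.1 - b.1 = 1)

/-- The Cayley graph of an additive group with connection set `S`. -/
def cayley {Γ : Type*} [AddGroup Γ] (S : Set Γ) : SimpleGraph Γ :=
  SimpleGraph.fromRel (fun a b => a - b ∈ S)

def pg {V : Type*} (f : V → V) : SimpleGraph V := SimpleGraph.fromRel (fun x y => f x = y)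

theorem pg_factor {V : Type*} (H : SimpleGraph V) (f : V → V) (k : ℕ) (hk : 3 ≤ k)
    (hH : pg f ≤ H) (h1 : ∀ x, f^[k] x = x) (h2 : ∀ x m, 0 < m → m < k → f^[m] x ≠ x) :
    IsCycleFactor H (pg f) k := by
  have hinv : ∀ y, f^[k-1] (f y) = y := by
    intro y
    rw [← Function.iterate_succ_apply, show (k - 1).succ = k by omega]
    exact h1 y
  have hinv2 : ∀ y, f (f^[k-1] y) = y := by
    intro y
    rw [← Function.iterate_succ_apply' f, show (k - 1).succ = k by omega]
    exact h1 y
  have hne : ∀ x, f x ≠ x := fun x => h2 x 1 (by omega) (by omega)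
  have hadj : ∀ x, (pg f).Adj x (f x) := by
    intro x
    exact ⟨(hne x).symm, Or.inl rfl⟩
  refine ⟨hH, ?_, ?_⟩
  · intro x
    have : (pg f).neighborSet x = {f x, f^[k-1] x} := by
      ext y
      simp only [SimpleGraph.mem_neighborSet, pg, SimpleGraph.fromRel_adj, Set.mem_insert_iff,
        Set.mem_singleton_iff]
      constructor
      · rintro ⟨_, h | h⟩
        · exact Or.inl h.symm
        · right
          rw [← h, hinv]
      · rintro (rfl | rfl)
        · exact ⟨(hne x).symm, Or.inl rfl⟩
        · exact ⟨(h2 x _ (by omega) (by omega)).symm, Or.inr (hinv2 x)⟩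
    rw [this]
    apply Set.ncard_pair
    intro h
    have h3 := congrArg f h
    rw [hinv2] at h3
    exact h2 x 2 (by omega) (by omega) h3
  · intro x
    have hmod : ∀ m, f^[m % k] x = f^[m] x := fun m =>
      Function.IsPeriodicPt.iterate_mod_apply (h1 x) m
    have : {w | (pg f).Reachable x w} = (fun m => f^[m] x) '' (Finset.range k : Set ℕ) := by
      ext w
      simp only [Set.mem_setOf_eq, Set.mem_image, Finset.coe_range, Set.mem_Iio]
      constructor
      · intro h
        suffices ∃ m, f^[m] x = w by
          obtain ⟨m, hm⟩ := this
          exact ⟨m % k, Nat.mod_lt _ (by omega), by rw [hmod, hm]⟩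
        rw [SimpleGraph.reachable_iff_reflTransGen] at h
        induction h with
        | refl => exact ⟨0, rfl⟩
        | tail _ hbc ih =>
          obtain ⟨m, hm⟩ := ih
          rcases hbc with ⟨_, h | h⟩
          · exact ⟨m + 1, by rw [Function.iterate_succ_apply', hm, h]⟩
          · exact ⟨k - 1 + m, by rw [Function.iterate_add_apply, hm, ← h, hinv]⟩
      · rintro ⟨m, _, rfl⟩
        induction m with
        | zero => exact SimpleGraph.Reachable.refl _
        | succ m ih =>
          rw [Function.iterate_succ_apply']
          exact (ih (by omega)).trans (hadj _).reachable
    rw [this, Set.ncard_image_of_injOn, Set.ncard_coe_finset, Finset.card_range]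
    have key : ∀ a b, a < b → b < k → f^[a] x ≠ f^[b] x := by
      intro a b hab hb h
      apply h2 x (k - b + a) (by omega) (by omega)
      rw [Function.iterate_add_apply, h, ← Function.iterate_add_apply, Nat.sub_add_cancel hb.le]
      exact h1 x
    intro a ha b hb h
    simp only [Finset.coe_range, Set.mem_Iio] at ha hb
    rcases lt_trichotomy a b with hab | hab | hab
    · exact absurd h (key a b hab hb)
    · exact hab
    · exact absurd h.symm (key b a hab ha)

def tab : Fin 4 → Fin 28 → ZMod 35 :=
  ![fun c => c.val + 4,
    ![17, 12, 10, 4, 7, 14, 9, 11, 16, 27, 15, 5, 25, 26, 13, 8, 24, 18, 20, 22, 6, 28, 23, 21, 19, 30, 31, 29],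
    ![14, 18, 19, 24, 20, 12, 16, 13, 7, 30, 6, 15, 29, 27, 4, 8, 26, 31, 28, 25, 5, 17, 21, 22, 23, 11, 9, 10],
    fun c => - (c.val + 4)]

def knd (i : ZMod 17) : Fin 4 :=
  if i = 1 then 1 else if i = 2 then 2 else if i = 0 then 0
  else if i.val % 2 = 1 then 0 else 3

def gg (c : Fin 28) (i : ZMod 17) : ZMod 35 := tab (knd i) c

def dd : Fin 6 → ZMod 35 := ![1, 2, 3, 1, 2, 3]

def pos (j : Fin 6) (a : ZMod 35) : Bool := decide (a.val < 26) == decide (j.val < 3)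

def uu (j : Fin 6) (a : ZMod 35) : ZMod 17 := if pos j a then 1 else -1

def nx : Fin 28 ⊕ Fin 6 → ZMod 17 × ZMod 35 → ZMod 17 × ZMod 35
  | Sum.inl c, x => (x.1 + 1, x.2 + gg c x.1)
  | Sum.inr j, x => (x.1 + uu j x.2, x.2 + dd j)

theorem tab_inj : ∀ k c c', tab k c = tab k c' → c = c' := by decide +kernel
theorem tab_ne0 : ∀ k c, tab k c ≠ 0 := by decide +kernel
theorem tab_ned : ∀ k c j, tab k c ≠ dd j := by decide +kernel
theorem tab_ned' : ∀ k c j, tab k c + dd j ≠ 0 := by decide +kernel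
theorem tab_sum : ∀ c i, ∑ l ∈ Finset.range 17, gg c (i + (l : ℕ)) = 0 := by decide +kernel
theorem uu_sum : ∀ j a, ∑ l ∈ Finset.range 35, uu j (a + (l : ℕ) * dd j) = 0 := by decide +kernel
theorem dd_per : ∀ j, ∀ m : Fin 35, 0 < m.val → ((m.val : ℕ) : ZMod 35) * dd j ≠ 0 := by
  decide +kernel
theorem dd_ne0 : ∀ j, dd j ≠ 0 := by decide +kernel
theorem dd_add : ∀ j j', dd j + dd j' ≠ 0 := by decide +kernel
theorem dd_inj : ∀ j j', dd j = dd j' → ∀ a, pos j a = pos j' a → j = j' := by decide +kernel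
theorem surj : ∀ t : ZMod 35, t ≠ 0 → (∀ k, ∃ c, tab k c = t) ∨
    (∀ a, ∃ j, dd j = t ∧ pos j a = true) ∨ (∀ a, ∃ j, dd j = -t ∧ pos j a = false) := by
  decide +kernel

theorem iter_inl (c : Fin 28) (x : ZMod 17 × ZMod 35) (m : ℕ) :
    (nx (Sum.inl c))^[m] x =
      (x.1 + m, x.2 + ∑ l ∈ Finset.range m, gg c (x.1 + (l : ℕ))) := by
  induction m with
  | zero => simp
  | succ m ih =>
    rw [Function.iterate_succ_apply', ih, Finset.sum_range_succ]
    simp only [nx]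
    ext <;> push_cast <;> ring

theorem iter_inr (j : Fin 6) (x : ZMod 17 × ZMod 35) (m : ℕ) :
    (nx (Sum.inr j))^[m] x =
      (x.1 + ∑ l ∈ Finset.range m, uu j (x.2 + (l : ℕ) * dd j), x.2 + m * dd j) := by
  induction m with
  | zero => simp
  | succ m ih =>
    rw [Function.iterate_succ_apply', ih, Finset.sum_range_succ]
    simp only [nx]
    ext <;> push_cast <;> ring

def PP : Fin 28 ⊕ Fin 6 → ZMod 17 → ZMod 35 → ZMod 35 → Prop
  | Sum.inl c, i, a, b => b = a + gg c i
  | Sum.inr j, _, a, b => (b = a + dd j ∧ pos j a = true) ∨ (a = b + dd j ∧ pos j b = false)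

theorem z17a : (1 : ZMod 17) ≠ -1 := by decide
theorem z17b : ∀ i : ZMod 17, i ≠ i + 1 + 1 := by decide
theorem z17c : ∀ i : ZMod 17, i ≠ i + 1 := by decide

theorem uu_one (j : Fin 6) (a : ZMod 35) : uu j a = 1 ↔ pos j a = true := by
  unfold uu
  split_ifs with h
  · simp [h]
  · simp [h, z17a.symm]

theorem uu_neg (j : Fin 6) (a : ZMod 35) : uu j a = -1 ↔ pos j a = false := by
  unfold uu
  split_ifs with h
  · simp [h, z17a]
  · simp [h]

theorem adj_fwd (s : Fin 28 ⊕ Fin 6) (i : ZMod 17) (a b : ZMod 35) :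
    (pg (nx s)).Adj (i, a) (i + 1, b) ↔ PP s i a b := by
  have hne : ((i, a) : ZMod 17 × ZMod 35) ≠ (i + 1, b) := by
    intro h
    exact z17c i (congrArg Prod.fst h)
  cases s with
  | inl c =>
    simp only [pg, SimpleGraph.fromRel_adj, nx, PP, Prod.mk.injEq]
    constructor
    · rintro ⟨_, h | h⟩
      · exact h.2.symm
      · exact absurd h.1.symm (z17b i)
    · intro h
      exact ⟨hne, Or.inl ⟨trivial, h.symm⟩⟩
  | inr j =>
    simp only [pg, SimpleGraph.fromRel_adj, nx, PP, Prod.mk.injEq]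
    rw [← uu_one, ← uu_neg]
    constructor
    · rintro ⟨_, h | h⟩
      · exact Or.inl ⟨h.2.symm, add_left_cancel h.1⟩
      · refine Or.inr ⟨h.2.symm, ?_⟩
        linear_combination h.1
    · rintro (h | h)
      · exact ⟨hne, Or.inl ⟨by rw [h.2], h.1.symm⟩⟩
      · exact ⟨hne, Or.inr ⟨by rw [h.2]; ring, h.1.symm⟩⟩

theorem adj_dir (s : Fin 28 ⊕ Fin 6) (x y : ZMod 17 × ZMod 35) (h : (pg (nx s)).Adj x y) :
    y.1 = x.1 + 1 ∨ x.1 = y.1 + 1 := by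
  have key : ∀ x, (nx s x).1 = x.1 + 1 ∨ x.1 = (nx s x).1 + 1 := by
    intro x
    cases s with
    | inl c => left; rfl
    | inr j =>
      simp only [nx, uu]
      split_ifs
      · left; rfl
      · right; ring
  rcases h with ⟨_, h | h⟩
  · rw [← h]; exact key x
  · rw [← h]; exact (key y).symm

theorem PP_ne (s : Fin 28 ⊕ Fin 6) (i a b) (h : PP s i a b) : a ≠ b := by
  rintro rfl
  cases s with
  | inl c => exact tab_ne0 (knd i) c (by simpa [PP, gg] using h)
  | inr j =>
    rcases h with h | h <;> exact dd_ne0 j (by simpa using h.1)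

theorem PP_ex (i a b) (h : a ≠ b) : ∃ s, PP s i a b := by
  rcases surj (b - a) (sub_ne_zero.2 h.symm) with h | h | h
  · obtain ⟨c, hc⟩ := h (knd i)
    exact ⟨Sum.inl c, by simp only [PP, gg, hc]; ring⟩
  · obtain ⟨j, hj, hp⟩ := h a
    exact ⟨Sum.inr j, Or.inl ⟨by rw [hj]; ring, hp⟩⟩
  · obtain ⟨j, hj, hp⟩ := h b
    exact ⟨Sum.inr j, Or.inr ⟨by rw [hj]; ring, hp⟩⟩

theorem PP_lr (c j i a b) (h : PP (Sum.inl c) i a b) (h' : PP (Sum.inr j) i a b) : False := by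
  simp only [PP, gg] at h h'
  rcases h' with h' | h'
  · exact tab_ned (knd i) c j (by linear_combination h'.1 - h)
  · exact tab_ned' (knd i) c j (by linear_combination - h'.1 - h)

theorem PP_uniq (s s' i a b) (h : PP s i a b) (h' : PP s' i a b) : s = s' := by
  rcases s with c | j <;> rcases s' with c' | j'
  · simp only [PP, gg] at h h'
    rw [tab_inj (knd i) c c' (by linear_combination h' - h)]
  · exact (PP_lr _ _ _ _ _ h h').elim
  · exact (PP_lr _ _ _ _ _ h' h).elim
  · congr 1
    rcases h with h | h <;> rcases h' with h' | h'
    · exact dd_inj j j' (by linear_combination h'.1 - h.1) a (by rw [h.2, h'.2])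
    · exact (dd_add j j' (by linear_combination - h'.1 - h.1)).elim
    · exact (dd_add j j' (by linear_combination - h'.1 - h.1)).elim
    · exact dd_inj j j' (by linear_combination h'.1 - h.1) b (by rw [h.2, h'.2])

abbrev HH : SimpleGraph (ZMod 17 × ZMod 35) :=
  cayley {p : ZMod 17 × ZMod 35 | (p.1 = 1 ∨ p.1 = -1) ∧ p.2 ≠ 0}

theorem HH_fwd (i : ZMod 17) (a b : ZMod 35) : HH.Adj (i, a) (i + 1, b) ↔ a ≠ b := by
  have hne : ((i, a) : ZMod 17 × ZMod 35) ≠ (i + 1, b) := by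
    intro h
    exact z17c i (congrArg Prod.fst h)
  simp only [HH, cayley, SimpleGraph.fromRel_adj, Set.mem_setOf_eq, Prod.fst_sub, Prod.snd_sub]
  constructor
  · rintro ⟨_, h | h⟩
    · exact sub_ne_zero.1 h.2
    · exact (sub_ne_zero.1 h.2).symm
  · intro h
    exact ⟨hne, Or.inr ⟨Or.inl (by ring), sub_ne_zero.2 h.symm⟩⟩

theorem HH_dir (x y : ZMod 17 × ZMod 35) (h : HH.Adj x y) :
    y.1 = x.1 + 1 ∨ x.1 = y.1 + 1 := by
  simp only [HH, cayley, SimpleGraph.fromRel_adj, Set.mem_setOf_eq, Prod.fst_sub, Prod.snd_sub] at h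
  rcases h with ⟨_, ⟨h | h, _⟩ | ⟨h | h, _⟩⟩
  · right; linear_combination h
  · left; linear_combination -h
  · left; linear_combination h
  · right; linear_combination -h

theorem HH_iff (x y : ZMod 17 × ZMod 35) : HH.Adj x y ↔ ∃ s, (pg (nx s)).Adj x y := by
  have fwd : ∀ i a b, HH.Adj (i, a) (i + 1, b) ↔ ∃ s, (pg (nx s)).Adj (i, a) (i + 1, b) := by
    intro i a b
    rw [HH_fwd]
    simp only [adj_fwd]
    exact ⟨PP_ex i a b, fun ⟨s, hs⟩ => PP_ne s i a b hs⟩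
  obtain ⟨i, a⟩ := x
  obtain ⟨i', b⟩ := y
  have main : (i' = i + 1 ∨ i = i' + 1) →
      (HH.Adj (i, a) (i', b) ↔ ∃ s, (pg (nx s)).Adj (i, a) (i', b)) := by
    rintro (rfl | rfl)
    · exact fwd _ _ _
    · rw [SimpleGraph.adj_comm, fwd]
      simp only [SimpleGraph.adj_comm]
  constructor
  · intro h
    exact (main (HH_dir _ _ h)).1 h
  · rintro ⟨s, hs⟩
    exact (main (adj_dir s _ _ hs)).2 ⟨s, hs⟩

theorem adj_uniq (s s') (x y : ZMod 17 × ZMod 35) (h : (pg (nx s)).Adj x y)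
    (h' : (pg (nx s')).Adj x y) : s = s' := by
  obtain ⟨i, a⟩ := x
  obtain ⟨i', b⟩ := y
  have hd := adj_dir s _ _ h
  simp only at hd
  rcases hd with rfl | rfl
  · rw [adj_fwd] at h h'
    exact PP_uniq _ _ _ _ _ h h'
  · rw [SimpleGraph.adj_comm, adj_fwd] at h h'
    exact PP_uniq _ _ _ _ _ h h'

theorem stmt12 :
    HW (cayley {p : ZMod 17 × ZMod 35 | (p.1 = 1 ∨ p.1 = -1) ∧ p.2 ≠ 0})
      17 35 28 6 := by
  refine ⟨fun s => pg (nx s), ?_, ?_, ?_, ?_⟩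
  · intro c
    apply pg_factor _ _ _ (by norm_num)
    · intro x y h
      exact (HH_iff x y).2 ⟨_, h⟩
    · intro x
      rw [iter_inl, tab_sum, show ((17 : ℕ) : ZMod 17) = 0 from by decide]
      simp
    · intro x m h0 hm h
      rw [iter_inl] at h
      have h1 : x.1 + (m : ZMod 17) = x.1 := congrArg Prod.fst h
      have h2 : (m : ZMod 17) = 0 := by simpa using h1
      rw [ZMod.natCast_eq_zero_iff] at h2
      exact absurd (Nat.le_of_dvd h0 h2) (by omega)
  · intro j
    apply pg_factor _ _ _ (by norm_num)
    · intro x y h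
      exact (HH_iff x y).2 ⟨_, h⟩
    · intro x
      rw [iter_inr, uu_sum, show ((35 : ℕ) : ZMod 35) = 0 from by decide]
      simp
    · intro x m h0 hm h
      rw [iter_inr] at h
      have h1 : x.2 + (m : ZMod 35) * dd j = x.2 := congrArg Prod.snd h
      have h2 : (m : ZMod 35) * dd j = 0 := by simpa only [add_eq_left] using h1
      exact dd_per j ⟨m, hm⟩ h0 h2
  · intro s s' hs
    rw [Set.disjoint_left]
    intro e
    induction e with
    | _ x y =>
      intro h h'
      exact hs (adj_uniq s s' x y h h')
  · intro e
    induction e with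
    | _ x y => exact HH_iff x y
end

section
/- Let k ≥ 3 be an odd integer, t ≥ 1, and let l be an integer with 0 ≤ l ≤ kt and l ∉ {1, 2, kt−1, kt}. Then the Cayley graph Cay(Z_k × Z_{2kt+1}, {1, −1} × (Z_{2kt+1} \ {0})) can be decomposed into 2l C_k-factors and 2kt − 2l C_{2kt+1}-factors. -/
open SimpleGraph

namespace HWaux

/-- potential graph for short cycles -/
def ckF {k n : ℕ} (h1 : (1 : ZMod k) ≠ 0) (S : ZMod k → ZMod n) :
    SimpleGraph (ZMod k × ZMod n) where
  Adj p q := (q.1 = p.1 + 1 ∨ p.1 = q.1 + 1) ∧ p.2 - S p.1 = q.2 - S q.1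
  symm := by
    constructor
    intro p q h
    exact ⟨h.1.symm, h.2.symm⟩
  loopless := by
    constructor
    intro p h
    rcases h.1 with h | h <;> exact h1 (by simpa using h)

/-- potential graph for long cycles -/
def cnF {k n : ℕ} (G : SimpleGraph (ZMod n)) (f : ZMod n → ZMod k) :
    SimpleGraph (ZMod k × ZMod n) where
  Adj p q := G.Adj p.2 q.2 ∧ p.1 - f p.2 = q.1 - f q.2
  symm := by
    constructor
    intro p q h
    exact ⟨h.1.symm, h.2.symm⟩
  loopless := by
    constructor
    intro p h
    exact G.irrefl h.1

lemma one_ne {k : ℕ} (hk3 : 3 ≤ k) : (1 : ZMod k) ≠ 0 := by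
  have : Fact (1 < k) := ⟨by omega⟩
  exact one_ne_zero

lemma two_ne {k : ℕ} (hk3 : 3 ≤ k) : (1 : ZMod k) + 1 ≠ 0 := by
  intro h
  have : ((2 : ℕ) : ZMod k) = 0 := by push_cast; rw [← h]; norm_num
  rw [ZMod.natCast_eq_zero_iff] at this
  have := Nat.le_of_dvd (by norm_num) this
  omega

lemma ckF_reg {k n : ℕ} (hk3 : 3 ≤ k) (S : ZMod k → ZMod n) (p : ZMod k × ZMod n) :
    ((ckF (one_ne hk3) S).neighborSet p).ncard = 2 := by
  have : (ckF (one_ne hk3) S).neighborSet p =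
      {(p.1 + 1, p.2 - S p.1 + S (p.1 + 1)), (p.1 - 1, p.2 - S p.1 + S (p.1 - 1))} := by
    ext ⟨c, u⟩
    simp only [SimpleGraph.mem_neighborSet, ckF, Set.mem_insert_iff, Set.mem_singleton_iff,
      Prod.mk.injEq]
    constructor
    · rintro ⟨h | h, h2⟩
      · left; subst h; exact ⟨rfl, by rw [h2]; ring⟩
      · right
        have : c = p.1 - 1 := by rw [h]; ring
        refine ⟨this, ?_⟩
        rw [← this, h2]; ring
    · rintro (⟨h, h2⟩ | ⟨h, h2⟩)
      · subst h; subst h2; exact ⟨Or.inl rfl, by ring⟩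
      · subst h; subst h2; exact ⟨Or.inr (by ring), by ring⟩
  rw [this, Set.ncard_pair]
  intro h
  have h := (Prod.mk.inj h).1
  apply two_ne hk3
  linear_combination h

lemma ckF_reach {k n : ℕ} (hk3 : 3 ≤ k) (S : ZMod k → ZMod n) (p : ZMod k × ZMod n) :
    {q | (ckF (one_ne hk3) S).Reachable p q}.ncard = k := by
  have : NeZero k := ⟨by omega⟩
  have : {q | (ckF (one_ne hk3) S).Reachable p q} =
      (fun c => (c, p.2 - S p.1 + S c)) '' (Set.univ : Set (ZMod k)) := by
    ext q
    simp only [Set.mem_ofPred_eq, Set.image_univ, Set.mem_range]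
    constructor
    · rintro ⟨w⟩
      have key : p.2 - S p.1 = q.2 - S q.1 := by
        induction w with
        | nil => rfl
        | cons h _ ih => exact h.2.trans ih
      exact ⟨q.1, by ext <;> simp [key]⟩
    · rintro ⟨c, rfl⟩
      have key : ∀ m : ℕ, (ckF (one_ne hk3) S).Reachable p
          (p.1 + m, p.2 - S p.1 + S (p.1 + m)) := by
        intro m
        induction m with
        | zero => simp
        | succ m ih =>
          refine ih.trans (SimpleGraph.Adj.reachable ⟨Or.inl ?_, ?_⟩)
          · push_cast; ring
          · simp
      have h := key (c - p.1).val
      rw [ZMod.natCast_zmod_val] at h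
      simpa using h
  rw [this, Set.ncard_image_of_injective _ (fun a b h => (Prod.mk.inj h).1), Set.ncard_univ,
    Nat.card_zmod]

lemma cnF_reg {k n : ℕ} (G : SimpleGraph (ZMod n)) (f : ZMod n → ZMod k)
    (hG : ∀ v, (G.neighborSet v).ncard = 2) (p : ZMod k × ZMod n) :
    ((cnF G f).neighborSet p).ncard = 2 := by
  have : (cnF G f).neighborSet p =
      (fun y => (p.1 - f p.2 + f y, y)) '' (G.neighborSet p.2) := by
    ext ⟨c, u⟩
    simp only [SimpleGraph.mem_neighborSet, cnF, Set.mem_image, Prod.mk.injEq]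
    constructor
    · rintro ⟨h, h2⟩
      exact ⟨u, h, by rw [h2]; ring, rfl⟩
    · rintro ⟨y, h, h2, rfl⟩
      exact ⟨h, by rw [← h2]; ring⟩
  rw [this, Set.ncard_image_of_injective _ (fun a b h => (Prod.mk.inj h).2), hG]

lemma cnF_reach {k n : ℕ} (G : SimpleGraph (ZMod n)) (f : ZMod n → ZMod k)
    (hG : G.Connected) (p : ZMod k × ZMod n) :
    {q | (cnF G f).Reachable p q}.ncard = n := by
  have : {q | (cnF G f).Reachable p q} =
      (fun y => (p.1 - f p.2 + f y, y)) '' (Set.univ : Set (ZMod n)) := by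
    ext q
    simp only [Set.mem_ofPred_eq, Set.image_univ, Set.mem_range]
    constructor
    · rintro ⟨w⟩
      have key : p.1 - f p.2 = q.1 - f q.2 := by
        induction w with
        | nil => rfl
        | cons h _ ih => exact h.2.trans ih
      exact ⟨q.2, by ext <;> simp [key]⟩
    · rintro ⟨y, rfl⟩
      let φ : G →g cnF G f :=
        { toFun := fun y => (p.1 - f p.2 + f y, y)
          map_rel' := fun {a b} h => ⟨h, by simp⟩ }
      have h := (hG.preconnected p.2 y).map φ
      have e : φ p.2 = p :=
        Prod.ext (by change p.1 - f p.2 + f p.2 = p.1; ring) rfl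
      rw [e] at h
      exact h
  rw [this, Set.ncard_image_of_injective _ (fun a b h => (Prod.mk.inj h).2), Set.ncard_univ,
    Nat.card_zmod]

lemma HW_of {V ι κ : Type*} [Fintype ι] [Fintype κ] (H : SimpleGraph V) (m n α β : ℕ)
    (hι : Fintype.card ι = α) (hκ : Fintype.card κ = β) (A : ι → SimpleGraph V)
    (B : κ → SimpleGraph V) (hA : ∀ i, IsCycleFactor H (A i) m)
    (hB : ∀ i, IsCycleFactor H (B i) n)
    (hu : ∀ p q, H.Adj p q → ∃! i : ι ⊕ κ, (Sum.elim A B i).Adj p q) : HW H m n α β := by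
  let e1 := (Fintype.equivFinOfCardEq hι).symm
  let e2 := (Fintype.equivFinOfCardEq hκ).symm
  have hle : ∀ i, Sum.elim A B i ≤ H := by
    rintro (i | i)
    · exact (hA i).1
    · exact (hB i).1
  refine ⟨fun i => Sum.elim A B ((Equiv.sumCongr e1 e2) i), fun i => hA (e1 i),
    fun i => hB (e2 i), ?_, ?_⟩
  · intro i j hij
    rw [Set.disjoint_left]
    intro e
    induction e using Sym2.ind with
    | _ x y =>
      simp only [SimpleGraph.mem_edgeSet]
      intro h1 h2
      apply hij
      apply (Equiv.sumCongr e1 e2).injective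
      exact (hu x y (hle _ h1)).unique h1 h2
  · intro e
    induction e using Sym2.ind with
    | _ x y =>
      simp only [SimpleGraph.mem_edgeSet]
      constructor
      · intro h
        obtain ⟨i, hi, -⟩ := hu x y h
        exact ⟨(Equiv.sumCongr e1 e2).symm i, by simpa using hi⟩
      · rintro ⟨i, hi⟩
        exact hle _ hi

lemma assemble {k n α e : ℕ} (hk3 : 3 ≤ k) (D E : Set (ZMod n))
    (hDE : ∀ d, d ≠ 0 → d ∈ D ∨ d ∈ E) (hdis : ∀ d, d ∈ D → d ∉ E)
    (hD0 : (0 : ZMod n) ∉ D)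
    (S : Fin α → ZMod k → ZMod n)
    (hS : ∀ i c, S i (c + 1) - S i c ∈ D)
    (hS2 : ∀ c, ∀ d ∈ D, ∃! i, S i (c + 1) - S i c = d)
    (G : Fin e → SimpleGraph (ZMod n)) (f : Fin e → ZMod n → ZMod k)
    (hreg : ∀ i v, ((G i).neighborSet v).ncard = 2) (hconn : ∀ i, (G i).Connected)
    (hf : ∀ i x y, (G i).Adj x y → f i y = f i x + 1 ∨ f i y = f i x - 1)
    (hG : ∀ i x y, (G i).Adj x y → y - x ∈ E)
    (hG2 : ∀ x y, y - x ∈ E → ∃! i, (G i).Adj x y) :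
    HW (cayley {p : ZMod k × ZMod n | (p.1 = 1 ∨ p.1 = -1) ∧ p.2 ≠ 0}) k n α (2 * e) := by
  have h1 := one_ne hk3
  have h2 := two_ne hk3
  let sg : Bool → ZMod k := fun b => if b then 1 else -1
  have adj_iff : ∀ p q : ZMod k × ZMod n,
      (cayley {p : ZMod k × ZMod n | (p.1 = 1 ∨ p.1 = -1) ∧ p.2 ≠ 0}).Adj p q ↔
      (q.1 = p.1 + 1 ∨ p.1 = q.1 + 1) ∧ p.2 ≠ q.2 := by
    intro p q
    simp only [cayley, SimpleGraph.fromRel_adj, Set.mem_ofPred_eq, Prod.fst_sub, Prod.snd_sub,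
      sub_ne_zero]
    constructor
    · rintro ⟨-, ⟨h | h, h'⟩ | ⟨h | h, h'⟩⟩
      · exact ⟨Or.inr (by linear_combination h), h'⟩
      · exact ⟨Or.inl (by linear_combination -h), h'⟩
      · exact ⟨Or.inl (by linear_combination h), h'.symm⟩
      · exact ⟨Or.inr (by linear_combination -h), h'.symm⟩
    · rintro ⟨h | h, h'⟩
      · exact ⟨fun e => h' (by rw [e]), Or.inr ⟨Or.inl (by linear_combination h), h'.symm⟩⟩
      · exact ⟨fun e => h' (by rw [e]), Or.inl ⟨Or.inl (by linear_combination h), h'⟩⟩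
  refine HW_of (ι := Fin α) (κ := Fin e × Bool) _ k n α (2 * e) (by simp)
    (by simp [mul_comm]) (fun i => ckF h1 (S i))
    (fun j => cnF (G j.1) (fun x => sg j.2 * f j.1 x)) ?_ ?_ ?_
  · intro i
    refine ⟨?_, ckF_reg hk3 (S i), ckF_reach hk3 (S i)⟩
    intro p q h
    rw [adj_iff]
    refine ⟨h.1, fun heq => ?_⟩
    obtain ⟨h3 | h3, h4⟩ := h
    · have := hS i p.1
      rw [← h3] at this
      apply hD0
      convert this using 1
      linear_combination heq - h4
    · have := hS i q.1
      rw [← h3] at this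
      apply hD0
      convert this using 1
      linear_combination h4 - heq
  · rintro ⟨j, b⟩
    refine ⟨?_, cnF_reg _ _ (hreg j), cnF_reach _ _ (hconn j)⟩
    intro p q h
    rw [adj_iff]
    obtain ⟨h3, h4⟩ := h
    refine ⟨?_, h3.ne⟩
    rcases hf _ _ _ h3 with h5 | h5 <;> cases b <;> simp only [sg, h5] at h4 <;>
      simp at h4
    · right; linear_combination h4
    · left; linear_combination -h4
    · left; linear_combination -h4
    · right; linear_combination h4
  · -- uniqueness
    have main : ∀ p q : ZMod k × ZMod n, q.1 = p.1 + 1 → p.2 ≠ q.2 →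
        ∃! i : Fin α ⊕ (Fin e × Bool), (Sum.elim (fun i => ckF h1 (S i))
          (fun j => cnF (G j.1) (fun x => sg j.2 * f j.1 x)) i).Adj p q := by
      intro p q hq hne
      have hA : ∀ i, (ckF h1 (S i)).Adj p q ↔ S i (p.1 + 1) - S i p.1 = q.2 - p.2 := by
        intro i
        simp only [ckF, hq]
        constructor
        · rintro ⟨-, h⟩; linear_combination h
        · intro h; exact ⟨Or.inl trivial, by linear_combination h⟩
      have hB : ∀ j : Fin e × Bool, (cnF (G j.1) (fun x => sg j.2 * f j.1 x)).Adj p q ↔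
          (G j.1).Adj p.2 q.2 ∧ sg j.2 * (f j.1 q.2 - f j.1 p.2) = 1 := by
        intro j
        simp only [cnF, hq]
        constructor
        · rintro ⟨h, h'⟩; exact ⟨h, by linear_combination h'⟩
        · rintro ⟨h, h'⟩; exact ⟨h, by linear_combination h'⟩
      by_cases hd : q.2 - p.2 ∈ D
      · obtain ⟨i, hi, hiu⟩ := hS2 p.1 _ hd
        refine ⟨Sum.inl i, (hA i).2 hi, ?_⟩
        rintro (i' | j) h
        · rw [hiu i' ((hA i').1 h)]
        · exact absurd (hG _ _ _ ((hB j).1 h).1) (hdis _ hd)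
      · have hd' : q.2 - p.2 ∈ E := (hDE _ (sub_ne_zero.2 hne.symm)).resolve_left hd
        obtain ⟨i, hi, hiu⟩ := hG2 _ _ hd'
        rcases hf _ _ _ hi with h5 | h5
        · refine ⟨Sum.inr (i, true), (hB _).2 ⟨hi, by simp [sg, h5]⟩, ?_⟩
          rintro (i' | ⟨i', b⟩) h
          · exact absurd (by rw [← (hA i').1 h]; exact hS _ _) hd
          · obtain ⟨h6, h7⟩ := (hB _).1 h
            have := hiu i' h6
            subst this
            cases b
            · exfalso
              simp only [sg, h5] at h7
              apply h2
              simp at h7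
              linear_combination -h7
            · rfl
        · refine ⟨Sum.inr (i, false), (hB _).2 ⟨hi, by simp [sg, h5]⟩, ?_⟩
          rintro (i' | ⟨i', b⟩) h
          · exact absurd (by rw [← (hA i').1 h]; exact hS _ _) hd
          · obtain ⟨h6, h7⟩ := (hB _).1 h
            have := hiu i' h6
            subst this
            cases b
            · rfl
            · exfalso
              simp only [sg, h5] at h7
              apply h2
              simp at h7
              linear_combination -h7
    intro p q hpq
    rw [adj_iff] at hpq
    rcases hpq with ⟨h | h, hne⟩
    · exact main p q h hne
    · have := main q p h hne.symm
      simpa only [SimpleGraph.adj_comm] using this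

end HWaux
namespace HWaux

lemma potential {k t n : ℕ} (hk : Odd k) (hk3 : 3 ≤ k) (ht : 1 ≤ t) (hn : n = 2 * k * t + 1)
    (G : SimpleGraph (ZMod n)) (hreg : ∀ v, (G.neighborSet v).ncard = 2) (hconn : G.Connected) :
    ∃ f : ZMod n → ZMod k, ∀ x y, G.Adj x y → f y = f x + 1 ∨ f y = f x - 1 := by
  classical
  have : NeZero n := ⟨by omega⟩
  have hcyc : G.IsCycles := fun v _ => hreg v
  have hne : (G.neighborSet 0).Nonempty := by
    apply Set.nonempty_of_ncard_ne_zero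
    rw [hreg]; norm_num
  obtain ⟨p, hp, hps⟩ := hcyc.exists_cycle_toSubgraph_verts_eq_connectedComponentSupp
    (v := 0) (c := G.connectedComponentMk 0) rfl hne
  have hall : ∀ v, v ∈ p.support := by
    intro v
    rw [← SimpleGraph.Walk.mem_verts_toSubgraph, hps]
    simp only [SimpleGraph.ConnectedComponent.mem_supp_iff, SimpleGraph.ConnectedComponent.eq]
    exact hconn.preconnected _ _
  have hlen3 := hp.three_le_length
  have hpos : ∀ v, ∃ i, i < p.length ∧ p.getVert i = v := by
    intro v
    obtain ⟨i, hi, hi2⟩ := (SimpleGraph.Walk.mem_support_iff_exists_getVert).1 (hall v)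
    by_cases h : i = p.length
    · refine ⟨0, by omega, ?_⟩
      subst h
      rw [← hi]; simp
    · exact ⟨i, by omega, hi⟩
  choose pos hpos1 hpos2 using hpos
  have hposi : ∀ i, i < p.length → pos (p.getVert i) = i := by
    intro i hi
    apply hp.getVert_injOn' (by simp only [Set.mem_ofPred_eq]; have := hpos1 (p.getVert i); omega)
      (by simp only [Set.mem_ofPred_eq]; omega)
    exact hpos2 _
  have hlen : p.length = n := by
    have h1 : Fintype.card (Fin p.length) = Fintype.card (ZMod n) := by
      apply Fintype.card_of_bijective (f := fun i : Fin p.length => p.getVert i)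
      constructor
      · intro i j hij
        have h1 := hposi i i.2
        have h2 := hposi j j.2
        simp only at hij
        rw [hij] at h1
        exact Fin.ext (h1.symm.trans h2)
      · intro v
        exact ⟨⟨pos v, hpos1 v⟩, hpos2 v⟩
    simpa [ZMod.card] using h1
  let φ : ℕ → ZMod k := fun i => if i < k then (i : ZMod k) else if Even i then -1 else 0
  have hkk : ((k - 1 : ℕ) : ZMod k) = -1 := by
    rw [Nat.cast_sub (by omega)]; simp
  have hstep : ∀ i, φ (i + 1) = φ i + 1 ∨ φ (i + 1) = φ i - 1 := by
    intro i
    rcases lt_trichotomy (i + 1) k with h | h | h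
    · left; simp only [φ, h, if_true, show i < k by omega]; push_cast; ring
    · left
      have : Odd (i + 1) := by rw [h]; exact hk
      have h2 : i = k - 1 := by omega
      simp only [φ, h, lt_irrefl, if_false, show i < k by omega, if_true]
      rw [if_neg (by simpa using hk), h2, hkk]; ring
    · simp only [φ, show ¬ (i + 1 < k) by omega, if_false, show ¬ (i < k) by omega,
        Nat.even_add_one]
      by_cases he : Even i
      · left; simp [he]
      · right; simp [he]
  have hlast : φ 0 = φ (p.length - 1) + 1 := by
    have h1 : p.length - 1 = 2 * (k * t) := by rw [hlen, hn]; simp [mul_assoc]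
    have h2 : k * 1 ≤ k * t := Nat.mul_le_mul_left _ ht
    rw [h1]
    simp only [φ, show 0 < k by omega, if_true, show ¬ (2 * (k * t) < k) by omega, if_false,
      even_two_mul]
    simp
  have key : ∀ i, i < p.length → φ (pos (p.getVert (i + 1))) = φ (pos (p.getVert i)) + 1 ∨
      φ (pos (p.getVert (i + 1))) = φ (pos (p.getVert i)) - 1 := by
    intro i hi
    rw [hposi i hi]
    by_cases h : i + 1 < p.length
    · rw [hposi _ h]; exact hstep i
    · have h1 : i + 1 = p.length := by omega
      have h2 : p.getVert (i + 1) = p.getVert 0 := by rw [h1]; simp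
      rw [h2, hposi 0 (by omega), hlast, ← h1]
      left; simp
  refine ⟨fun v => φ (pos v), fun x y hxy => ?_⟩
  have hadj : p.toSubgraph.Adj x y := by
    rw [hp.adj_toSubgraph_iff_of_isCycles hcyc
      ((SimpleGraph.Walk.mem_verts_toSubgraph p).2 (hall x))]
    exact hxy
  rw [SimpleGraph.Walk.toSubgraph_adj_iff] at hadj
  obtain ⟨i, hi, hi2⟩ := hadj
  rw [Sym2.eq_iff] at hi
  rcases hi with ⟨rfl, rfl⟩ | ⟨rfl, rfl⟩
  · exact key i hi2
  · rcases key i hi2 with h | h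
    · right; simp only [h]; ring
    · left; simp only [h]; ring

end HWaux
namespace HWaux

def HamDec {n : ℕ} (A : Set (ZMod n)) (e : ℕ) : Prop :=
  ∃ (ι : Type) (_ : Fintype ι) (G : ι → SimpleGraph (ZMod n)), Fintype.card ι = e ∧
    (∀ i v, ((G i).neighborSet v).ncard = 2) ∧ (∀ i, (G i).Connected) ∧
    (∀ i x y, (G i).Adj x y → y - x ∈ A) ∧ (∀ x y, y - x ∈ A → ∃! i, (G i).Adj x y)

lemma hamDec_empty {n : ℕ} : HamDec (∅ : Set (ZMod n)) 0 :=
  ⟨Empty, inferInstance, fun i => i.elim, by simp, fun i => i.elim, fun i => i.elim,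
    fun i => i.elim, fun x y h => absurd h (by simp)⟩

lemma hamDec_union {n : ℕ} {A B : Set (ZMod n)} {e f : ℕ} (hA : HamDec A e) (hB : HamDec B f)
    (hd : ∀ d, d ∈ A → d ∉ B) : HamDec (A ∪ B) (e + f) := by
  obtain ⟨ι, _, G, h1, h2, h3, h4, h5⟩ := hA
  obtain ⟨κ, _, K, k1, k2, k3, k4, k5⟩ := hB
  refine ⟨ι ⊕ κ, inferInstance, Sum.elim G K, by simp [h1, k1], ?_, ?_, ?_, ?_⟩
  · rintro (i | i) v
    · exact h2 i v
    · exact k2 i v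
  · rintro (i | i)
    · exact h3 i
    · exact k3 i
  · rintro (i | i) x y h
    · exact Or.inl (h4 i x y h)
    · exact Or.inr (k4 i x y h)
  · rintro x y (h | h)
    · obtain ⟨i, hi, hu⟩ := h5 x y h
      refine ⟨Sum.inl i, hi, ?_⟩
      rintro (j | j) hj
      · rw [hu j hj]
      · exact absurd (k4 j x y hj) (hd _ h)
    · obtain ⟨i, hi, hu⟩ := k5 x y h
      refine ⟨Sum.inr i, hi, ?_⟩
      rintro (j | j) hj
      · exact absurd h (hd _ (h4 j x y hj))
      · rw [hu j hj]

/-- `a`-edges starting in `A` and `b`-edges starting in `B` -/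
def ge {n : ℕ} (a b : ZMod n) (ha : a ≠ 0) (hb : b ≠ 0) (A B : Set (ZMod n)) :
    SimpleGraph (ZMod n) where
  Adj x y := (y = x + a ∧ x ∈ A) ∨ (x = y + a ∧ y ∈ A) ∨ (y = x + b ∧ x ∈ B) ∨ (x = y + b ∧ y ∈ B)
  symm := by
    constructor
    intro x y h
    tauto
  loopless := by
    constructor
    intro x h
    rcases h with ⟨h, -⟩ | ⟨h, -⟩ | ⟨h, -⟩ | ⟨h, -⟩
    · exact ha (by simpa using h)
    · exact ha (by simpa using h)
    · exact hb (by simpa using h)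
    · exact hb (by simpa using h)

lemma deg_two {V : Type*} (p q r s : V) (h1 : p ≠ q) (h2 : p ≠ r) (h3 : p ≠ s) (h4 : q ≠ r)
    (h5 : q ≠ s) (h6 : r ≠ s) (α β γ δ : Prop)
    (h : (α ∧ β ∧ ¬γ ∧ ¬δ) ∨ (α ∧ ¬β ∧ γ ∧ ¬δ) ∨ (α ∧ ¬β ∧ ¬γ ∧ δ) ∨ (¬α ∧ β ∧ γ ∧ ¬δ) ∨
      (¬α ∧ β ∧ ¬γ ∧ δ) ∨ (¬α ∧ ¬β ∧ γ ∧ δ)) :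
    {w : V | (w = p ∧ α) ∨ (w = q ∧ β) ∨ (w = r ∧ γ) ∨ (w = s ∧ δ)}.ncard = 2 := by
  rcases h with ⟨e1, e2, e3, e4⟩ | ⟨e1, e2, e3, e4⟩ | ⟨e1, e2, e3, e4⟩ | ⟨e1, e2, e3, e4⟩ |
    ⟨e1, e2, e3, e4⟩ | ⟨e1, e2, e3, e4⟩ <;>
  simp only [e1, e2, e3, e4, and_true, and_false, or_false, false_or]
  · exact Set.ncard_pair h1
  · exact Set.ncard_pair h2
  · exact Set.ncard_pair h3
  · exact Set.ncard_pair h4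
  · exact Set.ncard_pair h5
  · exact Set.ncard_pair h6

lemma pair_of_T {n : ℕ} (a b : ZMod n) (ha : a ≠ 0) (hb : b ≠ 0) (haa : a ≠ -a) (hbb : b ≠ -b)
    (hab : a ≠ b) (hab' : a ≠ -b) (T : Set (ZMod n))
    (hTa : ∀ v, v ∈ T → v - a ∉ T) (hTb : ∀ v, v ∈ T → v - b ∉ T)
    (c1 : (ge a b ha hb {v | ¬ (v ∈ T ∨ v - b ∈ T)} {v | v ∈ T ∨ v - a ∈ T}).Connected)
    (c2 : (ge a b ha hb {v | v ∈ T ∨ v - b ∈ T} {v | ¬ (v ∈ T ∨ v - a ∈ T)}).Connected) :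
    HamDec {d | d = a ∨ d = -a ∨ d = b ∨ d = -b} 2 := by
  have nb : ∀ A B : Set (ZMod n), ∀ v, (ge a b ha hb A B).neighborSet v =
      {w | (w = v + a ∧ v ∈ A) ∨ (w = v - a ∧ v - a ∈ A) ∨ (w = v + b ∧ v ∈ B) ∨
        (w = v - b ∧ v - b ∈ B)} := by
    intro A B v
    ext w
    simp only [SimpleGraph.mem_neighborSet, ge, Set.mem_ofPred_eq]
    have e1 : v = w + a ↔ w = v - a := ⟨fun h => by rw [h]; ring, fun h => by rw [h]; ring⟩
    have e2 : v = w + b ↔ w = v - b := ⟨fun h => by rw [h]; ring, fun h => by rw [h]; ring⟩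
    rw [e1, e2]
    constructor
    · rintro (h | ⟨h, h'⟩ | h | ⟨h, h'⟩)
      · exact Or.inl h
      · subst h; tauto
      · tauto
      · subst h; tauto
    · rintro (h | ⟨h, h'⟩ | h | ⟨h, h'⟩)
      · exact Or.inl h
      · subst h; tauto
      · tauto
      · subst h; tauto
  have hba : b ≠ -a := fun h => hab' (by rw [h]; ring)
  refine ⟨Bool, inferInstance, fun i => if i then
    ge a b ha hb {v | ¬ (v ∈ T ∨ v - b ∈ T)} {v | v ∈ T ∨ v - a ∈ T} else
    ge a b ha hb {v | v ∈ T ∨ v - b ∈ T} {v | ¬ (v ∈ T ∨ v - a ∈ T)}, rfl, ?_, ?_, ?_, ?_⟩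
  · intro i v
    have t1 := hTa v
    have t2 := hTb v
    have t3 := hTb (v - a)
    have t4 := hTa (v - b)
    have e : v - b - a = v - a - b := by ring
    rw [e] at t4
    cases i
    · simp only [Bool.false_eq_true, if_false]
      rw [nb]
      apply deg_two
      · intro h; apply haa; linear_combination h
      · intro h; apply hab; linear_combination h
      · intro h; apply hab'; linear_combination h
      · intro h; apply hba; linear_combination -h
      · intro h; apply hab; linear_combination -h
      · intro h; apply hbb; linear_combination h
      · simp only [Set.mem_ofPred_eq, e]
        by_cases v ∈ T <;> by_cases v - a ∈ T <;> by_cases v - b ∈ T <;>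
          by_cases v - a - b ∈ T <;> simp_all
    · simp only [if_true]
      rw [nb]
      apply deg_two
      · intro h; apply haa; linear_combination h
      · intro h; apply hab; linear_combination h
      · intro h; apply hab'; linear_combination h
      · intro h; apply hba; linear_combination -h
      · intro h; apply hab; linear_combination -h
      · intro h; apply hbb; linear_combination h
      · simp only [Set.mem_ofPred_eq, e]
        by_cases v ∈ T <;> by_cases v - a ∈ T <;> by_cases v - b ∈ T <;>
          by_cases v - a - b ∈ T <;> simp_all
  · intro i
    cases i
    · simpa using c2
    · simpa using c1
  · intro i x y h
    have : ∀ A B : Set (ZMod n), (ge a b ha hb A B).Adj x y →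
        y - x ∈ {d | d = a ∨ d = -a ∨ d = b ∨ d = -b} := by
      rintro A B (⟨h, -⟩ | ⟨h, -⟩ | ⟨h, -⟩ | ⟨h, -⟩) <;> subst h <;> simp
    cases i
    · exact this _ _ h
    · exact this _ _ h
  · intro x y h
    have e1 : y = x + a ↔ y - x = a :=
      ⟨fun h => by rw [h]; ring, fun h => by rw [← h]; ring⟩
    have e2 : x = y + a ↔ y - x = -a :=
      ⟨fun h => by rw [h]; ring, fun h => by linear_combination -h⟩
    have e3 : y = x + b ↔ y - x = b :=
      ⟨fun h => by rw [h]; ring, fun h => by rw [← h]; ring⟩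
    have e4 : x = y + b ↔ y - x = -b :=
      ⟨fun h => by rw [h]; ring, fun h => by linear_combination -h⟩
    have key : ∀ A B : Set (ZMod n), ((ge a b ha hb A B).Adj x y ∧ ¬ (ge a b ha hb Aᶜ Bᶜ).Adj x y) ∨
        (¬ (ge a b ha hb A B).Adj x y ∧ (ge a b ha hb Aᶜ Bᶜ).Adj x y) := by
      intro A B
      simp only [ge, Set.mem_compl_iff, e1, e2, e3, e4]
      have n1 : -a ≠ a := haa.symm
      have n2 : -b ≠ b := hbb.symm
      have n3 : -a ≠ -b := fun h => hab (neg_injective h)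
      have n4 : -a ≠ b := hba.symm
      have n5 : -b ≠ a := hab'.symm
      have n6 : b ≠ a := hab.symm
      rcases h with h | h | h | h <;> rw [h]
      · by_cases x ∈ A <;> simp_all
      · by_cases y ∈ A <;> simp_all
      · by_cases x ∈ B <;> simp_all
      · have n7 := n3.symm
        by_cases y ∈ B <;> simp_all
    have := key {v | v ∈ T ∨ v - b ∈ T} {v | ¬ (v ∈ T ∨ v - a ∈ T)}
    have e5 : ({v | v ∈ T ∨ v - b ∈ T} : Set (ZMod n))ᶜ = {v | ¬ (v ∈ T ∨ v - b ∈ T)} := rfl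
    have e6 : ({v | ¬ (v ∈ T ∨ v - a ∈ T)} : Set (ZMod n))ᶜ = {v | v ∈ T ∨ v - a ∈ T} := by
      ext v; simp only [Set.mem_compl_iff, Set.mem_ofPred_eq, not_not]
    rw [e5, e6] at this
    rcases this with ⟨h1, h2⟩ | ⟨h1, h2⟩
    · refine ⟨false, by simpa using h1, ?_⟩
      intro i hi
      cases i
      · rfl
      · exact absurd hi h2
    · refine ⟨true, by simpa using h2, ?_⟩
      intro i hi
      cases i
      · exact absurd hi h1
      · rfl

lemma hamDec_unit {n : ℕ} (u : ZMod n) (hu : u ≠ -u) (hg : ∀ v : ZMod n, ∃ i : ℕ, v = i * u) :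
    HamDec {d | d = u ∨ d = -u} 1 := by
  have hu0 : u ≠ 0 := fun h => hu (by simp [h])
  refine ⟨Unit, inferInstance, fun _ => ge u u hu0 hu0 Set.univ ∅, rfl, ?_, ?_, ?_, ?_⟩
  · intro _ v
    have : (ge u u hu0 hu0 Set.univ ∅).neighborSet v = {v + u, v - u} := by
      ext w
      simp only [SimpleGraph.mem_neighborSet, ge, Set.mem_univ, and_true, Set.mem_empty_iff_false,
        and_false, or_false, Set.mem_insert_iff, Set.mem_singleton_iff, eq_sub_iff_add_eq]
      rw [eq_comm (a := v)]
    rw [this, Set.ncard_pair]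
    intro h; apply hu; linear_combination h
  · intro _
    have : ∀ i : ℕ, (ge u u hu0 hu0 Set.univ ∅).Reachable 0 (i * u) := by
      intro i
      induction i with
      | zero => simp
      | succ i ih =>
        refine ih.trans (SimpleGraph.Adj.reachable (Or.inl ⟨?_, trivial⟩))
        push_cast; ring
    have h0 : ∀ v, (ge u u hu0 hu0 Set.univ ∅).Reachable 0 v := fun v => by
      obtain ⟨i, rfl⟩ := hg v
      exact this i
    exact ⟨fun x y => (h0 x).symm.trans (h0 y)⟩
  · rintro _ x y (⟨h, -⟩ | ⟨h, -⟩ | ⟨h, h'⟩ | ⟨h, h'⟩)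
    · subst h; simp
    · subst h; simp
    · exact absurd h' (by simp)
    · exact absurd h' (by simp)
  · rintro x y (h | h)
    · exact ⟨(), Or.inl ⟨by rw [← h]; ring, trivial⟩, fun _ _ => rfl⟩
    · exact ⟨(), Or.inr (Or.inl ⟨by linear_combination -h, trivial⟩), fun _ _ => rfl⟩

end HWaux
namespace HWaux

/-- multisets that are columns of a zero-sum array -/
def Good (M : Multiset ℤ) : Prop := ∃ R : Multiset (ℤ × ℤ × ℤ),
  R.map (fun r => r.1) = M ∧ R.map (fun r => r.2.1) = M ∧ R.map (fun r => r.2.2) = M ∧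
    ∀ r ∈ R, r.1 + r.2.1 + r.2.2 = 0

/-- plus-minus one to l -/
def P (l : ℕ) : Multiset ℤ := ∑ i ∈ Finset.range l, ({(i : ℤ) + 1} + {-((i : ℤ) + 1)})

def T1 (A j : ℕ) : Multiset ℤ := {(j : ℤ) + 1} + {(A : ℤ) + j + 1} + {-((A : ℤ) + 2 * j + 2)}

def T2 (A j : ℕ) : Multiset ℤ :=
  {-((A : ℤ) - j)} + {2 * (A : ℤ) + j + 1} + {-((A : ℤ) + 2 * j + 1)}

lemma good_zero : Good 0 := ⟨0, by simp⟩

lemma good_add {M N : Multiset ℤ} (hM : Good M) (hN : Good N) : Good (M + N) := by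
  obtain ⟨R, h1, h2, h3, h4⟩ := hM
  obtain ⟨R', h1', h2', h3', h4'⟩ := hN
  refine ⟨R + R', by simp [h1, h1'], by simp [h2, h2'], by simp [h3, h3'], ?_⟩
  intro r hr
  rcases Multiset.mem_add.1 hr with h | h
  · exact h4 r h
  · exact h4' r h

lemma good_tri {x y z : ℤ} (h : x + y + z = 0) : Good ({x} + {y} + {z}) := by
  refine ⟨{(x, y, z)} + {(y, z, x)} + {(z, x, y)}, ?_, ?_, ?_, ?_⟩
  · simp only [Multiset.map_add, Multiset.map_singleton]
  · simp only [Multiset.map_add, Multiset.map_singleton]; abel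
  · simp only [Multiset.map_add, Multiset.map_singleton]; abel
  · intro r hr
    simp only [Multiset.mem_add, Multiset.mem_singleton] at hr
    rcases hr with (rfl | rfl) | rfl <;> simp only <;> linarith

lemma good_sum (T : ℕ → Multiset ℤ) (hT : ∀ j, Good (T j)) (s : Finset ℕ) :
    Good (∑ j ∈ s, T j) := by
  classical
  induction s using Finset.induction_on with
  | empty => simpa using good_zero
  | insert a s ha ih => rw [Finset.sum_insert ha]; exact good_add (hT a) ih

lemma tri_congr {x y z x' y' z' : ℤ} (h1 : x = x') (h2 : y = y') (h3 : z = z') :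
    ({x} + {y} + {z} : Multiset ℤ) = {x'} + {y'} + {z'} := by rw [h1, h2, h3]

lemma sum_two {M : Type*} [AddCommMonoid M] (g : ℕ → M) (A : ℕ) :
    ∑ i ∈ Finset.range (A + A), g i = ∑ j ∈ Finset.range A, (g (2 * j) + g (2 * j + 1)) := by
  induction A with
  | zero => simp
  | succ A ih =>
    rw [Finset.sum_range_succ, ← ih, show A + 1 + (A + 1) = A + A + 1 + 1 by ring,
      Finset.sum_range_succ, Finset.sum_range_succ, two_mul, add_assoc]

lemma P_eq (A : ℕ) : P (3 * A) = ∑ j ∈ Finset.range A, T1 A j + ∑ j ∈ Finset.range A, T2 A j := by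
  have e : 3 * A = A + (A + A) := by ring
  have h1 : ∑ i ∈ Finset.range (3 * A), ({(i : ℤ) + 1} : Multiset ℤ) =
      ∑ j ∈ Finset.range A, {(j : ℤ) + 1} + ∑ j ∈ Finset.range A, {(A : ℤ) + j + 1} +
      ∑ j ∈ Finset.range A, {2 * (A : ℤ) + j + 1} := by
    rw [e, Finset.sum_range_add, Finset.sum_range_add, add_assoc]
    congr 2
    apply Finset.sum_congr rfl; intros; congr 1; push_cast; ring
  have h2 : ∑ i ∈ Finset.range (3 * A), ({-((i : ℤ) + 1)} : Multiset ℤ) =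
      ∑ j ∈ Finset.range A, {-((A : ℤ) - j)} + ∑ j ∈ Finset.range A,
      ({-((A : ℤ) + 2 * j + 1)} + {-((A : ℤ) + 2 * j + 2)}) := by
    rw [e, Finset.sum_range_add, sum_two, ← Finset.sum_range_reflect]
    congr 1
    · apply Finset.sum_congr rfl
      intro j hj
      have := Finset.mem_range.1 hj
      congr 1; omega
  rw [P, Finset.sum_add_distrib, h1, h2]
  simp only [T1, T2, Finset.sum_add_distrib]
  abel

lemma good_T1 (A j : ℕ) : Good (T1 A j) := good_tri (by ring)
lemma good_T2 (A j : ℕ) : Good (T2 A j) := good_tri (by ring)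

lemma good_rem (A : ℕ) (J1 J2 : Finset ℕ) (ex : Multiset ℤ) (h1 : J1 ⊆ Finset.range A)
    (h2 : J2 ⊆ Finset.range A)
    (h : Good (∑ j ∈ J1, T1 A j + ∑ j ∈ J2, T2 A j + ex)) : Good (P (3 * A) + ex) := by
  rw [P_eq, ← Finset.sum_sdiff h1, ← Finset.sum_sdiff h2]
  have := good_add (good_add (good_sum _ (good_T1 A) (Finset.range A \ J1))
    (good_sum _ (good_T2 A) (Finset.range A \ J2))) h
  convert this using 1
  abel

lemma P_succ (l : ℕ) : P (l + 1) = P l + ({(l : ℤ) + 1} + {-((l : ℤ) + 1)}) := by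
  rw [P, Finset.sum_range_succ]; rfl

lemma P_succ' (l : ℕ) (c : ℤ) (hc : c = l + 1) : P (l + 1) = P l + ({c} + {-c}) := by
  rw [P_succ, hc]

end HWaux
namespace HWaux

lemma goodAW (b : ℤ) : Good (({1} + {2*b+1} + {-(2*b+2)}) + ({2*b} + {4*b} + {-(6*b)}) + ({b} + {3*b} + {-(4*b)}) + ({-(2*b)} + {4*b+1} + {-(2*b+1)}) + ({-(b+1)} + {5*b} + {-(4*b-1)}) + ({6*b+1} + {-(6*b+1)})) := by
  refine ⟨{(-(6*b+1), 2*b, 4*b+1)} + {(-(6*b), 5*b, b)} + {(-(4*b), b, 3*b)} + {(-(4*b-1), 6*b+1, -(2*b+2))} + {(-(2*b+2), 2*b+1, 1)} + {(-(2*b+1), -(4*b), 6*b+1)} + {(-(2*b), 4*b+1, -(2*b+1))} + {(-(b+1), -(4*b-1), 5*b)} + {(1, -(2*b+2), 2*b+1)} + {(b, 1, -(b+1))} + {(2*b, -(6*b), 4*b)} + {(2*b+1, 4*b, -(6*b+1))} + {(3*b, 3*b, -(6*b))} + {(4*b, -(2*b), -(2*b))} + {(4*b+1, -(6*b+1), 2*b)}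 + {(5*b, -(b+1), -(4*b-1))} + {(6*b+1, -(2*b+1), -(4*b))}, ?_, ?_, ?_, ?_⟩
  · simp only [Multiset.map_add, Multiset.map_singleton]; abel
  · simp only [Multiset.map_add, Multiset.map_singleton]; abel
  · simp only [Multiset.map_add, Multiset.map_singleton]; abel
  · intro r hr
    simp only [Multiset.mem_add, Multiset.mem_singleton] at hr
    rcases hr with (((((((((((((((rfl | rfl) | rfl) | rfl) | rfl) | rfl) | rfl) | rfl) | rfl) | rfl) | rfl) | rfl) | rfl) | rfl) | rfl) | rfl) | rfl <;> ring

lemma goodA (B : ℕ) (hB : 2 ≤ B) : Good (P (3 * (2*B)) + (({6*(B:ℤ)+1} + {-(6*(B:ℤ)+1)}))) := by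
  refine good_rem (2*B) ({0, 2*B-1, B-1} : Finset ℕ) ({0, B-1} : Finset ℕ) _ ?_ ?_ ?_
  · intro x hx
    simp only [Finset.mem_insert, Finset.mem_singleton] at hx
    simp only [Finset.mem_range]; omega
  · intro x hx
    simp only [Finset.mem_insert, Finset.mem_singleton] at hx
    simp only [Finset.mem_range]; omega
  · have h := goodAW (B : ℤ)
    rw [Finset.sum_insert (by simp only [Finset.mem_insert, Finset.mem_singleton]; omega), Finset.sum_insert (by simp only [Finset.mem_insert, Finset.mem_singleton]; omega), Finset.sum_singleton, Finset.sum_insert (by simp only [Finset.mem_insert, Finset.mem_singleton]; omega), Finset.sum_singleton]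
    rw [show T1 (2*B) (0) = {1} + {2*(B:ℤ)+1} + {-(2*(B:ℤ)+2)} from tri_congr (by omega) (by omega) (by omega)]
    rw [show T1 (2*B) (2*B-1) = {2*(B:ℤ)} + {4*(B:ℤ)} + {-(6*(B:ℤ))} from tri_congr (by omega) (by omega) (by omega)]
    rw [show T1 (2*B) (B-1) = {(B:ℤ)} + {3*(B:ℤ)} + {-(4*(B:ℤ))} from tri_congr (by omega) (by omega) (by omega)]
    rw [show T2 (2*B) (0) = {-(2*(B:ℤ))} + {4*(B:ℤ)+1} + {-(2*(B:ℤ)+1)} from tri_congr (by omega) (by omega) (by omega)]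
    rw [show T2 (2*B) (B-1) = {-((B:ℤ)+1)} + {5*(B:ℤ)} + {-(4*(B:ℤ)-1)} from tri_congr (by omega) (by omega) (by omega)]
    convert h using 1; abel

lemma goodBW (b : ℤ) : Good (({1} + {2*b+1} + {-(2*b+2)}) + ({b} + {3*b} + {-(4*b)}) + ({b+1} + {3*b+1} + {-(4*b+2)}) + ({-(2*b)} + {4*b+1} + {-(2*b+1)}) + ({6*b+1} + {-(6*b+1)}) + ({6*b+2} + {-(6*b+2)})) := by
  refine ⟨{(-(6*b+2), 1, 6*b+1)} + {(-(6*b+1), 3*b, 3*b+1)} + {(-(4*b+2), 2*b+1, 2*b+1)} + {(-(4*b), -(2*b+2), 6*b+2)} + {(-(2*b+2), b+1, b+1)} + {(-(2*b+1), 4*b+1, -(2*b))} + {(-(2*b), 6*b+2, -(4*b+2))} + {(1, 6*b+1, -(6*b+2))} + {(b, -(2*b), b)} + {(b+1, b, -(2*b+1))} + {(2*b+1, -(6*b+2), 4*b+1)} + {(3*b, 3*b+1, -(6*b+1))} + {(3*b+1, -(6*b+1), 3*b)} + {(4*b+1, -(4*b+2), 1)} + {(6*b+1, -(2*b+1), -(4*b))}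 + {(6*b+2, -(4*b), -(2*b+2))}, ?_, ?_, ?_, ?_⟩
  · simp only [Multiset.map_add, Multiset.map_singleton]; abel
  · simp only [Multiset.map_add, Multiset.map_singleton]; abel
  · simp only [Multiset.map_add, Multiset.map_singleton]; abel
  · intro r hr
    simp only [Multiset.mem_add, Multiset.mem_singleton] at hr
    rcases hr with ((((((((((((((rfl | rfl) | rfl) | rfl) | rfl) | rfl) | rfl) | rfl) | rfl) | rfl) | rfl) | rfl) | rfl) | rfl) | rfl) | rfl <;> ring

lemma goodB (B : ℕ) (hB : 2 ≤ B) : Good (P (3 * (2*B)) + (({6*(B:ℤ)+1} + {-(6*(B:ℤ)+1)}) + ({6*(B:ℤ)+2} + {-(6*(B:ℤ)+2)}))) := by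
  refine good_rem (2*B) ({0, B-1, B} : Finset ℕ) ({0} : Finset ℕ) _ ?_ ?_ ?_
  · intro x hx
    simp only [Finset.mem_insert, Finset.mem_singleton] at hx
    simp only [Finset.mem_range]; omega
  · intro x hx
    simp only [Finset.mem_insert, Finset.mem_singleton] at hx
    simp only [Finset.mem_range]; omega
  · have h := goodBW (B : ℤ)
    rw [Finset.sum_insert (by simp only [Finset.mem_insert, Finset.mem_singleton]; omega), Finset.sum_insert (by simp only [Finset.mem_insert, Finset.mem_singleton]; omega), Finset.sum_singleton, Finset.sum_singleton]
    rw [show T1 (2*B) (0) = {1} + {2*(B:ℤ)+1} + {-(2*(B:ℤ)+2)} from tri_congr (by omega) (by omega) (by omega)]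
    rw [show T1 (2*B) (B-1) = {(B:ℤ)} + {3*(B:ℤ)} + {-(4*(B:ℤ))} from tri_congr (by omega) (by omega) (by omega)]
    rw [show T1 (2*B) (B) = {(B:ℤ)+1} + {3*(B:ℤ)+1} + {-(4*(B:ℤ)+2)} from tri_congr (by omega) (by omega) (by omega)]
    rw [show T2 (2*B) (0) = {-(2*(B:ℤ))} + {4*(B:ℤ)+1} + {-(2*(B:ℤ)+1)} from tri_congr (by omega) (by omega) (by omega)]
    convert h using 1; abel

lemma goodCW (b : ℤ) : Good (({1} + {2*b+2} + {-(2*b+3)}) + ({2*b+1} + {4*b+2} + {-(6*b+3)}) + ({b} + {3*b+1} + {-(4*b+1)}) + ({-(1)} + {6*b+3} + {-(6*b+2)}) + ({-(b+1)} + {5*b+3} + {-(4*b+2)}) + ({6*b+4} + {-(6*b+4)})) := by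
  refine ⟨{(-(6*b+4), 2*b+2, 4*b+2)} + {(-(6*b+3), 4*b+2, 2*b+1)} + {(-(6*b+2), -(1), 6*b+3)} + {(-(4*b+2), -(b+1), 5*b+3)} + {(-(4*b+1), b, 3*b+1)} + {(-(2*b+3), 6*b+4, -(4*b+1))} + {(-(b+1), 1, b)} + {(-(1), -(6*b+3), 6*b+4)} + {(1, 6*b+3, -(6*b+4))} + {(b, 5*b+3, -(6*b+3))} + {(2*b+1, 2*b+1, -(4*b+2))} + {(2*b+2, -(2*b+3), 1)} + {(3*b+1, 3*b+1, -(6*b+2))} + {(4*b+2, -(6*b+4), 2*b+2)} + {(5*b+3, -(4*b+2), -(b+1))} + {(6*b+3, -(6*b+2), -(1))} + {(6*b+4, -(4*b+1), -(2*b+3))}, ?_, ?_, ?_, ?_⟩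
  · simp only [Multiset.map_add, Multiset.map_singleton]; abel
  · simp only [Multiset.map_add, Multiset.map_singleton]; abel
  · simp only [Multiset.map_add, Multiset.map_singleton]; abel
  · intro r hr
    simp only [Multiset.mem_add, Multiset.mem_singleton] at hr
    rcases hr with (((((((((((((((rfl | rfl) | rfl) | rfl) | rfl) | rfl) | rfl) | rfl) | rfl) | rfl) | rfl) | rfl) | rfl) | rfl) | rfl) | rfl) | rfl <;> ring

lemma goodC (B : ℕ) (hB : 2 ≤ B) : Good (P (3 * (2*B+1)) + (({6*(B:ℤ)+4} + {-(6*(B:ℤ)+4)}))) := by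
  refine good_rem (2*B+1) ({0, 2*B, B-1} : Finset ℕ) ({2*B, B} : Finset ℕ) _ ?_ ?_ ?_
  · intro x hx
    simp only [Finset.mem_insert, Finset.mem_singleton] at hx
    simp only [Finset.mem_range]; omega
  · intro x hx
    simp only [Finset.mem_insert, Finset.mem_singleton] at hx
    simp only [Finset.mem_range]; omega
  · have h := goodCW (B : ℤ)
    rw [Finset.sum_insert (by simp only [Finset.mem_insert, Finset.mem_singleton]; omega), Finset.sum_insert (by simp only [Finset.mem_insert, Finset.mem_singleton]; omega), Finset.sum_singleton, Finset.sum_insert (by simp only [Finset.mem_insert, Finset.mem_singleton]; omega), Finset.sum_singleton]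
    rw [show T1 (2*B+1) (0) = {1} + {2*(B:ℤ)+2} + {-(2*(B:ℤ)+3)} from tri_congr (by omega) (by omega) (by omega)]
    rw [show T1 (2*B+1) (2*B) = {2*(B:ℤ)+1} + {4*(B:ℤ)+2} + {-(6*(B:ℤ)+3)} from tri_congr (by omega) (by omega) (by omega)]
    rw [show T1 (2*B+1) (B-1) = {(B:ℤ)} + {3*(B:ℤ)+1} + {-(4*(B:ℤ)+1)} from tri_congr (by omega) (by omega) (by omega)]
    rw [show T2 (2*B+1) (2*B) = {-(1)} + {6*(B:ℤ)+3} + {-(6*(B:ℤ)+2)} from tri_congr (by omega) (by omega) (by omega)]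
    rw [show T2 (2*B+1) (B) = {-((B:ℤ)+1)} + {5*(B:ℤ)+3} + {-(4*(B:ℤ)+2)} from tri_congr (by omega) (by omega) (by omega)]
    convert h using 1; abel

lemma goodDW (b : ℤ) : Good (({1} + {2*b+2} + {-(2*b+3)}) + ({b+1} + {3*b+2} + {-(4*b+3)}) + ({-(2*b+1)} + {4*b+3} + {-(2*b+2)}) + ({-(b+1)} + {5*b+3} + {-(4*b+2)}) + ({6*b+4} + {-(6*b+4)}) + ({6*b+5} + {-(6*b+5)})) := by
  refine ⟨{(-(6*b+5), 1, 6*b+4)} + {(-(6*b+4), b+1, 5*b+3)} + {(-(4*b+3), 6*b+5, -(2*b+2))} + {(-(4*b+2), -(2*b+3), 6*b+5)} + {(-(2*b+3), 2*b+2, 1)} + {(-(2*b+2), 4*b+3, -(2*b+1))} + {(-(2*b+1), -(2*b+2), 4*b+3)} + {(-(b+1), 5*b+3, -(4*b+2))} + {(1, 6*b+4, -(6*b+5))} + {(b+1, -(4*b+3), 3*b+2)} + {(2*b+2, -(b+1), -(b+1))} + {(3*b+2, 3*b+2, -(6*b+4))} + {(4*b+3, -(6*b+5), 2*b+2)} +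 {(5*b+3, -(6*b+4), b+1)} + {(6*b+4, -(2*b+1), -(4*b+3))} + {(6*b+5, -(4*b+2), -(2*b+3))}, ?_, ?_, ?_, ?_⟩
  · simp only [Multiset.map_add, Multiset.map_singleton]; abel
  · simp only [Multiset.map_add, Multiset.map_singleton]; abel
  · simp only [Multiset.map_add, Multiset.map_singleton]; abel
  · intro r hr
    simp only [Multiset.mem_add, Multiset.mem_singleton] at hr
    rcases hr with ((((((((((((((rfl | rfl) | rfl) | rfl) | rfl) | rfl) | rfl) | rfl) | rfl) | rfl) | rfl) | rfl) | rfl) | rfl) | rfl) | rfl <;> ring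

lemma goodD (B : ℕ) (hB : 1 ≤ B) : Good (P (3 * (2*B+1)) + (({6*(B:ℤ)+4} + {-(6*(B:ℤ)+4)}) + ({6*(B:ℤ)+5} + {-(6*(B:ℤ)+5)}))) := by
  refine good_rem (2*B+1) ({0, B} : Finset ℕ) ({0, B} : Finset ℕ) _ ?_ ?_ ?_
  · intro x hx
    simp only [Finset.mem_insert, Finset.mem_singleton] at hx
    simp only [Finset.mem_range]; omega
  · intro x hx
    simp only [Finset.mem_insert, Finset.mem_singleton] at hx
    simp only [Finset.mem_range]; omega
  · have h := goodDW (B : ℤ)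
    rw [Finset.sum_insert (by simp only [Finset.mem_insert, Finset.mem_singleton]; omega), Finset.sum_singleton, Finset.sum_insert (by simp only [Finset.mem_insert, Finset.mem_singleton]; omega), Finset.sum_singleton]
    rw [show T1 (2*B+1) (0) = {1} + {2*(B:ℤ)+2} + {-(2*(B:ℤ)+3)} from tri_congr (by omega) (by omega) (by omega)]
    rw [show T1 (2*B+1) (B) = {(B:ℤ)+1} + {3*(B:ℤ)+2} + {-(4*(B:ℤ)+3)} from tri_congr (by omega) (by omega) (by omega)]
    rw [show T2 (2*B+1) (0) = {-(2*(B:ℤ)+1)} + {4*(B:ℤ)+3} + {-(2*(B:ℤ)+2)} from tri_congr (by omega) (by omega) (by omega)]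
    rw [show T2 (2*B+1) (B) = {-((B:ℤ)+1)} + {5*(B:ℤ)+3} + {-(4*(B:ℤ)+2)} from tri_congr (by omega) (by omega) (by omega)]
    convert h using 1; abel

end HWaux
namespace HWaux

lemma good4 : Good (P 4) :=
  ⟨{(-4, 1, 3), (-3, -1, 4), (-2, 3, -1), (-1, 4, -3), (3, -4, 1), (1, -3, 2), (2, 2, -4), (4, -2, -2)}, by decide, by decide, by decide, by decide⟩

lemma good5 : Good (P 5) :=
  ⟨{(-5, 1, 4), (-4, -1, 5), (-3, 2, 1), (3, -5, 2), (2, 3, -5), (1, -4, 3), (-2, 4, -2), (-1, 5, -4), (4, -3, -1), (5, -2, -3)}, by decide, by decide, by decide, by decide⟩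

lemma good7 : Good (P 7) :=
  ⟨{(-7, 1, 6), (-6, -1, 7), (-5, 2, 3), (-4, 3, 1), (4, -6, 2), (2, -7, 5), (3, 4, -7), (1, -5, 4), (-3, 5, -2), (-2, 6, -4), (-1, 7, -6), (6, -3, -3), (5, -4, -1), (7, -2, -5)}, by decide, by decide, by decide, by decide⟩

lemma good8 : Good (P 8) :=
  ⟨{(-8, 1, 7), (-7, -1, 8), (-6, 2, 4), (-5, 3, 2), (-4, -2, 6), (4, -7, 3), (5, -6, 1), (2, 4, -6), (1, 7, -8), (3, -8, 5), (-2, 6, -4), (-1, 8, -7), (-3, 5, -2), (7, -4, -3), (6, -5, -1), (8, -3, -5)}, by decide, by decide, by decide, by decide⟩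

lemma good10 : Good (P 10) :=
  ⟨{(-10, 1, 9), (-9, -1, 10), (-8, 2, 6), (-7, 3, 4), (-6, -2, 8), (-5, 4, 1), (6, -9, 3), (4, -6, 2), (7, -5, -2), (5, -10, 5), (3, 5, -8), (2, 7, -9), (-1, 6, -5), (-2, 8, -6), (-4, -3, 7), (-3, 10, -7), (1, 9, -10), (9, -8, -1), (8, -4, -4), (10, -7, -3)}, by decide, by decide, by decide, by decide⟩

end HWaux
namespace HWaux

lemma good_all (l : ℕ) (h1 : l ≠ 1) (h2 : l ≠ 2) : Good (P l) := by
  have h3 : l % 6 = 0 ∨ l % 6 = 1 ∨ l % 6 = 2 ∨ l % 6 = 3 ∨ l % 6 = 4 ∨ l % 6 = 5 := by omega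
  have h0 : ∀ A, Good (P (3 * A)) := fun A => by
    simpa using good_rem A ∅ ∅ 0 (by simp) (by simp) (by simpa using good_zero)
  obtain ⟨B, hB⟩ : ∃ B, B = l / 6 := ⟨_, rfl⟩
  rcases h3 with h | h | h | h | h | h
  · have := h0 (l / 3); rwa [show 3 * (l / 3) = l by omega] at this
  · by_cases hb : B = 1
    · obtain rfl : l = 7 := by omega
      exact good7
    have := goodA B (by omega)
    obtain rfl : l = 3 * (2 * B) + 1 := by omega
    rw [P_succ' _ (6 * B + 1) (by push_cast; ring)]
    exact this
  · by_cases hb : B = 1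
    · obtain rfl : l = 8 := by omega
      exact good8
    have := goodB B (by omega)
    obtain rfl : l = 3 * (2 * B) + 1 + 1 := by omega
    rw [P_succ' _ (6 * B + 2) (by push_cast; ring), P_succ' _ (6 * B + 1) (by push_cast; ring),
      add_assoc]
    exact this
  · have := h0 (l / 3); rwa [show 3 * (l / 3) = l by omega] at this
  · by_cases hb : B = 0
    · obtain rfl : l = 4 := by omega
      exact good4
    by_cases hb : B = 1
    · obtain rfl : l = 10 := by omega
      exact good10
    have := goodC B (by omega)
    obtain rfl : l = 3 * (2 * B + 1) + 1 := by omega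
    rw [P_succ' _ (6 * B + 4) (by push_cast; ring)]
    exact this
  · by_cases hb : B = 0
    · obtain rfl : l = 5 := by omega
      exact good5
    have := goodD B (by omega)
    obtain rfl : l = 3 * (2 * B + 1) + 1 + 1 := by omega
    rw [P_succ' _ (6 * B + 5) (by push_cast; ring), P_succ' _ (6 * B + 4) (by push_cast; ring),
      add_assoc]
    exact this

lemma mem_P (l : ℕ) (d : ℤ) : d ∈ P l ↔ d ≠ 0 ∧ |d| ≤ l := by
  induction l with
  | zero =>
    simp only [P, Finset.range_zero, Finset.sum_empty, Multiset.notMem_zero, false_iff, not_and]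
    intro h h'
    exact h (abs_nonpos_iff.1 (by simpa using h'))
  | succ l ih =>
    rw [P_succ]
    simp only [Multiset.mem_add, Multiset.mem_singleton, ih, abs_le]
    push_cast
    omega

lemma nodup_P (l : ℕ) : (P l).Nodup := by
  induction l with
  | zero => simp [P]
  | succ l ih =>
    rw [P_succ, Multiset.nodup_add]
    refine ⟨ih, ?_, ?_⟩
    · rw [Multiset.nodup_add]
      refine ⟨by simp, by simp, ?_⟩
      rw [Multiset.disjoint_left]
      intro a h1 h2
      simp only [Multiset.mem_singleton] at h1 h2
      omega
    · rw [Multiset.disjoint_left]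
      intro a h1 h2
      simp only [Multiset.mem_add, Multiset.mem_singleton] at h2
      rw [mem_P, abs_le] at h1
      omega

lemma card_P (l : ℕ) : (P l).card = 2 * l := by
  induction l with
  | zero => simp [P]
  | succ l ih => rw [P_succ]; simp only [Multiset.card_add, Multiset.card_singleton, ih]; omega

def Perf (l : ℕ) (w : Fin (2 * l) → ℤ) : Prop :=
  (∀ i, w i ≠ 0 ∧ |w i| ≤ l) ∧ ∀ d : ℤ, d ≠ 0 → |d| ≤ l → ∃! i, w i = d

lemma perf_neg {l : ℕ} {w : Fin (2 * l) → ℤ} (h : Perf l w) : Perf l (fun i => -w i) := by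
  refine ⟨fun i => ?_, fun d hd hd2 => ?_⟩
  · simpa using h.1 i
  · simpa [neg_eq_iff_eq_neg] using h.2 (-d) (by simpa using hd) (by simpa using hd2)

lemma rows (l : ℕ) (h1 : l ≠ 1) (h2 : l ≠ 2) : ∃ x y z : Fin (2 * l) → ℤ,
    Perf l x ∧ Perf l y ∧ Perf l z ∧ ∀ i, x i + y i + z i = 0 := by
  obtain ⟨R, r1, r2, r3, r4⟩ := good_all l h1 h2
  obtain ⟨L, rfl⟩ : ∃ L : List (ℤ × ℤ × ℤ), (L : Multiset (ℤ × ℤ × ℤ)) = R :=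
    ⟨R.toList, R.coe_toList⟩
  have hlen : 2 * l = L.length := by
    have := congrArg Multiset.card r1
    rw [card_P] at this
    simpa using this.symm
  have key : ∀ g : ℤ × ℤ × ℤ → ℤ, (L : Multiset (ℤ × ℤ × ℤ)).map g = P l →
      Perf l (fun i => g (L.get (i.cast hlen))) := by
    intro g hg
    have hn := nodup_P l
    rw [← hg, Multiset.map_coe, Multiset.coe_nodup] at hn
    have hinj := List.inj_on_of_nodup_map hn
    have hL : L.Nodup := hn.of_map
    refine ⟨fun i => ?_, fun d hd hd2 => ?_⟩
    · rw [← mem_P, ← hg]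
      exact Multiset.mem_map_of_mem g (by simp)
    · have hm : d ∈ P l := (mem_P l d).2 ⟨hd, hd2⟩
      rw [← hg, Multiset.mem_map] at hm
      obtain ⟨r, hr, rfl⟩ := hm
      obtain ⟨j, rfl⟩ := List.get_of_mem (Multiset.mem_coe.1 hr)
      refine ⟨j.cast hlen.symm, by simp, fun i hi => ?_⟩
      have := hinj (List.get_mem _ _) (List.get_mem _ _) hi
      have := List.nodup_iff_injective_get.1 hL this
      rw [← this]; simp
  refine ⟨_, _, _, key _ r1, key _ r2, key _ r3, fun i => r4 _ (by simp)⟩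

end HWaux
namespace HWaux

/-- the difference set for short cycles -/
def Dset (n l : ℕ) : Set (ZMod n) := {d | ∃ z : ℤ, z ≠ 0 ∧ |z| ≤ l ∧ (z : ZMod n) = d}

lemma cast_inj {n m : ℕ} (hn : n = 2 * m + 1) {z w : ℤ} (hz : |z| ≤ m) (hw : |w| ≤ m)
    (h : (z : ZMod n) = (w : ZMod n)) : z = w := by
  rw [ZMod.intCast_eq_intCast_iff_dvd_sub] at h
  have h2 : w - z = 0 := by
    apply Int.eq_zero_of_abs_lt_dvd h
    rw [abs_le] at hz hw
    rw [abs_lt]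
    subst hn
    push_cast
    constructor <;> linarith
  linarith

lemma ck_rows {k n m l : ℕ} (hk : Odd k) (hk3 : 3 ≤ k) (hn : n = 2 * m + 1) (hlm : l ≤ m)
    (h1 : l ≠ 1) (h2 : l ≠ 2) : ∃ S : Fin (2 * l) → ZMod k → ZMod n,
    (∀ i c, S i (c + 1) - S i c ∈ Dset n l) ∧
    (∀ c, ∀ d ∈ Dset n l, ∃! i, S i (c + 1) - S i c = d) := by
  obtain ⟨x, y, z, hx, hy, hz, hs⟩ := rows l h1 h2
  have : NeZero k := ⟨by omega⟩
  let s : Fin (2 * l) → ℕ → ℤ := fun i v =>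
    if v = 0 then 0 else if v = 1 then x i else if v = 2 then -z i else if Odd v then 0 else x i
  let S : Fin (2 * l) → ZMod k → ZMod n := fun i c => (s i c.val : ZMod n)
  have key : ∀ c : ZMod k, ∃ w, Perf l w ∧ ∀ i, S i (c + 1) - S i c = ((w i : ℤ) : ZMod n) := by
    intro c
    have hv := c.val_lt
    have hc : (c + 1).val = if c.val + 1 = k then 0 else c.val + 1 := by
      have e : c + 1 = ((c.val + 1 : ℕ) : ZMod k) := by
        push_cast; rw [ZMod.natCast_zmod_val]
      rw [e, ZMod.val_natCast]
      split_ifs with h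
      · rw [h, Nat.mod_self]
      · rw [Nat.mod_eq_of_lt (by omega)]
    suffices h : ∃ w, Perf l w ∧ ∀ i, s i (c + 1).val - s i c.val = w i by
      obtain ⟨w, hw, hw2⟩ := h
      refine ⟨w, hw, fun i => ?_⟩
      rw [← hw2 i]; push_cast; rfl
    rw [hc]
    generalize c.val = v at *
    obtain ⟨q, hq⟩ := hk
    rcases (show v = 0 ∨ v = 1 ∨ v = 2 ∨ 3 ≤ v by omega) with rfl | rfl | rfl | h3
    · refine ⟨x, hx, fun i => ?_⟩
      rw [if_neg (by omega)]
      simp [s]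
    · refine ⟨y, hy, fun i => ?_⟩
      rw [if_neg (by omega)]
      simp [s]
      linarith [hs i]
    · refine ⟨z, hz, fun i => ?_⟩
      split_ifs with h
      · simp [s]
      · simp [s, show Odd 3 by decide]
    · by_cases ho : Odd v
      · obtain ⟨u, hu⟩ := ho
        refine ⟨x, hx, fun i => ?_⟩
        rw [if_neg (by omega)]
        have h5 : ¬ Odd (v + 1) := by rw [Nat.odd_iff]; omega
        have h6 : Odd v := ⟨u, hu⟩
        simp only [s, h5, h6, if_true, if_false, show v ≠ 0 by omega, show v ≠ 1 by omega,
          show v ≠ 2 by omega, show v + 1 ≠ 0 by omega, show v + 1 ≠ 1 by omega,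
          show v + 1 ≠ 2 by omega]
        ring
      · refine ⟨_, perf_neg hx, fun i => ?_⟩
        have h5 : Odd (v + 1) := by rw [Nat.odd_iff]; rw [Nat.odd_iff] at ho; omega
        split_ifs with h
        · simp only [s, ho, if_true, if_false, show v ≠ 0 by omega, show v ≠ 1 by omega,
            show v ≠ 2 by omega]
          ring
        · simp only [s, h5, ho, if_true, if_false, show v ≠ 0 by omega, show v ≠ 1 by omega,
            show v ≠ 2 by omega, show v + 1 ≠ 0 by omega, show v + 1 ≠ 1 by omega,
            show v + 1 ≠ 2 by omega]
          ring
  refine ⟨S, fun i c => ?_, fun c d hd => ?_⟩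
  · obtain ⟨w, hw, hw2⟩ := key c
    exact ⟨w i, (hw.1 i).1, (hw.1 i).2, (hw2 i).symm⟩
  · obtain ⟨w, hw, hw2⟩ := key c
    obtain ⟨e, he, he2, rfl⟩ := hd
    obtain ⟨i, hi, hiu⟩ := hw.2 e he he2
    have hlm' : (l : ℤ) ≤ m := by exact_mod_cast hlm
    refine ⟨i, by simp only [hw2, hi], fun j hj => hiu j ?_⟩
    simp only [hw2] at hj
    exact cast_inj hn ((hw.1 j).2.trans hlm') (he2.trans hlm') hj

end HWaux
namespace HWaux

def vtx {n : ℕ} (a b : ZMod n) (j i : ℤ) : ZMod n := (j : ZMod n) * b + (i : ZMod n) * a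

def col (H j : ℤ) : ℤ := min j (if j % 2 = 0 then H - 3 else H - 2)

structure Setup {n : ℕ} (a b : ZMod n) (g N s H : ℤ) : Prop where
  ha : a ≠ 0
  hb : b ≠ 0
  hgo : g % 2 = 1
  hH : 3 ≤ H
  hHo : H % 2 = 1
  hHg : H ≤ g
  hHN : H ≤ N
  Na : (N : ZMod n) * a = 0
  wrap : (g : ZMod n) * b = (s : ZMod n) * a
  uniq : ∀ j i j' i' : ℤ, 0 ≤ j → j < g → 0 ≤ j' → j' < g → vtx a b j i = vtx a b j' i' →
    j = j' ∧ N ∣ i - i'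
  surj : ∀ v, ∃ j i : ℤ, 0 ≤ j ∧ j < g ∧ v = vtx a b j i

lemma col_nonneg {H j : ℤ} (hH : 3 ≤ H) (hj : 0 ≤ j) : 0 ≤ col H j := by
  unfold col; split_ifs <;> omega
lemma col_le {H j : ℤ} : col H j ≤ H - 2 := by
  unfold col; split_ifs <;> omega
lemma col_par {H j : ℤ} (hH : H % 2 = 1) : col H j % 2 = j % 2 := by
  unfold col; split_ifs <;> omega
lemma col_small {H j : ℤ} (hH : H % 2 = 1) (h : j ≤ H - 2) : col H j = j := by
  unfold col; split_ifs <;> omega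
lemma col_even {H j : ℤ} (h : H - 3 ≤ j) (hj : j % 2 = 0) : col H j = H - 3 := by
  unfold col; split_ifs; omega
lemma col_odd {H j : ℤ} (h : H - 2 ≤ j) (hj : j % 2 = 1) : col H j = H - 2 := by
  unfold col; split_ifs <;> omega

def TT {n : ℕ} (a b : ZMod n) (g H : ℤ) : Set (ZMod n) :=
  {v | ∃ j : ℤ, 0 ≤ j ∧ j ≤ g - 2 ∧ v = vtx a b j (col H j)}

lemma ndvd {N x y : ℤ} (h : x ≠ y) (h1 : x - y < N) (h2 : y - x < N) : ¬ N ∣ x - y := by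
  intro hd
  have := Int.eq_zero_of_abs_lt_dvd hd (abs_lt.2 ⟨by linarith, h1⟩)
  omega

section
variable {n : ℕ} {a b : ZMod n} {g N s H : ℤ}

lemma Setup.per (S : Setup a b g N s H) {j i i' : ℤ} (h : N ∣ i - i') :
    vtx a b j i = vtx a b j i' := by
  obtain ⟨q, hq⟩ := h
  have : i = i' + N * q := by linarith
  subst this
  have := S.Na
  simp only [vtx]; push_cast
  linear_combination (q : ZMod n) * this

lemma vtx_a (j i : ℤ) : vtx a b j (i + 1) = vtx a b j i + a := by
  simp only [vtx]; push_cast; ring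
lemma vtx_b (j i : ℤ) : vtx a b (j + 1) i = vtx a b j i + b := by
  simp only [vtx]; push_cast; ring
lemma vtx_a' (j i : ℤ) : vtx a b j i - a = vtx a b j (i - 1) := by
  simp only [vtx]; push_cast; ring
lemma vtx_b' (j i : ℤ) : vtx a b j i - b = vtx a b (j - 1) i := by
  simp only [vtx]; push_cast; ring
lemma Setup.wr (S : Setup a b g N s H) (i : ℤ) : vtx a b 0 (i + s) = vtx a b (g - 1) i + b := by
  have := S.wrap
  simp only [vtx]; push_cast; linear_combination -this

lemma Setup.memT (S : Setup a b g N s H) {j i : ℤ} (h0 : 0 ≤ j) (h1 : j < g) :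
    vtx a b j i ∈ TT a b g H ↔ j ≤ g - 2 ∧ N ∣ i - col H j := by
  constructor
  · rintro ⟨j', h0', h1', h⟩
    obtain ⟨rfl, h2⟩ := S.uniq _ _ _ _ h0 h1 h0' (by omega) h
    exact ⟨h1', h2⟩
  · rintro ⟨h2, h3⟩
    exact ⟨j, h0, h2, S.per h3⟩

lemma Setup.memQ (S : Setup a b g N s H) {j i : ℤ} (h0 : 0 ≤ j) (h1 : j < g) :
    (vtx a b j i ∈ TT a b g H ∨ vtx a b j i - a ∈ TT a b g H) ↔
      j ≤ g - 2 ∧ (N ∣ i - col H j ∨ N ∣ i - 1 - col H j) := by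
  rw [vtx_a', S.memT h0 h1, S.memT h0 h1]; tauto

lemma Setup.memP0 (S : Setup a b g N s H) {i : ℤ} :
    (vtx a b 0 i ∈ TT a b g H ∨ vtx a b 0 i - b ∈ TT a b g H) ↔ N ∣ i := by
  have h1 := S.hH
  have h2 := S.hHg
  have : vtx a b 0 i - b = vtx a b (g - 1) (i - s) := by
    have := S.wr (i - s)
    rw [sub_add_cancel] at this
    rw [this]; ring
  rw [this, S.memT (by omega) (by omega), S.memT (by omega) (by omega),
    col_small S.hHo (by omega)]
  simp only [sub_zero]
  constructor
  · rintro (h | h)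
    · exact h.2
    · omega
  · intro h; exact Or.inl ⟨by omega, h⟩

lemma Setup.memP (S : Setup a b g N s H) {j i : ℤ} (h0 : 1 ≤ j) (h1 : j < g) :
    (vtx a b j i ∈ TT a b g H ∨ vtx a b j i - b ∈ TT a b g H) ↔
      (j ≤ g - 2 ∧ N ∣ i - col H j) ∨ N ∣ i - col H (j - 1) := by
  rw [vtx_b', S.memT (by omega) h1, S.memT (by omega) (by omega)]
  have : j - 1 ≤ g - 2 := by omega
  tauto

lemma Setup.disja (S : Setup a b g N s H) : ∀ v, v ∈ TT a b g H → v - a ∉ TT a b g H := by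
  rintro v ⟨j, h0, h1, rfl⟩ h
  rw [vtx_a', S.memT h0 (by omega)] at h
  have h2 := S.hH
  have h3 := S.hHN
  exact ndvd (by omega) (by omega) (by omega) h.2

lemma Setup.disjb (S : Setup a b g N s H) : ∀ v, v ∈ TT a b g H → v - b ∉ TT a b g H := by
  rintro v ⟨j, h0, h1, rfl⟩ h
  have h2 := S.hH
  have h3 := S.hHN
  have h4 := S.hHg
  rcases h0.lt_or_eq with h5 | h5
  · rw [vtx_b', S.memT (by omega) (by omega)] at h
    have c1 := col_nonneg h2 h0
    have c2 := col_nonneg h2 (show 0 ≤ j - 1 by omega)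
    have c3 : col H j ≤ H - 2 := col_le
    have c4 : col H (j - 1) ≤ H - 2 := col_le
    have c5 : col H j % 2 = j % 2 := col_par S.hHo
    have c6 : col H (j - 1) % 2 = (j - 1) % 2 := col_par S.hHo
    exact ndvd (by omega) (by omega) (by omega) h.2
  · subst h5
    have e : vtx a b 0 (col H 0) - b = vtx a b (g - 1) (col H 0 - s) := by
      have := S.wr (col H 0 - s)
      rw [sub_add_cancel] at this
      rw [this]; ring
    rw [e, S.memT (by omega) (by omega)] at h
    omega

lemma path_reach {V : Type*} (G : SimpleGraph V) (X : ℤ → V) (p : ℤ) (m : ℕ)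
    (h : ∀ i, p ≤ i → i < p + m → G.Reachable (X i) (X (i + 1))) :
    G.Reachable (X p) (X (p + m)) := by
  induction m with
  | zero => simp
  | succ m ih =>
    have h1 := ih (fun i h1 h2 => h i h1 (by push_cast; omega))
    have h2 := h (p + m) (by omega) (by push_cast; omega)
    push_cast
    rw [← add_assoc]
    exact h1.trans h2

lemma path_reach' {V : Type*} (G : SimpleGraph V) (X : ℤ → V) (p q : ℤ) (hpq : p ≤ q)
    (h : ∀ i, p ≤ i → i < q → G.Reachable (X i) (X (i + 1))) :
    G.Reachable (X p) (X q) := by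
  have := path_reach G X p (q - p).toNat (fun i h1 h2 => h i h1 (by omega))
  rwa [show p + ((q - p).toNat : ℤ) = q by omega] at this

/-- shift an integer into a window -/
lemma window {N : ℤ} (hN : 0 < N) (c i : ℤ) : ∃ i', c ≤ i' ∧ i' < c + N ∧ N ∣ i - i' := by
  refine ⟨c + (i - c) % N, ?_, ?_, ?_⟩
  · have := Int.emod_nonneg (i - c) hN.ne'; omega
  · have := Int.emod_lt_of_pos (i - c) hN; omega
  · have := Int.mul_ediv_add_emod (i - c) N
    exact ⟨(i - c) / N, by linarith⟩

lemma row_reach {V : Type*} (G : SimpleGraph V) (X : ℤ → V) {N : ℤ} (hN : 0 < N)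
    (hX : ∀ i i', N ∣ i - i' → X i = X i') (c c' : ℤ)
    (h : ∀ i, ¬ N ∣ i - c → ¬ N ∣ i - c' → G.Reachable (X i) (X (i + 1))) (i : ℤ) :
    G.Reachable (X i) (X c) ∨ G.Reachable (X i) (X (c + 1)) := by
  obtain ⟨i', h1, h2, h3⟩ := window hN (c + 1) i
  rw [hX _ _ h3]
  obtain ⟨d, d1, d2, d3⟩ := window hN (c + 1) c'
  have hc : ∀ x, c + 1 ≤ x → x < c + N → ¬ N ∣ x - c := fun x h1 h2 =>
    ndvd (by omega) (by omega) (by omega)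
  have hc' : ∀ x, c + 1 ≤ x → x < c + 1 + N → x ≠ d → ¬ N ∣ x - c' := fun x h1 h2 h3 h4 =>
    ndvd (N := N) h3 (by omega) (by omega) (by have := dvd_add h4 d3; rwa [sub_add_sub_cancel] at this)
  by_cases hd : d < i'
  · left
    rw [← hX (c + N) c (by simp)]
    apply path_reach' _ _ _ _ (by omega)
    intro x x1 x2
    exact h x (hc x (by omega) (by omega)) (hc' x (by omega) (by omega) (by omega))
  · right
    apply SimpleGraph.Reachable.symm
    apply path_reach' _ _ _ _ (by omega)
    intro x x1 x2
    exact h x (hc x (by omega) (by omega)) (hc' x (by omega) (by omega) (by omega))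

lemma Setup.conn1 (S : Setup a b g N s H) :
    (ge a b S.ha S.hb {v | ¬ (v ∈ TT a b g H ∨ v - b ∈ TT a b g H)}
      {v | v ∈ TT a b g H ∨ v - a ∈ TT a b g H}).Connected := by
  set G := ge a b S.ha S.hb {v | ¬ (v ∈ TT a b g H ∨ v - b ∈ TT a b g H)}
      {v | v ∈ TT a b g H ∨ v - a ∈ TT a b g H} with hG
  have h1 := S.hH
  have h2 := S.hHN
  have h3 := S.hHg
  have hX : ∀ j i i', N ∣ i - i' → vtx a b j i = vtx a b j i' := fun j i i' h => S.per h
  have row0 : ∀ i, G.Reachable (vtx a b 0 i) (vtx a b 0 1) := by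
    intro i
    obtain ⟨i', e1, e2, e3⟩ := window (show 0 < N by omega) 1 i
    rw [hX _ _ _ e3]
    apply SimpleGraph.Reachable.symm
    apply path_reach' _ (fun x => vtx a b 0 x) _ _ e1
    intro x x1 x2
    refine SimpleGraph.Adj.reachable (Or.inl ⟨vtx_a _ _, ?_⟩)
    rw [Set.mem_ofPred_eq, S.memP0]
    have := ndvd (x := x) (y := 0) (N := N) (by omega) (by omega) (by omega)
    simpa using this
  have down : ∀ j i, 0 ≤ j → j ≤ g - 2 → (N ∣ i - col H j ∨ N ∣ i - 1 - col H j) →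
      G.Reachable (vtx a b (j + 1) i) (vtx a b j i) := by
    intro j i j0 j1 hi
    refine SimpleGraph.Adj.reachable (Or.inr (Or.inr (Or.inr ⟨vtx_b _ _, ?_⟩)))
    rw [Set.mem_ofPred_eq, S.memQ j0 (by omega)]
    exact ⟨j1, hi⟩
  have all : ∀ m : ℕ, (m : ℤ) < g → ∀ i, G.Reachable (vtx a b m i) (vtx a b 0 1) := by
    intro m
    induction m with
    | zero => intro _ i; exact_mod_cast row0 i
    | succ m ih =>
      intro hm i
      push_cast at hm ⊢
      have ih := ih (by omega)
      have hstep : ∀ x, ¬ N ∣ x - col H m → ¬ N ∣ x - col H (m + 1) →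
          G.Reachable (vtx a b (m + 1) x) (vtx a b (m + 1) (x + 1)) := by
        intro x x1 x2
        refine SimpleGraph.Adj.reachable (Or.inl ⟨vtx_a _ _, ?_⟩)
        rw [Set.mem_ofPred_eq, S.memP (by omega) (by omega), add_sub_cancel_right]
        tauto
      rcases row_reach G (fun x => vtx a b (m + 1) x) (show 0 < N by omega) (hX _) _ _ hstep i
        with h | h
      · exact (h.trans (down m _ (by omega) (by omega) (Or.inl (by simp)))).trans (ih _)
      · exact (h.trans (down m _ (by omega) (by omega) (Or.inr (by simp)))).trans (ih _)
  have all' : ∀ v, G.Reachable v (vtx a b 0 1) := by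
    intro v
    obtain ⟨j, i, j0, j1, rfl⟩ := S.surj v
    lift j to ℕ using j0
    exact all j j1 i
  exact ⟨fun x y => (all' x).trans (all' y).symm⟩

end

end HWaux
namespace HWaux

section
variable {n : ℕ} {a b : ZMod n} {g N s H : ℤ}

/-- the second graph -/
def Setup.G2 (S : Setup a b g N s H) : SimpleGraph (ZMod n) :=
  ge a b S.ha S.hb {v | v ∈ TT a b g H ∨ v - b ∈ TT a b g H}
      {v | ¬ (v ∈ TT a b g H ∨ v - a ∈ TT a b g H)}

lemma Setup.V (S : Setup a b g N s H) {j i : ℤ} (j0 : 0 ≤ j) (j1 : j ≤ g - 2) (i0 : 0 ≤ i)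
    (i1 : i < N) (h1 : i ≠ col H j) (h2 : i ≠ col H j + 1) :
    S.G2.Reachable (vtx a b j i) (vtx a b (j + 1) i) := by
  refine SimpleGraph.Adj.reachable (Or.inr (Or.inr (Or.inl ⟨vtx_b _ _, ?_⟩)))
  rw [Set.mem_ofPred_eq, S.memQ j0 (by omega)]
  have e1 := S.hH
  have e2 := S.hHN
  have c1 := col_nonneg e1 j0
  have c2 : col H j ≤ H - 2 := col_le
  rintro ⟨-, h | h⟩
  · exact ndvd (by omega) (by omega) (by omega) h
  · exact ndvd (by omega) (by omega) (by omega) h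

lemma Setup.W (S : Setup a b g N s H) (i : ℤ) :
    S.G2.Reachable (vtx a b (g - 1) i) (vtx a b 0 (i + s)) := by
  have e1 := S.hH
  have e2 := S.hHg
  refine SimpleGraph.Adj.reachable (Or.inr (Or.inr (Or.inl ⟨S.wr _, ?_⟩)))
  rw [Set.mem_ofPred_eq, S.memQ (by omega) (by omega)]
  omega

lemma Setup.Z1 (S : Setup a b g N s H) {j i : ℤ} (j0 : 0 ≤ j) (j1 : j ≤ g - 2)
    (hi : col H j = i) :
    S.G2.Reachable (vtx a b j i) (vtx a b j (i + 1)) := by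
  refine SimpleGraph.Adj.reachable (Or.inl ⟨vtx_a _ _, ?_⟩)
  rw [Set.mem_ofPred_eq]
  left
  rw [S.memT j0 (by omega)]
  exact ⟨j1, by simp [hi]⟩

lemma Setup.Z2 (S : Setup a b g N s H) {j i : ℤ} (j0 : 1 ≤ j) (j1 : j ≤ g - 1)
    (hi : col H (j - 1) = i) :
    S.G2.Reachable (vtx a b j i) (vtx a b j (i + 1)) := by
  refine SimpleGraph.Adj.reachable (Or.inl ⟨vtx_a _ _, ?_⟩)
  rw [Set.mem_ofPred_eq]
  right
  rw [vtx_b', S.memT (by omega) (by omega)]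
  exact ⟨by omega, by simp [hi]⟩

/-- vertical segments -/
lemma Setup.seg (S : Setup a b g N s H) {p q i : ℤ} (hp : 0 ≤ p) (hpq : p ≤ q) (hq : q ≤ g - 1)
    (i0 : 0 ≤ i) (i1 : i < N) (h : ∀ j, p ≤ j → j < q → i ≠ col H j ∧ i ≠ col H j + 1) :
    S.G2.Reachable (vtx a b p i) (vtx a b q i) := by
  apply path_reach' _ (fun x => vtx a b x i) _ _ hpq
  intro j j1 j2
  exact S.V (by omega) (by omega) i0 i1 (h j j1 j2).1 (h j j1 j2).2

lemma Setup.straight (S : Setup a b g N s H) {i : ℤ} (i0 : H ≤ i) (i1 : i < N) {j : ℤ}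
    (hj : 0 ≤ j) (hj1 : j ≤ g - 1) :
    S.G2.Reachable (vtx a b 0 i) (vtx a b j i) := by
  have e1 := S.hH
  apply S.seg le_rfl hj hj1 (by omega) i1
  intro x x1 x2
  have c2 : col H x ≤ H - 2 := col_le
  omega

lemma Setup.bottom (S : Setup a b g N s H) {i : ℤ} (i0 : 0 ≤ i) (i1 : i ≤ H - 1) {j : ℤ}
    (hj : 0 ≤ j) (hj1 : j ≤ i - 1) :
    S.G2.Reachable (vtx a b 0 i) (vtx a b j i) := by
  have e1 := S.hH
  have e2 := S.hHN
  have e3 := S.hHg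
  apply S.seg le_rfl hj (by omega) (by omega) (by omega)
  intro x x1 x2
  have c2 := col_small (j := x) S.hHo (by omega)
  omega

lemma Setup.top (S : Setup a b g N s H) {i : ℤ} (i0 : 0 ≤ i) (i1 : i ≤ H - 4) {j : ℤ}
    (hj : i + 1 ≤ j) (hj1 : j ≤ g - 1) :
    S.G2.Reachable (vtx a b j i) (vtx a b (g - 1) i) := by
  have e1 := S.hH
  have e2 := S.hHN
  have e3 := S.hHg
  apply S.seg (by omega) (by omega) (by omega) (by omega) (by omega)
  intro x x1 x2
  rcases le_or_gt x (H - 2) with h | h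
  · have c2 := col_small (j := x) S.hHo (by omega)
    omega
  · rcases Int.emod_two_eq_zero_or_one x with h' | h'
    · have := col_even (H := H) (j := x) (by omega) h'
      omega
    · have := col_odd (H := H) (j := x) (by omega) h'
      omega

/-- triple rows -/
lemma Setup.triple (S : Setup a b g N s H) {j : ℤ} (hj : H - 2 ≤ j) (hj1 : j ≤ g - 2) :
    S.G2.Reachable (vtx a b j (H - 1)) (vtx a b j (H - 2)) ∧
    S.G2.Reachable (vtx a b j (H - 1)) (vtx a b j (H - 3)) := by
  have e1 := S.hH
  have e3 := S.hHg
  have z1 : S.G2.Reachable (vtx a b j (H - 3)) (vtx a b j (H - 2)) := by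
    rw [show H - 2 = H - 3 + 1 by ring]
    rcases Int.emod_two_eq_zero_or_one j with h' | h'
    · exact S.Z1 (by omega) hj1 (col_even (by omega) h')
    · exact S.Z2 (by omega) (by omega) (col_even (by omega) (by omega))
  have z2 : S.G2.Reachable (vtx a b j (H - 2)) (vtx a b j (H - 1)) := by
    rw [show H - 1 = H - 2 + 1 by ring]
    have := S.hHo
    rcases Int.emod_two_eq_zero_or_one j with h' | h'
    · exact S.Z2 (by omega) (by omega) (col_odd (by omega) (by omega))
    · exact S.Z1 (by omega) hj1 (col_odd (by omega) h')
  exact ⟨z2.symm, (z1.trans z2).symm⟩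

lemma Setup.snake (S : Setup a b g N s H) (m : ℕ) (hm : H - 2 + m ≤ g - 2) :
    S.G2.Reachable (vtx a b 0 (H - 1)) (vtx a b (H - 2 + m) (H - 1)) := by
  have e1 := S.hH
  have e2 := S.hHN
  have e3 := S.hHg
  have e4 := S.hHo
  induction m with
  | zero =>
    have := S.bottom (i := H - 1) (by omega) (by omega) (j := H - 2) (by omega) (by omega)
    simpa using this
  | succ m ih =>
    push_cast at hm
    refine (ih (by omega)).trans ?_
    have t1 := S.triple (j := H - 2 + m) (by omega) (by omega)
    have t2 := S.triple (j := H - 2 + m + 1) (by omega) (by omega)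
    push_cast
    rw [← add_assoc]
    rcases Int.emod_two_eq_zero_or_one (H - 2 + m) with h' | h'
    · have := col_even (H := H) (j := H - 2 + m) (by omega) h'
      exact S.V (by omega) (by omega) (by omega) (by omega) (by omega) (by omega)
    · have := col_odd (H := H) (j := H - 2 + m) (by omega) h'
      have v := S.V (j := H - 2 + m) (i := H - 3) (by omega) (by omega) (by omega) (by omega)
        (by omega) (by omega)
      exact (t1.2.trans v).trans t2.2.symm

lemma Setup.snake' (S : Setup a b g N s H) {j : ℤ} (hj : H - 2 ≤ j) (hj1 : j ≤ g - 2) :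
    S.G2.Reachable (vtx a b 0 (H - 1)) (vtx a b j (H - 1)) := by
  have := S.snake (j - (H - 2)).toNat (by omega)
  rwa [show H - 2 + ((j - (H - 2)).toNat : ℤ) = j by omega] at this

lemma Setup.B0 (S : Setup a b g N s H) : S.G2.Reachable (vtx a b 0 0) (vtx a b 0 1) := by
  have e1 := S.hH
  have e3 := S.hHg
  exact S.Z1 (j := 0) (i := 0) le_rfl (by omega) (col_small S.hHo (by omega))

lemma Setup.Tl (S : Setup a b g N s H) :
    S.G2.Reachable (vtx a b (g - 1) (H - 2)) (vtx a b (g - 1) (H - 1)) := by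
  have e1 := S.hH
  have e3 := S.hHg
  have e4 := S.hgo
  have := S.Z2 (j := g - 1) (i := H - 2) (by omega) (by omega) (col_odd (by omega) (by omega))
  rwa [show H - 2 + 1 = H - 1 by ring] at this

/-- diagonal vertices reach the bottom -/
lemma Setup.diag (S : Setup a b g N s H) {i : ℤ} (i0 : 0 ≤ i) (i1 : i ≤ H - 3) :
    S.G2.Reachable (vtx a b i i) (vtx a b 0 (i + 1)) := by
  have e1 := S.hH
  have e3 := S.hHg
  have h1 := S.Z1 (j := i) (i := i) i0 (by omega) (col_small S.hHo (by omega))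
  have h2 := S.bottom (i := i + 1) (by omega) (by omega) (j := i) (by omega) (by omega)
  exact h1.trans h2.symm

lemma Setup.BT (S : Setup a b g N s H) {c : ℤ} (c0 : 2 ≤ c) (c1 : c ≤ H - 1) :
    S.G2.Reachable (vtx a b 0 c) (vtx a b (g - 1) (c - 2)) := by
  have e1 := S.hH
  have e2 := S.hHN
  have e3 := S.hHg
  have e4 := S.hgo
  have e5 := S.hHo
  rcases c1.lt_or_eq with h | h
  · have h1 := S.diag (i := c - 1) (by omega) (by omega)
    rw [sub_add_cancel] at h1
    have h2 := S.Z2 (j := c - 1) (i := c - 2) (by omega) (by omega)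
      (by rw [col_small S.hHo (by omega)]; ring)
    rw [show c - 2 + 1 = c - 1 by ring] at h2
    have h3 := S.top (i := c - 2) (by omega) (by omega) (j := c - 1) (by omega) (by omega)
    exact (h1.symm.trans h2.symm).trans h3
  · subst h
    have h1 := S.snake' (j := g - 2) (by omega) le_rfl
    have h2 := (S.triple (j := g - 2) (by omega) le_rfl).2
    have h4 := col_odd (H := H) (j := g - 2) (by omega) (by omega)
    have h3 := S.V (j := g - 2) (i := H - 3) (by omega) (by omega) (by omega) (by omega)
        (by omega) (by omega)
    rw [show g - 2 + 1 = g - 1 by ring] at h3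
    rw [show H - 1 - 2 = H - 3 by ring]
    exact (h1.trans h2).trans h3

/-- each vertex reaches a bottom vertex -/
lemma Setup.toB (S : Setup a b g N s H) (v : ZMod n) :
    ∃ i, S.G2.Reachable v (vtx a b 0 i) := by
  have e1 := S.hH
  have e2 := S.hHN
  have e3 := S.hHg
  have e4 := S.hgo
  have e5 := S.hHo
  obtain ⟨j, i', j0, j1, rfl⟩ := S.surj v
  obtain ⟨i, i0, i1, hi⟩ := window (show 0 < N by omega) 0 i'
  rw [S.per hi]
  rw [zero_add] at i1
  have top : S.G2.Reachable (vtx a b j i) (vtx a b (g - 1) i) →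
      ∃ i', S.G2.Reachable (vtx a b j i) (vtx a b 0 i') := fun h => ⟨_, h.trans (S.W i)⟩
  rcases le_or_gt H i with h | h
  · exact ⟨i, (S.straight h i1 j0 (by omega)).symm⟩
  rcases le_or_gt j (i - 1) with h2 | h2
  · exact ⟨i, (S.bottom i0 (by omega) j0 h2).symm⟩
  rcases eq_or_ne j (g - 1) with h3 | h3
  · subst h3; exact ⟨_, S.W i⟩
  rcases le_or_gt i (H - 4) with h4 | h4
  · rcases eq_or_ne j i with h5 | h5
    · subst h5; exact ⟨_, S.diag j0 (by omega)⟩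
    · exact top (S.top i0 h4 (by omega) (by omega))
  rcases (show j = H - 3 ∨ H - 2 ≤ j by omega) with h5 | h5
  · have : i = H - 3 ∨ i = H - 2 := by omega
    rcases this with h6 | h6
    · have h7 : i = j := by omega
      subst h7
      exact ⟨_, S.diag i0 (by omega)⟩
    · omega
  · have t := S.triple h5 (by omega)
    have s1 := S.snake' h5 (by omega)
    have : i = H - 3 ∨ i = H - 2 ∨ i = H - 1 := by omega
    rcases this with h6 | h6 | h6 <;> rw [h6]
    · exact ⟨_, (s1.trans t.2).symm⟩
    · exact ⟨_, (s1.trans t.1).symm⟩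
    · exact ⟨_, s1.symm⟩

lemma Setup.conn2_of (S : Setup a b g N s H)
    (h : ∀ i, S.G2.Reachable (vtx a b 0 i) (vtx a b 0 0)) : S.G2.Connected := by
  have all' : ∀ v, S.G2.Reachable v (vtx a b 0 0) := by
    intro v
    obtain ⟨i, hi⟩ := S.toB v
    exact hi.trans (h i)
  exact ⟨fun x y => (all' x).trans (all' y).symm⟩

/-- one step along the wrap from a straight column -/
lemma Setup.stepS (S : Setup a b g N s H) {i : ℤ} (h : ∀ r, 0 ≤ r → r < H → ¬ N ∣ i - r) :
    S.G2.Reachable (vtx a b 0 i) (vtx a b 0 (i + s)) := by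
  have e1 := S.hH
  have e2 := S.hHN
  have e3 := S.hHg
  obtain ⟨i', i0, i1, hi⟩ := window (show 0 < N by omega) 0 i
  have : H ≤ i' := by
    by_contra hc
    exact h i' i0 (by omega) hi
  have h2 := S.straight this (by omega) (j := g - 1) (by omega) le_rfl
  have h3 := S.W i'
  rw [S.per hi, S.per (show N ∣ (i + s) - (i' + s) by simpa using hi)]
  exact h2.trans h3

lemma Setup.conn2_big (S : Setup a b g N s H) (hs : H ∣ s) (hN : H ∣ N)
    (hex : ∀ i, ∃ r : ℤ, ∃ m : ℕ, 0 ≤ r ∧ r < H ∧ N ∣ i - (r + m * s)) : S.G2.Connected := by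
  have e1 := S.hH
  have e2 := S.hHN
  -- residues
  have res : ∀ r r' : ℤ, ∀ m : ℕ, 0 ≤ r → r < H → 0 ≤ r' → r' < H → N ∣ r + m * s - r' →
      r = r' := by
    intro r r' m h1 h2 h3 h4 h5
    have h6 : H ∣ r - r' := by
      have h7 := hN.trans h5
      have h8 : H ∣ m * s := hs.mul_left _
      have := dvd_sub h7 h8
      rwa [show r + m * s - r' - m * s = r - r' by ring] at this
    by_contra hne
    exact ndvd hne (by omega) (by omega) h6
  have tb : ∀ r : ℤ, 0 ≤ r → r < H → S.G2.Reachable (vtx a b (g - 1) r) (vtx a b 0 r) := by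
    intro r h1 h2
    have key : ∀ m : ℕ, S.G2.Reachable (vtx a b (g - 1) r) (vtx a b 0 r) ∨
        S.G2.Reachable (vtx a b (g - 1) r) (vtx a b 0 (r + (m + 1 : ℕ) * s)) := by
      intro m
      induction m with
      | zero => right; simpa using S.W r
      | succ m ih =>
        rcases ih with ih | ih
        · exact Or.inl ih
        by_cases hr : ∃ r', 0 ≤ r' ∧ r' < H ∧ N ∣ r + (m + 1 : ℕ) * s - r'
        · obtain ⟨r', h3, h4, h5⟩ := hr
          have := res r r' (m + 1) h1 h2 h3 h4 h5
          subst this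
          left
          rwa [S.per h5] at ih
        · right
          have := S.stepS (i := r + (m + 1 : ℕ) * s) (fun r' h3 h4 h5 => hr ⟨r', h3, h4, h5⟩)
          rw [show r + ((m + 1 + 1 : ℕ) : ℤ) * s = r + (m + 1 : ℕ) * s + s by push_cast; ring]
          exact ih.trans this
    rcases key (N.toNat - 1) with h | h
    · exact h
    · have h3 : ((N.toNat - 1 + 1 : ℕ) : ℤ) = N := by omega
      rw [h3, S.per (show N ∣ (r + N * s) - r by simp)] at h
      exact h
  have bb : ∀ r : ℤ, 0 ≤ r → r < H → ∀ m : ℕ,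
      S.G2.Reachable (vtx a b 0 r) (vtx a b 0 (r + m * s)) := by
    intro r h1 h2 m
    induction m with
    | zero => simp
    | succ m ih =>
      rw [show r + ((m + 1 : ℕ) : ℤ) * s = r + m * s + s by push_cast; ring]
      by_cases hr : ∃ r', 0 ≤ r' ∧ r' < H ∧ N ∣ r + m * s - r'
      · obtain ⟨r', h3, h4, h5⟩ := hr
        have := res r r' m h1 h2 h3 h4 h5
        subst this
        rw [S.per (show N ∣ (r + m * s + s) - (r + s) by
          rwa [show r + m * s + s - (r + s) = r + m * s - r by ring])]
        exact (tb r h1 h2).symm.trans (S.W r)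
      · exact ih.trans (S.stepS (fun r' h3 h4 h5 => hr ⟨r', h3, h4, h5⟩))
  have b0 : ∀ m : ℕ, (m : ℤ) < H → S.G2.Reachable (vtx a b 0 m) (vtx a b 0 0) := by
    intro m
    induction m using Nat.strong_induction_on with
    | _ m ih =>
      intro hm
      rcases (show m = 0 ∨ m = 1 ∨ 2 ≤ m by omega) with rfl | rfl | h
      · simp
      · exact_mod_cast S.B0.symm
      · have h1 := S.BT (c := m) (by omega) (by omega)
        have h2 := tb (m - 2) (by omega) (by omega)
        have h3 := ih (m - 2) (by omega) (by omega)
        rw [Nat.cast_sub h] at h3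
        exact (h1.trans h2).trans h3
  apply S.conn2_of
  intro i
  obtain ⟨r, m, h1, h2, h3⟩ := hex i
  rw [S.per h3]
  have := b0 r.toNat (by omega)
  rw [show (r.toNat : ℤ) = r by omega] at this
  exact (bb r h1 h2 m).symm.trans this

lemma Setup.conn2_small (S : Setup a b g N s 3) (p : ℤ) (hp : 0 < p) (hpN : 2 * p < N)
    (hps : N ∣ s * p - 1) : S.G2.Connected := by
  have e2 := S.hHN
  -- vertices by position
  have pos : ∀ q q' : ℤ, N ∣ q * s - q' * s → N ∣ q - q' := by
    intro q q' h
    have h1 := h.mul_right p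
    have h2 := hps.mul_left (q - q')
    have := dvd_sub h1 h2
    rwa [show (q * s - q' * s) * p - (q - q') * (s * p - 1) = q - q' by ring] at this
  have r1 : N ∣ 1 - p * s := by
    have := (dvd_neg (a := N)).2 hps
    rwa [show -(s * p - 1) = 1 - p * s by ring] at this
  have chain : ∀ q0 : ℤ, ∀ M : ℕ, (∀ q, q0 < q → q < q0 + M → ¬ N ∣ q ∧ ¬ N ∣ q - p ∧
      ¬ N ∣ q - 2 * p) → ∀ m : ℕ, 1 ≤ m → m ≤ M →
      S.G2.Reachable (vtx a b (g - 1) (q0 * s)) (vtx a b 0 ((q0 + m) * s)) := by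
    intro q0 M h m hm
    induction m, hm using Nat.le_induction with
    | base =>
      intro _
      have := S.W (q0 * s)
      rwa [show q0 * s + s = (q0 + (1 : ℕ)) * s by push_cast; ring] at this
    | succ m hm ih =>
      intro hM
      have ih := ih (by omega)
      obtain ⟨h1, h2, h3⟩ := h (q0 + m) (by omega) (by omega)
      have := S.stepS (i := (q0 + m) * s) (by
        intro r r0 r3 hd
        rcases (show r = 0 ∨ r = 1 ∨ r = 2 by omega) with rfl | rfl | rfl
        · exact h1 (by simpa using pos (q0 + m) 0 (by simpa using hd))
        · apply h2; apply pos
          have := dvd_add hd r1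
          rwa [sub_add_sub_cancel] at this
        · apply h3; apply pos
          have := dvd_add hd (r1.mul_left 2)
          rwa [show (q0 + m) * s - 2 + 2 * (1 - p * s) = (q0 + m) * s - 2 * p * s by ring] at this)
      rw [show (q0 + ((m + 1 : ℕ) : ℤ)) * s = (q0 + m) * s + s by push_cast; ring]
      exact ih.trans this
  have nz : ∀ x y : ℤ, x ≠ y → x - y < N → y - x < N → ¬ N ∣ x - y := fun x y => ndvd
  have nz0 : ∀ x : ℤ, x ≠ 0 → x < N → -x < N → ¬ N ∣ x := fun x h1 h2 h3 => by
    have := ndvd (N := N) (x := x) (y := 0) h1 (by omega) (by omega)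
    simpa using this
  have c0 := chain 0 p.toNat (fun q h1 h2 => ⟨nz0 _ (by omega) (by omega) (by omega),
    nz _ _ (by omega) (by omega) (by omega), nz _ _ (by omega) (by omega) (by omega)⟩)
  have c1 := chain p p.toNat (fun q h1 h2 => ⟨nz0 _ (by omega) (by omega) (by omega),
    nz _ _ (by omega) (by omega) (by omega), nz _ _ (by omega) (by omega) (by omega)⟩)
  have c2 := chain (2 * p) (N - 2 * p).toNat (fun q h1 h2 =>
    ⟨nz0 _ (by omega) (by omega) (by omega),
    nz _ _ (by omega) (by omega) (by omega), nz _ _ (by omega) (by omega) (by omega)⟩)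
  have v1 : ∀ j, vtx a b j (p * s) = vtx a b j 1 := fun j => (S.per r1).symm
  have v2 : ∀ j, vtx a b j (2 * p * s) = vtx a b j 2 := fun j =>
    (S.per (by have := r1.mul_left 2; rwa [show 2 * (1 - p * s) = 2 - 2 * p * s by ring] at this)).symm
  rw [v1] at c1
  rw [v2] at c2
  rw [zero_mul] at c0
  simp only [zero_add] at c0
  have t0 : S.G2.Reachable (vtx a b (g - 1) 0) (vtx a b 0 1) := by
    have := c0 p.toNat (by omega) le_rfl
    rwa [show (p.toNat : ℤ) = p by omega, v1] at this
  have t1 : S.G2.Reachable (vtx a b (g - 1) 1) (vtx a b 0 2) := by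
    have := c1 p.toNat (by omega) le_rfl
    rwa [show (p + p.toNat : ℤ) = 2 * p by omega, v2] at this
  have t2 : S.G2.Reachable (vtx a b (g - 1) 2) (vtx a b 0 0) := by
    have := c2 (N - 2 * p).toNat (by omega) le_rfl
    rwa [show (2 * p + (N - 2 * p).toNat : ℤ) = N by omega,
      S.per (show N ∣ N * s - 0 by simp)] at this
  have T0 : S.G2.Reachable (vtx a b (g - 1) 0) (vtx a b 0 0) := t0.trans S.B0.symm
  have T1 : S.G2.Reachable (vtx a b (g - 1) 1) (vtx a b 0 0) := by
    have := S.Tl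
    norm_num at this
    exact this.trans t2
  apply S.conn2_of
  intro i
  obtain ⟨q, q0, q1, hq⟩ := window (show 0 < N by omega) 1 (p * i)
  have hi : N ∣ i - q * s := by
    have h1 := hq.mul_left s
    have h2 := hps.mul_left i
    have := dvd_sub h1 h2
    rwa [show s * (p * i - q) - i * (s * p - 1) = i - q * s by ring] at this
  rw [S.per hi]
  rcases le_or_gt q p with h | h
  · have := c0 q.toNat (by omega) (by omega)
    rw [show (q.toNat : ℤ) = q by omega] at this
    exact this.symm.trans T0
  rcases le_or_gt q (2 * p) with h' | h'
  · have := c1 (q - p).toNat (by omega) (by omega)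
    rw [show (p + (q - p).toNat : ℤ) = q by omega] at this
    exact this.symm.trans T1
  · have := c2 (q - 2 * p).toNat (by omega) (by omega)
    rw [show (2 * p + (q - 2 * p).toNat : ℤ) = q by omega] at this
    exact this.symm.trans t2

end

end HWaux
namespace HWaux

lemma mkSetup {n : ℕ} (a b g N u v a' α β H : ℤ) (hn : (n : ℤ) = g * N) (ha' : a = g * a')
    (hu : g = u * a + v * n) (hcop : α * b + β * g = 1) (ha : (a : ZMod n) ≠ 0)
    (hb : (b : ZMod n) ≠ 0) (hgo : g % 2 = 1) (hH : 3 ≤ H) (hHo : H % 2 = 1) (hHg : H ≤ g)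
    (hHN : H ≤ N) : Setup (a : ZMod n) (b : ZMod n) g N (b * u) H where
  ha := ha
  hb := hb
  hgo := hgo
  hH := hH
  hHo := hHo
  hHg := hHg
  hHN := hHN
  Na := by
    have : ((N * a : ℤ) : ZMod n) = 0 := by
      rw [ZMod.intCast_zmod_eq_zero_iff_dvd]
      exact ⟨a', by rw [hn, ha']; ring⟩
    push_cast at this
    exact this
  wrap := by
    have : ((g * b : ℤ) : ZMod n) = ((b * u * a : ℤ) : ZMod n) := by
      rw [ZMod.intCast_eq_intCast_iff_dvd_sub]
      exact ⟨-(b * v), by linear_combination (-b) * hu⟩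
    push_cast at this ⊢
    exact this
  uniq := by
    intro j i j' i' h0 h1 h0' h1' h
    have h2 : ((j * b + i * a : ℤ) : ZMod n) = ((j' * b + i' * a : ℤ) : ZMod n) := by
      simp only [vtx] at h
      push_cast
      exact h
    rw [ZMod.intCast_eq_intCast_iff_dvd_sub] at h2
    obtain ⟨w, hw⟩ := h2
    have hj : g ∣ j' - j :=
      ⟨α * (N * w - (i' - i) * a') + β * (j' - j), by
        have e : (j' - j) * b = g * (N * w - (i' - i) * a') := by
          rw [hn, ha'] at hw; linear_combination hw
        linear_combination α * e - (j' - j) * hcop⟩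
    have hjj : j = j' := by
      by_contra hne
      exact ndvd (Ne.symm hne) (by omega) (by omega) hj
    refine ⟨hjj, ?_⟩
    subst hjj
    have hg0 : g ≠ 0 := by omega
    have : g * (i - i') = g * (N * (-(u * w) + v * (i - i'))) := by
      have e1 : (i' - i) * a = n * w := by linear_combination hw
      linear_combination (i - i') * hu - u * e1 + (v * (i - i') - u * w) * hn
    exact ⟨_, mul_left_cancel₀ hg0 this⟩
  surj := by
    intro z
    obtain ⟨z, rfl⟩ := ZMod.intCast_surjective z
    refine ⟨(α * z) % g, u * (β * z + (α * z) / g * b), Int.emod_nonneg _ (by omega),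
      Int.emod_lt_of_pos _ (by omega), ?_⟩
    have h1 := Int.mul_ediv_add_emod (α * z) g
    have : (z : ZMod n) = (((α * z) % g * b + u * (β * z + (α * z) / g * b) * a : ℤ) : ZMod n) := by
      rw [ZMod.intCast_eq_intCast_iff_dvd_sub]
      refine ⟨-(v * (β * z + (α * z) / g * b)), ?_⟩
      linear_combination (-(β * z + (α * z) / g * b)) * hu + b * h1 + z * hcop
    simp only [vtx]
    rw [this]; push_cast; ring

lemma gen_of_gcd {n : ℕ} [NeZero n] (a : ℤ) (h : Int.gcd a n = 1) (v : ZMod n) :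
    ∃ i : ℕ, v = i * (a : ZMod n) := by
  have h1 := Int.gcd_eq_gcd_ab a n
  rw [h] at h1
  refine ⟨(v * (Int.gcdA a n : ZMod n)).val, ?_⟩
  rw [ZMod.natCast_zmod_val]
  have h2 : ((1 : ℕ) : ZMod n) = (a : ZMod n) * (Int.gcdA a n : ZMod n) := by
    have := congrArg (Int.cast : ℤ → ZMod n) h1
    push_cast at this
    simpa using this
  push_cast at h2
  linear_combination v * h2

lemma conn_gen {n : ℕ} (G : SimpleGraph (ZMod n)) (u : ZMod n) (hg : ∀ v : ZMod n, ∃ i : ℕ, v = i * u)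
    (hG : ∀ v, G.Adj v (v + u)) : G.Connected := by
  have : ∀ i : ℕ, G.Reachable 0 (i * u) := by
    intro i
    induction i with
    | zero => simp
    | succ i ih =>
      have h := (hG (i * u)).reachable
      rw [show (i : ZMod n) * u + u = ((i + 1 : ℕ) : ZMod n) * u by push_cast; ring] at h
      exact ih.trans h
  have h0 : ∀ v, G.Reachable 0 v := fun v => by
    obtain ⟨i, rfl⟩ := hg v
    exact this i
  exact ⟨fun x y => (h0 x).symm.trans (h0 y)⟩

/-- size conditions on the pair -/
structure PairOK (n : ℕ) (a b : ℤ) : Prop where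
  ha : (a : ZMod n) ≠ 0
  hb : (b : ZMod n) ≠ 0
  haa : (a : ZMod n) ≠ -a
  hbb : (b : ZMod n) ≠ -b
  hab : (a : ZMod n) ≠ b
  hab' : (a : ZMod n) ≠ -b

def pmset (n : ℕ) (a b : ℤ) : Set (ZMod n) :=
  {d | d = (a : ZMod n) ∨ d = -(a : ZMod n) ∨ d = (b : ZMod n) ∨ d = -(b : ZMod n)}

lemma pair_gcd_one {n : ℕ} [NeZero n] (a b : ℤ) (h : PairOK n a b) (ha : Int.gcd a n = 1)
    (hb : Int.gcd b n = 1) : HamDec (pmset n a b) 2 := by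
  apply pair_of_T (a : ZMod n) b h.ha h.hb h.haa h.hbb h.hab h.hab' ∅ (by simp) (by simp)
  · exact conn_gen _ _ (gen_of_gcd a ha) (fun v => Or.inl ⟨rfl, by simp⟩)
  · exact conn_gen _ _ (gen_of_gcd b hb) (fun v => Or.inr (Or.inr (Or.inl ⟨rfl, by simp⟩)))

lemma pair_setup {n : ℕ} {a b : ℤ} {g N s H : ℤ} (h : PairOK n a b)
    (S : Setup (a : ZMod n) (b : ZMod n) g N s H) (h2 : S.G2.Connected) :
    HamDec (pmset n a b) 2 :=
  pair_of_T (a : ZMod n) b h.ha h.hb h.haa h.hbb h.hab h.hab' (TT (a : ZMod n) b g H)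
    S.disja S.disjb S.conn1 h2

lemma pair_core {n : ℕ} (hn : n % 2 = 1) (a b : ℤ) (h : PairOK n a b) (hc : IsCoprime a b)
    (hlt : Int.gcd b n < Int.gcd a n) : HamDec (pmset n a b) 2 := by
  obtain ⟨g, hg⟩ : ∃ g : ℤ, g = Int.gcd a n := ⟨_, rfl⟩
  obtain ⟨h', hh⟩ : ∃ h' : ℤ, h' = Int.gcd b n := ⟨_, rfl⟩
  have hga : g ∣ a := hg ▸ Int.gcd_dvd_left ..
  have hgn : g ∣ n := hg ▸ Int.gcd_dvd_right ..
  have hhb : h' ∣ b := hh ▸ Int.gcd_dvd_left ..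
  have hhn : h' ∣ n := hh ▸ Int.gcd_dvd_right ..
  have hlt' : h' < g := by rw [hg, hh]; exact_mod_cast hlt
  have hh0 : 0 < h' := by
    rw [hh]
    have : 0 < Int.gcd b n := Int.gcd_pos_of_ne_zero_right _ (by omega)
    exact_mod_cast this
  obtain ⟨u, v, hu⟩ : ∃ u v : ℤ, g = u * a + v * n := by
    refine ⟨Int.gcdA a n, Int.gcdB a n, ?_⟩
    rw [hg, Int.gcd_eq_gcd_ab]; ring
  obtain ⟨x, y, hx⟩ : ∃ u v : ℤ, h' = u * b + v * n := by
    refine ⟨Int.gcdA b n, Int.gcdB b n, ?_⟩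
    rw [hh, Int.gcd_eq_gcd_ab]; ring
  have hbg : IsCoprime b g := hc.symm.of_isCoprime_of_dvd_right hga
  obtain ⟨α, β, hαβ⟩ := hbg
  have hhg : IsCoprime h' g := IsCoprime.of_isCoprime_of_dvd_left ⟨α, β, hαβ⟩ hhb
  obtain ⟨a', ha'⟩ := hga
  obtain ⟨N, hN⟩ := hgn
  have hhN : h' ∣ N := by
    rw [hN] at hhn
    exact hhg.dvd_of_dvd_mul_left hhn
  have hn' : (n : ℤ) % 2 = 1 := by omega
  have hodd : ∀ d : ℤ, d ∣ n → d % 2 = 1 := by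
    rintro d ⟨e, he⟩
    rcases Int.emod_two_eq_zero_or_one d with h0 | h0
    · exfalso
      rw [he, Int.mul_emod, h0] at hn'
      simp at hn'
    · exact h0
  have hgo := hodd g ⟨N, hN⟩
  have hho := hodd h' hhn
  have hNo := hodd N ⟨g, by rw [hN]; ring⟩
  have hN0 : 0 < N := by
    have : (0 : ℤ) < n := by omega
    rw [hN] at this
    exact pos_of_mul_pos_right this (by omega)
  have hN3 : 3 ≤ N := by
    by_contra hcon
    have h1 : N = 1 := by omega
    apply h.ha
    rw [ZMod.intCast_zmod_eq_zero_iff_dvd]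
    exact ⟨a', by rw [hN, ha', h1]; ring⟩
  have hua : 1 = u * a' + v * N := by
    have hg0 : g ≠ 0 := by omega
    apply mul_left_cancel₀ hg0
    rw [mul_one]
    rw [ha', hN] at hu
    linear_combination hu
  rcases (show h' = 1 ∨ 3 ≤ h' by omega) with h1 | h3
  · have h4 := Int.mul_ediv_add_emod (a' * x) N
    have h5 := Int.emod_nonneg (a' * x) hN0.ne'
    have h6 := Int.emod_lt_of_pos (a' * x) hN0
    have key : N ∣ (b * u) * (a' * x % N) - 1 := by
      refine ⟨-(b * u * (a' * x / N)) - b * x * v - y * g, ?_⟩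
      rw [h1] at hx
      linear_combination (b * u) * h4 - hx - (b * x) * hua + (-y) * hN
    have h7 : a' * x % N ≠ 0 := by
      intro h0
      rw [h0] at key
      have := ndvd (N := N) (x := 0) (y := 1) (by omega) (by omega) (by omega)
      simp at this key
      exact this key
    by_cases h8 : 2 * (a' * x % N) < N
    · have S := mkSetup (n := n) a b g N u v a' α β 3 hN ha' hu hαβ h.ha h.hb hgo le_rfl rfl
        (by omega) hN3
      exact pair_setup h S (S.conn2_small _ (by omega) h8 key)
    · have hneg : PairOK n (-a) b :=
        { ha := by push_cast; exact neg_ne_zero.2 h.ha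
          hb := h.hb
          haa := by push_cast; rw [neg_neg]; exact h.haa.symm
          hbb := h.hbb
          hab := by push_cast; intro e; exact h.hab' (by rw [← e]; ring)
          hab' := by push_cast; intro e; exact h.hab (neg_injective e) }
      have S := mkSetup (n := n) (-a) b g N (-u) v (-a') α β 3 hN (by rw [ha']; ring)
        (by linear_combination hu) hαβ hneg.ha h.hb hgo le_rfl rfl (by omega) hN3
      have := pair_setup hneg S (S.conn2_small (N - a' * x % N) (by omega) (by omega) (by
        obtain ⟨w, hw⟩ := key
        exact ⟨w - b * u, by linear_combination hw⟩))
      have e : pmset n (-a) b = pmset n a b := by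
        ext d
        simp only [pmset, Set.mem_ofPred_eq, Int.cast_neg, neg_neg]
        tauto
      rwa [e] at this
  · have S := mkSetup (n := n) a b g N u v a' α β h' hN ha' hu hαβ h.ha h.hb hgo h3 hho
        (by omega) (Int.le_of_dvd hN0 hhN)
    refine pair_setup h S (S.conn2_big (hhb.mul_right u) hhN ?_)
    intro i
    refine ⟨i % h', ((a' * x * (i / h')) % N).toNat, Int.emod_nonneg _ hh0.ne',
      Int.emod_lt_of_pos _ hh0, ?_⟩
    have h5 := Int.emod_nonneg (a' * x * (i / h')) hN0.ne'
    rw [show (((a' * x * (i / h')) % N).toNat : ℤ) = (a' * x * (i / h')) % N by omega]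
    have h4 := Int.mul_ediv_add_emod (a' * x * (i / h')) N
    have h6 := Int.mul_ediv_add_emod i h'
    generalize i / h' = w at *
    generalize a' * x * w / N = q at *
    refine ⟨y * g * w + v * x * w * b + q * b * u, ?_⟩
    linear_combination (-1) * h6 - (b * u) * h4 + (x * w * b) * hua + w * hx + (y * w) * hN

lemma pairOK_of {n m : ℕ} (hn : n = 2 * m + 1) (a b : ℤ) (ha : 0 < a) (hb : 0 < b) (ham : a ≤ m)
    (hbm : b ≤ m) (hab : a ≠ b) : PairOK n a b := by
  have h : ∀ z w : ℤ, -m ≤ z → z ≤ m → -m ≤ w → w ≤ m → z ≠ w → (z : ZMod n) ≠ (w : ZMod n) :=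
    fun z w h1 h2 h3 h4 hne e => hne (cast_inj hn (abs_le.2 ⟨h1, h2⟩) (abs_le.2 ⟨h3, h4⟩) e)
  refine ⟨?_, ?_, ?_, ?_, ?_, ?_⟩
  · simpa using h a 0 (by omega) (by omega) (by omega) (by omega) (by omega)
  · simpa using h b 0 (by omega) (by omega) (by omega) (by omega) (by omega)
  · simpa using h a (-a) (by omega) (by omega) (by omega) (by omega) (by omega)
  · simpa using h b (-b) (by omega) (by omega) (by omega) (by omega) (by omega)
  · simpa using h a b (by omega) (by omega) (by omega) (by omega) (by omega)
  · simpa using h a (-b) (by omega) (by omega) (by omega) (by omega) (by omega)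

lemma pair_dec {n m : ℕ} (hn : n = 2 * m + 1) (d : ℤ) (hd : 0 < d) (hdm : d + 1 ≤ m) :
    HamDec (pmset n d (d + 1)) 2 := by
  have : NeZero n := ⟨by omega⟩
  have ok := pairOK_of hn d (d + 1) hd (by omega) (by omega) hdm (by omega)
  have ok' := pairOK_of hn (d + 1) d (by omega) hd (by omega) (by omega) (by omega)
  have hc : IsCoprime d (d + 1) := ⟨-1, 1, by ring⟩
  rcases lt_trichotomy (Int.gcd d n) (Int.gcd (d + 1) n) with h | h | h
  · have := pair_core (by omega) (d + 1) d ok' hc.symm h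
    have e : pmset n (d + 1) d = pmset n d (d + 1) := by
      ext x
      simp only [pmset, Set.mem_ofPred_eq]
      tauto
    rwa [e] at this
  · have h1 : (Int.gcd d n : ℤ) ∣ d := Int.gcd_dvd_left ..
    have h2 : (Int.gcd d n : ℤ) ∣ d + 1 := by rw [h]; exact Int.gcd_dvd_left ..
    have h3 := (Int.isUnit_iff_natAbs_eq.1 (hc.isUnit_of_dvd' h1 h2))
    have h4 : Int.gcd d n = 1 := by simpa using h3
    exact pair_gcd_one d (d + 1) ok h4 (h ▸ h4)
  · exact pair_core (by omega) d (d + 1) ok hc h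

def Eset (n m l : ℕ) : Set (ZMod n) := {d | ∃ z : ℤ, l < |z| ∧ |z| ≤ m ∧ (z : ZMod n) = d}

lemma Eset_dec {n m : ℕ} (hn : n = 2 * m + 1) (e : ℕ) : ∀ l, l + e = m →
    HamDec (Eset n m l) e := by
  have : NeZero n := ⟨by omega⟩
  induction e using Nat.strong_induction_on with
  | _ e ih =>
    intro l hl
    rcases (show e = 0 ∨ e = 1 ∨ 2 ≤ e by omega) with rfl | rfl | he
    · have : Eset n m l = ∅ := by
        ext d
        simp only [Eset, Set.mem_ofPred_eq, Set.mem_empty_iff_false, iff_false]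
        rintro ⟨z, h1, h2, -⟩
        omega
      rw [this]; exact hamDec_empty
    · have e1 : Eset n m l = {d | d = ((m : ℤ) : ZMod n) ∨ d = -((m : ℤ) : ZMod n)} := by
        ext d
        simp only [Eset, Set.mem_ofPred_eq]
        constructor
        · rintro ⟨z, h1, h2, rfl⟩
          have h3 : |z| = m := by omega
          rcases abs_eq (by omega) |>.1 h3 with h | h
          · left; rw [h]
          · right; rw [h]; simp
        · rintro (h | h)
          · exact ⟨m, by rw [abs_of_nonneg (by omega)]; omega, by simp, h.symm⟩
          · exact ⟨-m, by rw [abs_neg, abs_of_nonneg (by omega)]; omega, by simp, by rw [h]; simp⟩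
      rw [e1]
      apply hamDec_unit
      · intro h
        have := cast_inj hn (z := m) (w := -m) (by simp) (by simp) (by rw [Int.cast_neg]; exact h)
        omega
      · apply gen_of_gcd
        rw [← Int.isCoprime_iff_gcd_eq_one]
        exact ⟨-2, 1, by rw [hn]; push_cast; ring⟩
    · have h1 := ih (e - 2) (by omega) (l + 2) (by omega)
      have h2 := pair_dec hn (l + 1) (by omega) (by omega)
      have h3 := hamDec_union h2 h1 (by
        rintro d h ⟨z, z1, z2, rfl⟩
        have hz : ∀ w : ℤ, |w| < |z| → (z : ZMod n) ≠ (w : ZMod n) := by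
          intro w hw heq
          have := cast_inj hn z2 (by omega) heq
          rw [this] at hw; omega
        push_cast at z1
        have w1 : |(l : ℤ) + 1| = l + 1 := abs_of_nonneg (by omega)
        have w2 : |(l : ℤ) + 1 + 1| = l + 1 + 1 := abs_of_nonneg (by omega)
        rcases h with h | h | h | h
        · exact hz _ (by omega) h
        · exact hz (-(l + 1)) (by rw [abs_neg]; omega) (by rw [h]; simp)
        · exact hz _ (by omega) h
        · exact hz (-(l + 1 + 1)) (by rw [abs_neg]; omega) (by rw [h]; simp))
      rw [show 2 + (e - 2) = e by omega] at h3
      convert h3 using 1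
      ext d
      simp only [Eset, pmset, Set.mem_union, Set.mem_ofPred_eq]
      constructor
      · rintro ⟨z, z1, z2, rfl⟩
        by_cases hz : ((l + 2 : ℕ) : ℤ) < |z|
        · exact Or.inr ⟨z, hz, z2, rfl⟩
        · left
          push_cast at hz
          rcases (show z = l + 1 ∨ z = -(l + 1) ∨ z = l + 1 + 1 ∨ z = -(l + 1 + 1) by
            rcases abs_cases z with ⟨h9, _⟩ | ⟨h9, _⟩ <;> omega)
            with h | h | h | h <;> rw [h] <;> simp
      · have w1 : |(l : ℤ) + 1| = l + 1 := abs_of_nonneg (by omega)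
        have w2 : |(l : ℤ) + 1 + 1| = l + 1 + 1 := abs_of_nonneg (by omega)
        rintro ((h | h | h | h) | ⟨z, z1, z2, rfl⟩)
        · exact ⟨l + 1, by omega, by omega, h.symm⟩
        · exact ⟨-(l + 1), by rw [abs_neg]; omega, by rw [abs_neg]; omega, by rw [h]; simp⟩
        · exact ⟨l + 1 + 1, by omega, by omega, h.symm⟩
        · exact ⟨-(l + 1 + 1), by rw [abs_neg]; omega, by rw [abs_neg]; omega, by rw [h]; simp⟩
        · exact ⟨z, by push_cast at z1; omega, z2, rfl⟩

end HWaux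
theorem stmt13 (k t l : ℕ) (hk : Odd k) (hk3 : 3 ≤ k) (ht : 1 ≤ t)
    (hl : l ≤ k * t) (hl1 : l ≠ 1) (hl2 : l ≠ 2)
    (hl3 : l ≠ k * t - 1) (hl4 : l ≠ k * t) :
    HW (cayley {p : ZMod k × ZMod (2 * k * t + 1) |
        (p.1 = 1 ∨ p.1 = -1) ∧ p.2 ≠ 0})
      k (2 * k * t + 1) (2 * l) (2 * k * t - 2 * l) := by
  have hb : 2 * k * t - 2 * l = 2 * (k * t - l) := by
    rw [Nat.mul_sub, mul_assoc]
  rw [hb]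
  have hn : 2 * k * t + 1 = 2 * (k * t) + 1 := by rw [mul_assoc]
  obtain ⟨S, hS, hS2⟩ := HWaux.ck_rows hk hk3 hn hl hl1 hl2
  obtain ⟨ι, _, G, hc, hreg, hconn, hG, hG2⟩ :=
    HWaux.Eset_dec hn (k * t - l) l (by omega)
  let e := Fintype.equivFinOfCardEq hc
  choose f hf using fun i => HWaux.potential hk hk3 ht rfl (G i) (hreg i) (hconn i)
  refine HWaux.assemble hk3 (HWaux.Dset (2 * k * t + 1) l)
    (HWaux.Eset (2 * k * t + 1) (k * t) l) ?_ ?_ ?_ S hS hS2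
    (fun i => G (e.symm i)) (fun i => f (e.symm i)) (fun i => hreg _) (fun i => hconn _)
    (fun i => hf _) (fun i => hG _) ?_
  · intro d hd
    have hz : ∃ z : ℤ, |z| ≤ (k * t : ℕ) ∧ (z : ZMod (2 * k * t + 1)) = d := by
      refine ⟨d.valMinAbs, ?_, ZMod.coe_valMinAbs d⟩
      have h := ZMod.valMinAbs_mem_Ioc d
      rw [Set.mem_Ioc] at h
      have h' : ((2 * k * t + 1 : ℕ) : ℤ) = 2 * ((k * t : ℕ) : ℤ) + 1 := by
        push_cast; ring
      rw [h'] at h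
      rw [abs_le]; omega
    obtain ⟨z, hz, rfl⟩ := hz
    by_cases h : |z| ≤ l
    · exact Or.inl ⟨z, fun h0 => hd (by simp [h0]), h, rfl⟩
    · exact Or.inr ⟨z, by omega, hz, rfl⟩
  · rintro d ⟨z, h0, h1, h2⟩ ⟨w, h3, h4, h5⟩
    have := HWaux.cast_inj hn (z := z) (w := w) (by omega) h4 (h2.trans h5.symm)
    subst this
    omega
  · rintro ⟨z, h0, h1, h2⟩
    exact h0 (HWaux.cast_inj hn (z := z) (w := 0) (by omega) (by rw [abs_zero]; positivity) (by simpa using h2))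
  · intro x y hxy
    obtain ⟨i, hi, hu⟩ := hG2 x y hxy
    refine ⟨e i, by simpa using hi, fun j hj => ?_⟩
    rw [← hu _ hj]; simp
end

section
/- Let k ≥ 3 and u ≥ 1. If a (k,1)-cycle frame of type 2^u exists, then the Cayley graph Cay(Z_k × Z_{2u}, ({0} × (Z_{2u} \ {0})) ∪ ({1, −1} × {0})) can be decomposed into u C_k-factors and one 1-factor (perfect matching). -/
open SimpleGraph

/-- The complete multipartite graph `K_u[g]` with parts indexed by the first
coordinate. -/
def completeMultipartiteG (u g : ℕ) : SimpleGraph (ZMod u × ZMod g) :=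
  SimpleGraph.fromRel (fun a b => a.1 ≠ b.1)

/-- A holey `C_k`-factor of `H` missing the set `hole`: a subgraph covering
exactly the vertices outside `hole`, 2-regular there, with all components
cycles of length `k`. -/
def IsHoleyCycleFactor {V : Type*} (H F : SimpleGraph V) (k : ℕ) (hole : Set V) : Prop :=
  F ≤ H ∧ F.support = holeᶜ ∧ (∀ v ∈ F.support, (F.neighborSet v).ncard = 2) ∧
  ∀ v ∈ F.support, {w | F.Reachable v w}.ncard = k

/-- A `(k,1)`-cycle frame of type `g^u`: a partition of the edges of `K_u[g]`
into holey `C_k`-factors, each missing one of the parts. -/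
def IsCycleFrame (k g u : ℕ) : Prop :=
  ∃ (N : ℕ) (F : Fin N → SimpleGraph (ZMod u × ZMod g)) (miss : Fin N → ZMod u),
    (∀ i, IsHoleyCycleFactor (completeMultipartiteG u g) (F i) k
      {p : ZMod u × ZMod g | p.1 = miss i}) ∧
    IsDecomp (completeMultipartiteG u g) F


theorem decomp_iff {V ι : Type*} (H : SimpleGraph V) (F : ι → SimpleGraph V) :
    IsDecomp H F ↔ (∀ i j a b, (F i).Adj a b → (F j).Adj a b → i = j) ∧
      ∀ a b, H.Adj a b ↔ ∃ i, (F i).Adj a b := by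
  unfold IsDecomp
  constructor
  · rintro ⟨h1, h2⟩
    refine ⟨fun i j a b hi hj => ?_, fun a b => ?_⟩
    · by_contra hne
      exact Set.disjoint_left.1 (h1 hne) ((mem_edgeSet _).2 hi) ((mem_edgeSet _).2 hj)
    · simpa using h2 s(a, b)
  · rintro ⟨h1, h2⟩
    refine ⟨fun i j hne => ?_, fun e => ?_⟩
    · refine Set.disjoint_left.2 ?_
      intro e
      induction e with
      | _ a b => exact fun hi hj => hne (h1 i j a b hi hj)
    · induction e with
      | _ a b => simpa using h2 a b

theorem kadj {u : ℕ} (a b : ZMod u × ZMod 2) :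
    (completeMultipartiteG u 2).Adj a b ↔ a.1 ≠ b.1 := by
  unfold completeMultipartiteG
  rw [fromRel_adj]
  constructor
  · rintro ⟨_, h | h⟩
    · exact h
    · exact h.symm
  · exact fun h => ⟨fun hab => h (by rw [hab]), Or.inl h⟩

theorem frame_index (k u : ℕ) (hu : 1 ≤ u) (h : IsCycleFrame k 2 u) :
    ∃ G : ZMod u → SimpleGraph (ZMod u × ZMod 2),
      (∀ x, IsHoleyCycleFactor (completeMultipartiteG u 2) (G x) k
        {p : ZMod u × ZMod 2 | p.1 = x}) ∧
      IsDecomp (completeMultipartiteG u 2) G := by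
  classical
  obtain ⟨N, F, miss, hF, hD⟩ := h
  have : NeZero u := ⟨by omega⟩
  by_cases hu1 : u = 1
  · subst hu1
    refine ⟨fun _ => ⊥, fun x => ⟨bot_le, ?_, ?_, ?_⟩, ?_⟩
    · ext p
      have : p.1 = x := Subsingleton.elim _ _
      simp [SimpleGraph.mem_support, this]
    · rintro v ⟨w, hw⟩
      exact hw.elim
    · rintro v ⟨w, hw⟩
      exact hw.elim
    · rw [decomp_iff]
      refine ⟨fun i j a b h => h.elim, fun a b => ?_⟩
      rw [kadj]
      simp only [bot_adj, exists_false, iff_false, not_not]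
      exact Subsingleton.elim _ _
  have hD' := (decomp_iff _ _).1 hD
  have key : ∀ x : ZMod u, (Finset.univ.filter fun i => miss i ≠ x).card = u - 1 := by
    intro x
    have h1 : (Finset.univ.filter ((completeMultipartiteG u 2).Adj (x, 0))).card
        = ∑ i, (Finset.univ.filter ((F i).Adj (x, 0))).card := by
      rw [← Finset.card_biUnion]
      · congr 1
        ext b
        simp [hD'.2]
      · intro i _ j _ hij
        rw [Function.onFun, Finset.disjoint_left]
        intro b hb hb'
        simp only [Finset.mem_filter, Finset.mem_univ, true_and] at hb hb'
        exact hij (hD'.1 i j _ _ hb hb')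
    have h2 : (Finset.univ.filter ((completeMultipartiteG u 2).Adj (x, 0))).card = (u - 1) * 2 := by
      have : (Finset.univ.filter ((completeMultipartiteG u 2).Adj (x, 0)))
          = ({x}ᶜ : Finset (ZMod u)) ×ˢ (Finset.univ : Finset (ZMod 2)) := by
        ext b
        simp [kadj, eq_comm]
      rw [this, Finset.card_product, Finset.card_compl, ZMod.card]
      simp [ZMod.card]
    have h3 : ∀ i, (Finset.univ.filter ((F i).Adj (x, 0))).card = if miss i ≠ x then 2 else 0 := by
      intro i
      obtain ⟨_, hs, hn, _⟩ := hF i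
      have hiff : (x, (0 : ZMod 2)) ∈ (F i).support ↔ miss i ≠ x := by
        rw [hs]; simp [eq_comm]
      split_ifs with hx
      · have := hn _ (hiff.2 hx)
        refine Eq.trans ?_ this
        rw [← Set.ncard_coe_finset]
        congr 1
        ext b; simp
      · rw [Finset.card_eq_zero, Finset.filter_eq_empty_iff]
        intro b _ hb
        exact hx (hiff.1 ⟨b, hb⟩)
    rw [h2, Finset.sum_congr rfl (fun i _ => h3 i), ← Finset.sum_filter, Finset.sum_const,
      smul_eq_mul] at h1
    omega
  have hc : ∀ x : ZMod u, (Finset.univ.filter fun i => miss i = x).card = N - (u - 1) := by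
    intro x
    have := Finset.card_filter_add_card_filter_not (s := (Finset.univ : Finset (Fin N)))
      (fun i => miss i = x)
    rw [Finset.card_univ, Fintype.card_fin] at this
    have h2 := key x
    simp only [ne_eq] at h2
    omega
  have hle : u - 1 ≤ N := by
    rw [← key 0]
    exact (Finset.card_le_univ _).trans (by simp)
  have hsum : N = u * (N - (u - 1)) := by
    have := Finset.card_eq_sum_card_fiberwise (s := (Finset.univ : Finset (Fin N)))
      (t := (Finset.univ : Finset (ZMod u))) (f := miss) (by intro _ _; simp)
    rw [Finset.sum_congr rfl (fun x _ => hc x)] at this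
    simpa [ZMod.card] using this
  have hone : N - (u - 1) = 1 := by
    obtain ⟨c, rfl⟩ : ∃ c, N = c + (u - 1) := ⟨N - (u - 1), by omega⟩
    obtain ⟨d, rfl⟩ : ∃ d, u = d + 2 := ⟨u - 2, by omega⟩
    simp only [Nat.add_sub_cancel] at hsum ⊢
    have h4 : c + (d + 1) = (d + 2) * c := hsum
    have : (d + 1) * c = (d + 1) * 1 := by nlinarith
    exact Nat.eq_of_mul_eq_mul_left (by omega) this
  have hbij : Function.Bijective miss := by
    rw [Function.bijective_iff_existsUnique]
    intro x
    have := hc x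
    rw [hone, Finset.card_eq_one] at this
    obtain ⟨i, hi⟩ := this
    have hm : ∀ j, miss j = x ↔ j = i := by
      intro j
      have : j ∈ (Finset.univ.filter fun i => miss i = x) ↔ j ∈ ({i} : Finset _) := by rw [hi]
      simpa using this
    exact ⟨i, (hm i).2 rfl, fun j hj => (hm j).1 hj⟩
  let e := Equiv.ofBijective miss hbij
  refine ⟨fun x => F (e.symm x), fun x => ?_, ?_⟩
  · have := hF (e.symm x)
    have hx : miss (e.symm x) = x := e.apply_symm_apply x
    rwa [hx] at this
  · rw [decomp_iff]
    refine ⟨fun i j a b hi hj => e.symm.injective (hD'.1 _ _ a b hi hj), fun a b => ?_⟩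
    rw [hD'.2]
    exact e.symm.surjective.exists

/-- layers of `G` together with vertical cycles over `S` -/
def liftG {W : Type*} (k : ℕ) (G : SimpleGraph W) (S : Set W) (hk : 3 ≤ k) :
    SimpleGraph (ZMod k × W) where
  Adj v w := (v.1 = w.1 ∧ G.Adj v.2 w.2) ∨
    (v.2 = w.2 ∧ v.2 ∈ S ∧ (v.1 - w.1 = 1 ∨ v.1 - w.1 = -1))
  symm := ⟨by
    rintro v w (⟨h1, h2⟩ | ⟨h1, h2, h3⟩)
    · exact Or.inl ⟨h1.symm, h2.symm⟩
    · refine Or.inr ⟨h1.symm, h1 ▸ h2, ?_⟩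
      rcases h3 with h3 | h3
      · right; rw [← h3]; ring
      · left; rw [← neg_sub, h3]; ring⟩
  loopless := ⟨by
    have : Fact (1 < k) := ⟨by omega⟩
    rintro v (⟨h1, h2⟩ | ⟨h1, h2, h3⟩)
    · exact h2.ne rfl
    · simp at h3⟩

theorem zmod_one_ne (k : ℕ) (hk : 3 ≤ k) : (1 : ZMod k) ≠ -1 := by
  intro h
  have : Fact (2 < k) := ⟨by omega⟩
  exact ZMod.neg_one_ne_one h.symm

theorem lift_factor {W : Type*} (k : ℕ) (G : SimpleGraph W) (S : Set W) (hk : 3 ≤ k)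
    (hs : G.support = Sᶜ) (hn : ∀ v ∈ G.support, (G.neighborSet v).ncard = 2)
    (hr : ∀ v ∈ G.support, {w | G.Reachable v w}.ncard = k) :
    (∀ v, ((liftG k G S hk).neighborSet v).ncard = 2) ∧
    ∀ v, {w | (liftG k G S hk).Reachable v w}.ncard = k := by
  have : NeZero k := ⟨by omega⟩
  have hS : ∀ p ∈ S, ∀ q, ¬ G.Adj p q := by
    intro p hp q hq
    have : p ∈ G.support := ⟨q, hq⟩
    rw [hs] at this
    exact this hp
  have inv : ∀ v w, (liftG k G S hk).Reachable v w →
      (v.2 ∈ S → w.2 = v.2) ∧ (v.2 ∉ S → w.1 = v.1 ∧ G.Reachable v.2 w.2) := by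
    rintro v w ⟨p⟩
    induction p with
    | nil => exact ⟨fun _ => rfl, fun _ => ⟨rfl, Reachable.refl _⟩⟩
    | @cons a b c hab p ih =>
      rcases hab with ⟨h1, h2⟩ | ⟨h1, h2, h3⟩
      · refine ⟨fun h => (hS _ h _ h2).elim, fun h => ?_⟩
        have hb : b.2 ∉ S := fun hb => hS _ hb _ h2.symm
        have := ih.2 hb
        exact ⟨this.1.trans h1.symm, h2.reachable.trans this.2⟩
      · exact ⟨fun h => (ih.1 (h1 ▸ h)).trans h1.symm, fun h => (h h2).elim⟩
  constructor
  · rintro ⟨a, p⟩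
    by_cases hp : p ∈ S
    · have : (liftG k G S hk).neighborSet (a, p) = {(a - 1, p), (a + 1, p)} := by
        ext ⟨b, q⟩
        simp only [mem_neighborSet, liftG, Set.mem_insert_iff, Set.mem_singleton_iff, Prod.mk.injEq]
        constructor
        · rintro (⟨h1, h2⟩ | ⟨h1, h2, h3 | h3⟩)
          · exact (hS _ hp _ h2).elim
          · left; exact ⟨by rw [← h3]; ring, h1.symm⟩
          · right; exact ⟨by rw [← neg_eq_iff_eq_neg.2 h3]; ring, h1.symm⟩
        · rintro (⟨rfl, rfl⟩ | ⟨rfl, rfl⟩)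
          · right; exact ⟨rfl, hp, by left; ring⟩
          · right; exact ⟨rfl, hp, by right; ring⟩
      rw [this, Set.ncard_pair]
      intro h
      have h1 : a - 1 = a + 1 := congrArg Prod.fst h
      apply zmod_one_ne k hk
      linear_combination -h1
    · have : (liftG k G S hk).neighborSet (a, p) = (fun q => (a, q)) '' G.neighborSet p := by
        ext ⟨b, q⟩
        simp only [mem_neighborSet, liftG, Set.mem_image, Prod.mk.injEq]
        constructor
        · rintro (⟨h1, h2⟩ | ⟨h1, h2, h3⟩)
          · exact ⟨q, h2, h1, rfl⟩
          · exact (hp h2).elim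
        · rintro ⟨q', h, rfl, rfl⟩
          exact Or.inl ⟨rfl, h⟩
      rw [this, Set.ncard_image_of_injective _ (Prod.mk_right_injective a)]
      exact hn p (by rw [hs]; exact hp)
  · rintro ⟨a, p⟩
    by_cases hp : p ∈ S
    · have : {w | (liftG k G S hk).Reachable (a, p) w} = (fun b => (b, p)) '' Set.univ := by
        ext ⟨b, q⟩
        simp only [Set.mem_ofPred_eq, Set.mem_image, Set.mem_univ, true_and, Prod.mk.injEq]
        constructor
        · intro h
          exact ⟨b, rfl, ((inv _ _ h).1 hp).symm⟩
        · rintro ⟨b', rfl, rfl⟩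
          have step : ∀ n : ℕ, (liftG k G S hk).Reachable (a, p) (a + n, p) := by
            intro n
            induction n with
            | zero => simp
            | succ n ih =>
              refine ih.trans (Adj.reachable ?_)
              exact Or.inr ⟨rfl, hp, Or.inr (by push_cast; ring)⟩
          have := step (b' - a).val
          rwa [ZMod.natCast_zmod_val, add_sub_cancel] at this
      rw [this, Set.ncard_image_of_injective _ (Prod.mk_left_injective p), Set.ncard_univ]
      simp
    · have : {w | (liftG k G S hk).Reachable (a, p) w} = (fun q => (a, q)) '' {q | G.Reachable p q} := by
        ext ⟨b, q⟩
        simp only [Set.mem_ofPred_eq, Set.mem_image, Prod.mk.injEq]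
        constructor
        · intro h
          have := (inv _ _ h).2 hp
          exact ⟨q, this.2, this.1.symm, rfl⟩
        · rintro ⟨q', h, rfl, rfl⟩
          let f : G →g liftG k G S hk := ⟨fun q => (a, q), fun h => Or.inl ⟨rfl, h⟩⟩
          exact h.map f
      rw [this, Set.ncard_image_of_injective _ (Prod.mk_right_injective a)]
      exact hr p (by rw [hs]; exact hp)

theorem comap_props {V W : Type*} (e : V ≃ W) (G : SimpleGraph W) (v : V) :
    ((G.comap e).neighborSet v).ncard = (G.neighborSet (e v)).ncard ∧
    {w | (G.comap e).Reachable v w}.ncard = {w | G.Reachable (e v) w}.ncard := by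
  constructor
  · have : G.neighborSet (e v) = e '' ((G.comap e).neighborSet v) := by
      ext q
      obtain ⟨q, rfl⟩ := e.surjective q
      simp
    rw [this, Set.ncard_image_of_injective _ e.injective]
  · have : {w | G.Reachable (e v) w} = e '' {w | (G.comap e).Reachable v w} := by
      ext q
      obtain ⟨q, rfl⟩ := e.surjective q
      have := (Iso.comap e G).reachable_iff (u := v) (v := q)
      simpa using this
    rw [this, Set.ncard_image_of_injective _ e.injective]

theorem cay_adj (k n : ℕ) (hk : 3 ≤ k) (v w : ZMod k × ZMod n) :
    (cayley {p : ZMod k × ZMod n |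
          (p.1 = 0 ∧ p.2 ≠ 0) ∨ ((p.1 = 1 ∨ p.1 = -1) ∧ p.2 = 0)}).Adj v w ↔
    (v.1 = w.1 ∧ v.2 ≠ w.2) ∨ (v.2 = w.2 ∧ (v.1 - w.1 = 1 ∨ v.1 - w.1 = -1)) := by
  have : Fact (1 < k) := ⟨by omega⟩
  unfold cayley
  rw [fromRel_adj]
  simp only [Set.mem_ofPred_eq, Prod.fst_sub, Prod.snd_sub, sub_eq_zero, ne_eq]
  have e1 : w.1 - v.1 = 1 ↔ v.1 - w.1 = -1 := by rw [← neg_sub, neg_eq_iff_eq_neg]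
  have e2 : w.1 - v.1 = -1 ↔ v.1 - w.1 = 1 := by rw [← neg_sub, neg_inj]
  rw [e1, e2]
  have h0 : v = w → ¬ (v.1 - w.1 = 1 ∨ v.1 - w.1 = -1) := by rintro rfl; simp
  have h0' : v = w → v.2 = w.2 := by rintro rfl; rfl
  rw [eq_comm (a := w.1) (b := v.1), eq_comm (a := w.2) (b := v.2)]
  tauto

theorem stmt14 (k u : ℕ) (hk : 3 ≤ k) (hu : 1 ≤ u) (h : IsCycleFrame k 2 u) :
    ∃ F : Fin u ⊕ Unit → SimpleGraph (ZMod k × ZMod (2 * u)),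
      (∀ i, IsCycleFactor
        (cayley {p : ZMod k × ZMod (2 * u) |
          (p.1 = 0 ∧ p.2 ≠ 0) ∨ ((p.1 = 1 ∨ p.1 = -1) ∧ p.2 = 0)})
        (F (Sum.inl i)) k) ∧
      (∀ j, F (Sum.inr j) ≤
          cayley {p : ZMod k × ZMod (2 * u) |
            (p.1 = 0 ∧ p.2 ≠ 0) ∨ ((p.1 = 1 ∨ p.1 = -1) ∧ p.2 = 0)} ∧
        ∀ v, ((F (Sum.inr j)).neighborSet v).ncard = 1) ∧
      IsDecomp
        (cayley {p : ZMod k × ZMod (2 * u) |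
          (p.1 = 0 ∧ p.2 ≠ 0) ∨ ((p.1 = 1 ∨ p.1 = -1) ∧ p.2 = 0)}) F := by
  have : NeZero u := ⟨by omega⟩
  have : NeZero (2 * u) := ⟨by omega⟩
  obtain ⟨G, hG, hD⟩ := frame_index k u hu h
  have hD' := (decomp_iff _ _).1 hD
  let e : ZMod (2 * u) ≃ ZMod u × ZMod 2 :=
    Fintype.equivOfCardEq (by simp [ZMod.card, mul_comm])
  let ι : Fin u ≃ ZMod u := Fintype.equivOfCardEq (by simp [ZMod.card])
  let M : SimpleGraph (ZMod k × ZMod (2 * u)) :=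
    { Adj := fun v w => v.1 = w.1 ∧ v.2 ≠ w.2 ∧ (e v.2).1 = (e w.2).1
      symm := ⟨fun v w h => ⟨h.1.symm, h.2.1.symm, h.2.2.symm⟩⟩
      loopless := ⟨fun v h => h.2.1 rfl⟩ }
  let L : Fin u → SimpleGraph (ZMod k × ZMod (2 * u)) := fun i =>
    liftG k ((G (ι i)).comap e) {p | (e p).1 = ι i} hk
  have hGne : ∀ x p q, (G x).Adj p q → p.1 ≠ q.1 := fun x p q hpq =>
    (kadj p q).1 ((hG x).1 hpq)
  have hL : ∀ i v w, (L i).Adj v w ↔ (v.1 = w.1 ∧ (G (ι i)).Adj (e v.2) (e w.2)) ∨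
      (v.2 = w.2 ∧ (e v.2).1 = ι i ∧ (v.1 - w.1 = 1 ∨ v.1 - w.1 = -1)) := fun _ _ _ => Iff.rfl
  have hM : ∀ v w, M.Adj v w ↔ v.1 = w.1 ∧ v.2 ≠ w.2 ∧ (e v.2).1 = (e w.2).1 :=
    fun _ _ => Iff.rfl
  have hLle : ∀ i v w, (L i).Adj v w → (v.1 = w.1 ∧ v.2 ≠ w.2) ∨
      (v.2 = w.2 ∧ (v.1 - w.1 = 1 ∨ v.1 - w.1 = -1)) := by
    intro i v w hvw
    rcases (hL i v w).1 hvw with ⟨h1, h2⟩ | ⟨h1, h2, h3⟩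
    · exact Or.inl ⟨h1, fun h => hGne _ _ _ h2 (by rw [h])⟩
    · exact Or.inr ⟨h1, h3⟩
  refine ⟨Sum.elim L (fun _ => M), fun i => ⟨?_, ?_⟩, fun j => ⟨?_, ?_⟩, ?_⟩
  · intro v w hvw
    exact (cay_adj k _ hk v w).2 (hLle i v w hvw)
  · obtain ⟨_, hs, hn, hr⟩ := hG (ι i)
    have hsup : ∀ v, v ∈ ((G (ι i)).comap e).support ↔ e v ∈ (G (ι i)).support := by
      intro v
      simp only [mem_support, comap_adj]
      exact (e.surjective.exists (p := fun w => (G (ι i)).Adj (e v) w)).symm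
    refine lift_factor k _ _ hk ?_ ?_ ?_
    · ext v
      rw [hsup, hs]; rfl
    · intro v hv
      rw [(comap_props e _ v).1]
      exact hn _ ((hsup v).1 hv)
    · intro v hv
      rw [(comap_props e _ v).2]
      exact hr _ ((hsup v).1 hv)
  · intro v w hvw
    exact (cay_adj k _ hk v w).2 (Or.inl ⟨hvw.1, hvw.2.1⟩)
  · rintro ⟨a, p⟩
    rw [Set.ncard_eq_one]
    have h2 : ∀ s t : ZMod 2, s ≠ t ↔ t = s + 1 := by decide
    refine ⟨(a, e.symm ((e p).1, (e p).2 + 1)), ?_⟩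
    ext ⟨b, q⟩
    obtain ⟨q, rfl⟩ := e.symm.surjective q
    obtain ⟨p, rfl⟩ := e.symm.surjective p
    obtain ⟨p1, p2⟩ := p
    obtain ⟨q1, q2⟩ := q
    simp only [Sum.elim_inr, mem_neighborSet, hM, Set.mem_singleton_iff, Prod.mk.injEq,
      Equiv.apply_symm_apply, ne_eq, EmbeddingLike.apply_eq_iff_eq]
    have := h2 p2 q2
    constructor
    · rintro ⟨rfl, h3, rfl⟩
      exact ⟨rfl, rfl, this.1 fun h => h3 ⟨rfl, h⟩⟩
    · rintro ⟨rfl, rfl, h⟩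
      exact ⟨rfl, fun h3 => this.2 h h3.2, rfl⟩
  · rw [decomp_iff]
    have hML : ∀ i v w, (L i).Adj v w → ¬ M.Adj v w := by
      rintro i v w hvw ⟨h1, h2, h3⟩
      rcases (hL i v w).1 hvw with ⟨_, h4⟩ | ⟨h4, _⟩
      · exact hGne _ _ _ h4 h3
      · exact h2 h4
    constructor
    · rintro (i | i) (j | j) v w hi hj
      · congr 1
        apply ι.injective
        rcases (hL i v w).1 hi with ⟨h1, h2⟩ | ⟨h1, h2, h3⟩ <;>
          rcases (hL j v w).1 hj with ⟨h4, h5⟩ | ⟨h4, h5, h6⟩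
        · exact hD'.1 _ _ _ _ h2 h5
        · exact (hGne _ _ _ h2 (by rw [h4])).elim
        · exact (hGne _ _ _ h5 (by rw [h1])).elim
        · exact h2.symm.trans h5
      · exact (hML _ _ _ hi hj).elim
      · exact (hML _ _ _ hj hi).elim
      · rfl
    · intro v w
      rw [cay_adj k _ hk]
      constructor
      · rintro (⟨h1, h2⟩ | ⟨h1, h2⟩)
        · by_cases h3 : (e v.2).1 = (e w.2).1
          · exact ⟨Sum.inr (), h1, h2, h3⟩
          · obtain ⟨x, hx⟩ := (hD'.2 _ _).1 ((kadj (e v.2) (e w.2)).2 h3)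
            refine ⟨Sum.inl (ι.symm x), (hL _ _ _).2 (Or.inl ⟨h1, ?_⟩)⟩
            rwa [Equiv.apply_symm_apply]
        · exact ⟨Sum.inl (ι.symm (e v.2).1), (hL _ _ _).2 (Or.inr ⟨h1, by simp, h2⟩)⟩
      · rintro ⟨i | i, hi⟩
        · exact hLle i v w hi
        · exact Or.inl ⟨hi.1, hi.2.1⟩
end

section
/- (6, 5) ∈ HWP(C_3[11]; 3, 11); that is, the edge set of C_3[11] can be partitioned into 6 C_3-factors and 5 C_11-factors. -/
open SimpleGraph

def tabA15 : List (List ℕ) := [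
  [11, 12, 13, 14, 15, 16, 17, 18, 19, 20, 21, 22, 23, 24, 25, 26, 27, 28, 29, 30, 31, 32, 0, 1, 2, 3, 4, 5, 6, 7, 8, 9, 10],
  [19, 21, 18, 12, 14, 15, 20, 13, 11, 17, 16, 27, 30, 28, 32, 25, 24, 23, 22, 26, 29, 31, 2, 9, 10, 5, 0, 8, 7, 6, 3, 1, 4],
  [15, 20, 21, 19, 13, 18, 11, 16, 14, 12, 17, 26, 28, 31, 29, 32, 30, 25, 24, 23, 22, 27, 1, 3, 5, 10, 6, 2, 9, 8, 7, 4, 0],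
  [14, 11, 16, 21, 20, 13, 19, 12, 17, 15, 18, 32, 22, 29, 27, 30, 23, 31, 26, 25, 24, 28, 7, 2, 4, 6, 10, 0, 3, 5, 9, 8, 1],
  [16, 15, 12, 17, 21, 11, 14, 20, 13, 18, 19, 31, 32, 23, 30, 28, 25, 24, 27, 22, 26, 29, 10, 8, 3, 0, 7, 9, 1, 4, 6, 5, 2],
  [21, 17, 11, 13, 18, 19, 12, 15, 16, 14, 20, 29, 27, 32, 24, 31, 22, 26, 25, 28, 23, 30, 8, 10, 9, 4, 1, 6, 5, 2, 0, 7, 3]]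

def tabB15 : List (List ℕ) := [
  [20, 13, 25, 11, 16, 17, 15, 14, 18, 21, 12, 28, 31, 22, 26, 23, 3, 30, 32, 29, 27, 24, 9, 4, 19, 8, 5, 1, 10, 0, 2, 6, 7],
  [17, 16, 14, 26, 12, 21, 18, 11, 15, 19, 13, 24, 29, 27, 23, 22, 28, 4, 31, 32, 30, 25, 6, 5, 0, 20, 9, 7, 2, 10, 1, 3, 8],
  [13, 18, 17, 15, 22, 20, 21, 19, 12, 11, 14, 23, 25, 30, 28, 24, 31, 29, 0, 27, 32, 26, 5, 7, 6, 1, 16, 4, 8, 3, 10, 2, 9],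
  [23, 14, 19, 18, 11, 12, 16, 21, 20, 13, 15, 25, 24, 26, 31, 29, 32, 27, 30, 1, 28, 22, 17, 6, 8, 7, 2, 3, 0, 9, 4, 10, 5],
  [12, 24, 15, 20, 19, 14, 13, 17, 21, 16, 11, 30, 26, 25, 22, 27, 29, 32, 28, 31, 2, 23, 3, 18, 7, 9, 8, 10, 4, 1, 5, 0, 6]]

def dec15 (n : ℕ) : ZMod 3 × ZMod 11 :=
  ((⟨n / 11 % 3, Nat.mod_lt _ (by decide)⟩ : Fin 3), (⟨n % 11, Nat.mod_lt _ (by decide)⟩ : Fin 11))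

def enc15 (v : ZMod 3 × ZMod 11) : ℕ :=
  11 * Fin.val (n := 3) v.1 + Fin.val (n := 11) v.2

def row15 : Fin 6 ⊕ Fin 5 → List ℕ
  | Sum.inl i => tabA15.getD i.val []
  | Sum.inr j => tabB15.getD j.val []

def s15 (k : Fin 6 ⊕ Fin 5) (v : ZMod 3 × ZMod 11) : ZMod 3 × ZMod 11 :=
  dec15 ((row15 k).getD (enc15 v) 0)

lemma factor15 {V : Type*} (H : SimpleGraph V) (s : V → V) (k : ℕ) (hk : 3 ≤ k)
    (h1 : ∀ v, s^[k] v = v) (h2 : ∀ v, ∀ t < k, 0 < t → s^[t] v ≠ v)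
    (hH : ∀ v, H.Adj v (s v)) :
    IsCycleFactor H (SimpleGraph.fromRel (fun a b => s a = b)) k := by
  have hne : ∀ v, s v ≠ v := fun v => h2 v 1 (by omega) (by omega)
  have hadj : ∀ a b, (SimpleGraph.fromRel (fun a b => s a = b)).Adj a b ↔ s a = b ∨ s b = a := by
    intro a b
    rw [SimpleGraph.fromRel_adj]
    constructor
    · exact fun h => h.2
    · intro h
      refine ⟨?_, h⟩
      rintro rfl
      exact hne a (by tauto)
  have hpred : ∀ a, s (s^[k-1] a) = a := by
    intro a
    rw [← Function.iterate_succ_apply' s, show (k-1).succ = k by omega, h1]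
  have hpred' : ∀ a b, s b = a → b = s^[k-1] a := by
    rintro a b rfl
    rw [← Function.iterate_succ_apply s, show (k-1).succ = k by omega, h1]
  refine ⟨?_, ?_, ?_⟩
  · intro a b h
    rcases (hadj a b).1 h with rfl | rfl
    · exact hH a
    · exact (hH b).symm
  · intro v
    have : (SimpleGraph.fromRel (fun a b => s a = b)).neighborSet v = {s v, s^[k-1] v} := by
      ext w
      rw [SimpleGraph.mem_neighborSet, hadj]
      simp only [Set.mem_insert_iff, Set.mem_singleton_iff]
      constructor
      · rintro (h | h)
        · exact Or.inl h.symm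
        · exact Or.inr (hpred' _ _ h)
      · rintro (h | h)
        · exact Or.inl h.symm
        · right; rw [h, hpred]
    rw [this, Set.ncard_pair]
    intro h
    have h3 := congrArg s h
    rw [hpred] at h3
    exact h2 v 2 (by omega) (by omega) h3
  · intro v
    have hset : {w | (SimpleGraph.fromRel (fun a b => s a = b)).Reachable v w}
        = (fun t => s^[t] v) '' (Finset.range k : Set ℕ) := by
      ext w
      simp only [Set.mem_setOf_eq, Set.mem_image, Finset.coe_range, Set.mem_Iio]
      constructor
      · rintro ⟨p⟩
        have key : ∀ a b, (SimpleGraph.fromRel (fun a b => s a = b)).Walk a b →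
            (∃ t < k, s^[t] v = a) → ∃ t < k, s^[t] v = b := by
          intro a b p
          induction p with
          | nil => exact id
          | cons h p ih =>
            rintro ⟨t, ht, hta⟩
            apply ih
            rcases (hadj _ _).1 h with h | h
            · rcases Nat.lt_or_ge (t + 1) k with h' | h'
              · exact ⟨t + 1, h', by rw [Function.iterate_succ_apply', hta, h]⟩
              · refine ⟨0, by omega, ?_⟩
                rw [← h, ← hta, ← Function.iterate_succ_apply' s, show t.succ = k by omega, h1]
                rfl
            · have h4 := hpred' _ _ h
              rcases t with _ | t
              · exact ⟨k - 1, by omega, by rw [h4, ← hta]; rfl⟩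
              · refine ⟨t, by omega, ?_⟩
                rw [h4, ← hta, ← Function.iterate_add_apply,
                  show k - 1 + (t + 1) = t + k by omega, Function.iterate_add_apply, h1]
        exact key v w p ⟨0, by omega, rfl⟩
      · rintro ⟨t, -, rfl⟩
        induction t with
        | zero => exact SimpleGraph.Reachable.refl _
        | succ t ih =>
          refine ih.trans (SimpleGraph.Adj.reachable ?_)
          rw [hadj, Function.iterate_succ_apply']
          exact Or.inl rfl
    have aux : ∀ a b, a < b → b < k → s^[a] v ≠ s^[b] v := by
      intro a b hab hb h
      apply h2 (s^[a] v) (b - a) (by omega) (by omega)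
      rw [← Function.iterate_add_apply, show b - a + a = b by omega, h]
    rw [hset, Set.ncard_image_of_injOn, Set.ncard_coe_finset, Finset.card_range]
    intro a ha b hb h
    simp only [Finset.coe_range, Set.mem_Iio] at ha hb
    rcases lt_trichotomy a b with h' | h' | h'
    · exact absurd h (aux a b h' hb)
    · exact h'
    · exact absurd h.symm (aux b a h' ha)

abbrev V15 := ZMod 3 × ZMod 11

lemma cA15 : ∀ i : Fin 6, ∀ v : V15, (s15 (Sum.inl i))^[3] v = v ∧
    ∀ t < 3, 0 < t → (s15 (Sum.inl i))^[t] v ≠ v := by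
  decide +kernel

lemma cB15 : ∀ i : Fin 5, ∀ v : V15, (s15 (Sum.inr i))^[11] v = v ∧
    ∀ t < 11, 0 < t → (s15 (Sum.inr i))^[t] v ≠ v := by
  decide +kernel

lemma cH15 : ∀ k, ∀ v : V15, v ≠ s15 k v ∧
    (v.1 - (s15 k v).1 = 1 ∨ (s15 k v).1 - v.1 = 1) := by
  decide +kernel

lemma cD15 : ∀ k l, k ≠ l → ∀ v : V15, s15 k v ≠ s15 l v ∧ s15 k (s15 l v) ≠ v := by
  decide +kernel

lemma cC15 : ∀ a b : V15, a.1 - b.1 = 1 → ∃ k, s15 k a = b ∨ s15 k b = a := by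
  decide +kernel

theorem stmt15 : HW (lexCycle 3 11) 3 11 6 5 := by
  have hH : ∀ k v, (lexCycle 3 11).Adj v (s15 k v) := by
    intro k v
    rw [lexCycle, SimpleGraph.fromRel_adj]
    exact cH15 k v
  refine ⟨fun k => SimpleGraph.fromRel (fun a b => s15 k a = b), ?_, ?_, ?_, ?_⟩
  · intro i
    exact factor15 _ _ _ le_rfl (fun v => (cA15 i v).1) (fun v => (cA15 i v).2) (hH _)
  · intro i
    exact factor15 _ _ _ (by norm_num) (fun v => (cB15 i v).1) (fun v => (cB15 i v).2) (hH _)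
  · intro k l hkl
    rw [Set.disjoint_left]
    intro e
    induction e with
    | _ a b =>
      simp only [SimpleGraph.mem_edgeSet, SimpleGraph.fromRel_adj]
      rintro ⟨-, h1⟩ ⟨-, h2⟩
      rcases h1 with h1 | h1 <;> rcases h2 with h2 | h2
      · exact (cD15 k l hkl a).1 (h1.trans h2.symm)
      · exact (cD15 k l hkl b).2 ((congrArg _ h2).trans h1)
      · exact (cD15 k l hkl a).2 ((congrArg _ h2).trans h1)
      · exact (cD15 k l hkl b).1 (h1.trans h2.symm)
  · intro e
    induction e with
    | _ a b =>
      simp only [SimpleGraph.mem_edgeSet]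
      constructor
      · intro h
        have h' := h
        rw [lexCycle, SimpleGraph.fromRel_adj] at h'
        obtain ⟨hne, h1 | h1⟩ := h'
        · obtain ⟨k, hk⟩ := cC15 a b h1
          exact ⟨k, (SimpleGraph.fromRel_adj _ _ _).2 ⟨hne, hk⟩⟩
        · obtain ⟨k, hk⟩ := cC15 b a h1
          exact ⟨k, (SimpleGraph.fromRel_adj _ _ _).2 ⟨hne, hk.symm⟩⟩
      · rintro ⟨k, hk⟩
        rw [SimpleGraph.fromRel_adj] at hk
        obtain ⟨-, rfl | rfl⟩ := hk
        · exact hH k a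
        · exact (hH k b).symm
end

section
/- (8, 5) ∈ HWP(C_3[13]; 3, 13); that is, the edge set of C_3[13] can be partitioned into 8 C_3-factors and 5 C_13-factors. -/
open SimpleGraph

abbrev VV := ZMod 3 × ZMod 13

def triD : Fin 8 → Fin 3 → ZMod 13 :=
  ![![0, 1, 12],
    ![1, 4, 8],
    ![3, 5, 5],
    ![4, 6, 3],
    ![5, 8, 0],
    ![6, 3, 4],
    ![8, 12, 6],
    ![12, 0, 1]]

def cycN : Fin 5 → Fin 13 → ZMod 13 :=
  ![![6, 3, 4, 0, 11, 12, 9, 5, 1, 2, 8, 7, 10],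
    ![11, 4, 12, 10, 7, 9, 8, 0, 2, 3, 6, 5, 1],
    ![9, 7, 4, 5, 6, 8, 3, 10, 12, 11, 0, 2, 1],
    ![2, 10, 6, 5, 8, 1, 12, 3, 11, 7, 4, 0, 9],
    ![2, 3, 5, 12, 0, 7, 4, 9, 6, 11, 8, 1, 10]]

def cycS : Fin 5 → Fin 13 → ZMod 3 :=
  ![![2, 2, 2, 1, 1, 1, 2, 2, 2, 2, 1, 1, 2],
    ![1, 2, 1, 1, 2, 2, 2, 2, 1, 1, 1, 1, 1],
    ![1, 2, 1, 1, 2, 2, 1, 2, 2, 1, 2, 2, 2],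
    ![1, 1, 2, 2, 2, 1, 2, 1, 2, 1, 1, 1, 1],
    ![2, 1, 2, 1, 1, 2, 2, 1, 2, 2, 2, 2, 1]]

def sT (i : Fin 8) (a : VV) : VV := (a.1 + 1, a.2 + triD i a.1)

def sC (j : Fin 5) (a : VV) : VV := (a.1 + cycS j a.2, cycN j a.2)

def sA : Fin 8 ⊕ Fin 5 → VV → VV
  | Sum.inl i => sT i
  | Sum.inr j => sC j

def sF (s : VV → VV) : SimpleGraph VV := SimpleGraph.fromRel (fun a b => s a = b)

lemma sF_factor (s : VV → VV) (k : ℕ) (h0 : ∀ a, s^[k + 1] a = a)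
    (h1 : ∀ a, (a.1 - (s a).1 = 1 ∨ (s a).1 - a.1 = 1))
    (h2 : ∀ a, s (s a) ≠ a)
    (h3 : ∀ a, ((Finset.range (k + 1)).image (fun i => s^[i] a)).card = k + 1) :
    IsCycleFactor (lexCycle 3 13) (sF s) (k + 1) := by
  have hne : ∀ a, s a ≠ a := fun a h => h2 a (by rw [h, h])
  have hadj : ∀ a b, (sF s).Adj a b ↔ s a = b ∨ s b = a := by
    intro a b
    simp only [sF, SimpleGraph.fromRel_adj]
    constructor
    · exact fun h => h.2
    · rintro (h | h)
      · exact ⟨fun e => hne a (h.trans e.symm), Or.inl h⟩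
      · exact ⟨fun e => hne b (h.trans e), Or.inr h⟩
  have hinv : ∀ a, s (s^[k] a) = a := fun a => by
    rw [← Function.iterate_succ_apply' s k a]; exact h0 a
  have hinv' : ∀ a, s^[k] (s a) = a := fun a => by
    rw [← Function.iterate_succ_apply s k a]; exact h0 a
  refine ⟨?_, ?_, ?_⟩
  · intro a b hab
    have hn := hab.ne
    rw [hadj] at hab
    rw [lexCycle, SimpleGraph.fromRel_adj]
    refine ⟨hn, ?_⟩
    rcases hab with h | h
    · rw [← h]; exact h1 a
    · rw [← h]; exact (h1 b).symm
  · intro v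
    have : (sF s).neighborSet v = {s v, s^[k] v} := by
      ext w
      simp only [SimpleGraph.mem_neighborSet, hadj, Set.mem_insert_iff, Set.mem_singleton_iff]
      constructor
      · rintro (h | h)
        · exact Or.inl h.symm
        · right; rw [← h, hinv']
      · rintro (h | h)
        · exact Or.inl h.symm
        · right; rw [h, hinv]
    rw [this, Set.ncard_pair]
    intro h
    apply h2 v
    rw [h, hinv]
  · intro v
    have : {w | (sF s).Reachable v w}
        = (((Finset.range (k + 1)).image (fun i => s^[i] v) : Finset VV) : Set VV) := by
      ext w
      simp only [Set.mem_setOf_eq, Finset.coe_image, Set.mem_image, Finset.mem_coe,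
        Finset.mem_range]
      constructor
      · intro h
        rw [SimpleGraph.reachable_iff_reflTransGen] at h
        induction h with
        | refl => exact ⟨0, by omega, rfl⟩
        | tail _ hbc ih =>
          obtain ⟨i, hi, rfl⟩ := ih
          rw [hadj] at hbc
          rcases hbc with h | h
          · by_cases hk : i = k
            · subst hk
              exact ⟨0, by omega, by rw [← h, hinv]; rfl⟩
            · exact ⟨i + 1, by omega, by rw [← h, Function.iterate_succ_apply']⟩
          · rcases i with _ | i
            · refine ⟨k, by omega, ?_⟩
              have h' := congrArg (s^[k]) h
              rw [hinv'] at h'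
              exact h'.symm
            · refine ⟨i, by omega, ?_⟩
              rw [Function.iterate_succ_apply'] at h
              have h' := congrArg (s^[k]) h
              rw [hinv', hinv'] at h'
              exact h'.symm
      · rintro ⟨i, _, rfl⟩
        clear * - hadj
        induction i with
        | zero => exact SimpleGraph.Reachable.refl _
        | succ i ih =>
          refine ih.trans (SimpleGraph.Adj.reachable ?_)
          rw [hadj, Function.iterate_succ_apply']
          exact Or.inl rfl
    rw [this, Set.ncard_coe_finset, h3]

theorem stmt16 : HW (lexCycle 3 13) 3 13 8 5 := by
  have hT : ∀ i, IsCycleFactor (lexCycle 3 13) (sF (sT i)) 3 := by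
    intro i
    refine sF_factor _ 2 ?_ ?_ ?_ ?_ <;> revert i <;> decide +kernel
  have hC : ∀ i, IsCycleFactor (lexCycle 3 13) (sF (sC i)) 13 := by
    intro i
    refine sF_factor _ 12 ?_ ?_ ?_ ?_ <;> revert i <;> decide +kernel
  have hd : ∀ i j, i ≠ j → ∀ a, sA i a ≠ sA j a ∧ sA j (sA i a) ≠ a := by decide +kernel
  have hc : ∀ a b : VV, a.1 - b.1 = 1 → ∃ i, sA i a = b ∨ sA i b = a := by decide +kernel
  refine ⟨fun i => sF (sA i), hT, hC, ?_, ?_⟩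
  · intro i j hij
    rw [Set.disjoint_left]
    intro e
    induction e with | _ a b
    simp only [SimpleGraph.mem_edgeSet, sF, SimpleGraph.fromRel_adj]
    rintro ⟨_, h⟩ ⟨_, h'⟩
    rcases h with h | h <;> rcases h' with h' | h'
    · exact (hd i j hij a).1 (h.trans h'.symm)
    · exact (hd i j hij a).2 (by rw [h, h'])
    · exact (hd i j hij b).2 (by rw [h, h'])
    · exact (hd i j hij b).1 (h.trans h'.symm)
  · intro e
    induction e with | _ a b
    simp only [SimpleGraph.mem_edgeSet]
    constructor
    · intro h
      rw [lexCycle, SimpleGraph.fromRel_adj] at h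
      obtain ⟨hn, h | h⟩ := h
      · obtain ⟨i, hi⟩ := hc a b h
        exact ⟨i, by rw [sF, SimpleGraph.fromRel_adj]; exact ⟨hn, hi⟩⟩
      · obtain ⟨i, hi⟩ := hc b a h
        exact ⟨i, by rw [sF, SimpleGraph.fromRel_adj]; exact ⟨hn, hi.symm⟩⟩
    · rintro ⟨i | i, h⟩
      · exact (hT i).1 h
      · exact (hC i).1 h
end

section
/- (8, 7) ∈ HWP(C_3[15]; 3, 15); that is, the edge set of C_3[15] can be partitioned into 8 C_3-factors and 7 C_15-factors. -/
open SimpleGraph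

def dd17 : Fin 8 ⊕ Fin 7 → ZMod 3 → ZMod 15
  | Sum.inl i, p => (![![0, 1, 2, 3, 4, 5, 6, 7], ![6, 2, 14, 11, 4, 12, 9, 13], ![9, 12, 14, 1, 7, 13, 0, 10]] : Fin 3 → Fin 8 → ZMod 15) p i
  | Sum.inr i, p => (![![8, 9, 10, 11, 12, 13, 14], ![8, 5, 3, 1, 7, 0, 10], ![2, 4, 11, 6, 8, 5, 3]] : Fin 3 → Fin 7 → ZMod 15) p i

def ff17 (i : Fin 8 ⊕ Fin 7) (u : ZMod 3 × ZMod 15) : ZMod 3 × ZMod 15 :=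
  (u.1 + 1, u.2 + dd17 i u.1)

def gg17 (i : Fin 8 ⊕ Fin 7) (u : ZMod 3 × ZMod 15) : ZMod 3 × ZMod 15 :=
  (u.1 - 1, u.2 - dd17 i (u.1 - 1))

def GG17 (i : Fin 8 ⊕ Fin 7) : SimpleGraph (ZMod 3 × ZMod 15) :=
  SimpleGraph.fromRel (fun u v => ff17 i u = v)

lemma gf17 (i) (u) : gg17 i (ff17 i u) = u := by simp [gg17, ff17]
lemma fg17 (i) (u) : ff17 i (gg17 i u) = u := by simp [gg17, ff17]

lemma three17 : ∀ p : ZMod 3, p + 1 ≠ p ∧ p - 1 ≠ p ∧ p + 1 ≠ p - 1 ∧ p + 1 + 1 ≠ p := by decide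

lemma adj17 (i u v) : (GG17 i).Adj u v ↔ (ff17 i u = v ∨ ff17 i v = u) := by
  simp only [GG17, SimpleGraph.fromRel_adj, and_iff_right_iff_imp]
  rintro h rfl
  rw [or_self] at h
  exact (three17 u.1).1 (congrArg Prod.fst h)

lemma le17 (i) : GG17 i ≤ lexCycle 3 15 := by
  intro u v h
  refine ⟨h.ne, ?_⟩
  rw [adj17] at h
  rcases h with rfl | rfl
  · right; simp [ff17]
  · left; simp [ff17]

lemma deg17 (i u) : ((GG17 i).neighborSet u).ncard = 2 := by
  have : (GG17 i).neighborSet u = {ff17 i u, gg17 i u} := by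
    ext v
    simp only [SimpleGraph.mem_neighborSet, adj17, Set.mem_insert_iff, Set.mem_singleton_iff]
    constructor
    · rintro (rfl | rfl)
      · simp
      · simp [gf17]
    · rintro (rfl | rfl)
      · simp
      · simp [fg17]
  rw [this]
  exact Set.ncard_pair fun h => (three17 u.1).2.2.1 (congrArg Prod.fst h)

lemma comp17 (i n) (hn : 0 < n) (h1 : ∀ v, (ff17 i)^[n] v = v)
    (h2 : ∀ v, ((Finset.range n).image (fun k => (ff17 i)^[k] v)).card = n) (v) :
    {w | (GG17 i).Reachable v w}.ncard = n := by
  have : {w | (GG17 i).Reachable v w} =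
      (((Finset.range n).image (fun k => (ff17 i)^[k] v) : Finset _) : Set _) := by
    ext w
    simp only [Set.mem_setOf_eq, Finset.coe_image, Set.mem_image, Finset.coe_range, Set.mem_Iio]
    constructor
    · intro h
      have key : ∃ k, (ff17 i)^[k] v = w := by
        obtain ⟨p⟩ := h
        induction p with
        | nil => exact ⟨0, rfl⟩
        | @cons a b c hab p ih =>
          obtain ⟨k, rfl⟩ := ih
          rw [adj17] at hab
          rcases hab with rfl | rfl
          · exact ⟨k + 1, rfl⟩
          · refine ⟨k + (n - 1), ?_⟩
            rw [Function.iterate_add_apply, ← Function.iterate_succ_apply,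
              Nat.succ_eq_add_one, Nat.sub_add_cancel hn, h1]
      obtain ⟨k, rfl⟩ := key
      refine ⟨k % n, Nat.mod_lt _ hn, ?_⟩
      exact Function.IsPeriodicPt.iterate_mod_apply (h1 v) k
    · rintro ⟨k, -, rfl⟩
      clear h1 h2
      induction k with
      | zero => exact SimpleGraph.Reachable.refl _
      | succ k ih =>
        refine ih.trans (SimpleGraph.Adj.reachable ?_)
        rw [adj17, Function.iterate_succ_apply']
        exact Or.inl rfl
  rw [this, Set.ncard_coe_finset, h2]

lemma inj17 : ∀ p i j, dd17 i p = dd17 j p → i = j := by decide +kernel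
lemma surj17 : ∀ p z, ∃ i, dd17 i p = z := by decide +kernel

lemma ffinj17 {i j u} (h : ff17 i u = ff17 j u) : i = j := by
  apply inj17 u.1
  simpa [ff17] using h

lemma ffsurj17 {u v : ZMod 3 × ZMod 15} (h : v.1 - u.1 = 1) : ∃ i, ff17 i u = v := by
  obtain ⟨i, hi⟩ := surj17 u.1 (v.2 - u.2)
  refine ⟨i, Prod.ext ?_ ?_⟩
  · simp [ff17, ← h]
  · simp [ff17, hi]

lemma cross17 {i j u v} (h : ff17 i u = v) (h' : ff17 j v = u) : False := by
  subst h
  exact (three17 u.1).2.2.2 (congrArg Prod.fst h')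

theorem stmt17 : HW (lexCycle 3 15) 3 15 8 7 := by
  refine ⟨GG17, fun i => ⟨le17 _, deg17 _, ?_⟩, fun i => ⟨le17 _, deg17 _, ?_⟩, ?_, ?_⟩
  · exact comp17 _ 3 (by norm_num) (by revert i; decide +kernel) (by revert i; decide +kernel)
  · exact comp17 _ 15 (by norm_num) (by revert i; decide +kernel) (by revert i; decide +kernel)
  · intro i j hij
    rw [Set.disjoint_left]
    intro e
    induction e with
    | h u v =>
    simp only [SimpleGraph.mem_edgeSet, adj17]
    rintro (h | h) (h' | h')
    · exact hij (ffinj17 (h.trans h'.symm))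
    · exact cross17 h h'
    · exact cross17 h h'
    · exact hij (ffinj17 (h.trans h'.symm))
  · intro e
    induction e with
    | h u v =>
    simp only [SimpleGraph.mem_edgeSet]
    constructor
    · rintro ⟨-, h | h⟩
      · obtain ⟨i, hi⟩ := ffsurj17 h
        exact ⟨i, (adj17 _ _ _).2 (Or.inr hi)⟩
      · obtain ⟨i, hi⟩ := ffsurj17 h
        exact ⟨i, (adj17 _ _ _).2 (Or.inl hi)⟩
    · rintro ⟨i, h⟩
      exact le17 i h
end
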